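/- Let f : ℂ² → ℂ be the polynomial map f(x,y) = x³ + x² − y², whose set of atypical values is B_f = {4/27, 0}. Let B = {λ₁ = 4/27, λ₂ = 0, λ₃, …, λ_r} ⊂ ℂ be a finite set containing B_f (r ≥ 2). Then π₁(ℂ² ∖ f⁻¹(B)) admits the presentation ⟨ γ₁, …, γ_r, x₁, x₂ | γ₁⁻¹x₁γ₁ = x₁, γ₁⁻¹x₂γ₁ = x₁x₂, γ₂⁻¹x₁γ₂ = x₂x₁, γ₂⁻¹x₂γ₂ = x₂, and γ_k⁻¹x_iγ_k = x_i for 3 ≤ k ≤ r, i = 1,2 ⟩, where γ_k is a lift of a meridian around λ_k and x₁, x₂ generate the fundamental group of the generic fiber; moreover, ℂ² ∖ f⁻¹(B) is homotopy equivalent to the 2-dimensional CW complex associated to this presentation. -/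

import Mathlib

/-!
In the coordinates `w = 3x + 1`, `Y = √27 y`, `s = 27 t - 2` the pencil becomes
`Y² = w³ - 3w - s`: a family of double covers of the line branched at the three roots of a cubic,
with critical values `s = ±2`.

*Trivializations.*  Over the complement of the two real half-lines `|s| ≥ 2` the roots can be
ordered by their real parts, and over the complement of `[-2, 2]` and the imaginary axis by their
imaginary parts. A piecewise real-affine shear carries one ordered root triple to another, and square roots
of quotients of linear factors, which avoid the negative real axis, lift the shear to the double
covers. This trivializes the pencil over both regions (`chartΩ`, `chartV`). The model fibre
`Y² = w³ - w` contains two circles, lying over the two segments joining consecutive roots, as a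
deformation retract (`isHE_j₀`).

*The complement as a homotopy coequalizer.*  A small displacement of a regular
value, supported in a disc over which the pencil is trivial, lifts to a homeomorphism of `ℂ²`. Such
homeomorphisms move the regular values `λ_k`, `k ≥ 3`, to standard positions (`mv_of_disjoint`). Cutting along disjoint sectors issued from
all the values shows that the complement is the homotopy coequalizer `Qm r` of the two maps
`Fin r × Wd → Wd`, on a wedge `Wd` of two circles, given by the projection and by the monodromies
(`Cp_equiv_Qm`). Crossing the cut issued from `s = 2` changes the order of
the real parts of two roots; the monodromy is computed by comparing, sheet by sheet, the loops over
the sides of the triangle of branch points for the two orders. The one at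
`s = -2` follows by the symmetry `(w, Y) ↦ (-w, iY)`.

*The presentation complex.*  The cylinder over a circle of the wedge is a square with boundary
`γ_k⁻¹ x_i γ_k` times the inverse of the monodromy image of `x_i`. So `Qm r` is obtained from the
wedge of all generators by attaching 2-cells along loops homotopic to the relators, and cell
attachment depends only on the homotopy classes of the loops (`Qm_equiv_presentationComplex`).

*The fundamental group.*  The tautological homomorphism from the presented group `G` to the
fundamental group of `Qm r` is injective because the space of step functions with values in `G` is
a contractible space with a free `G`-action, and over its quotient `BG` the wedge of generators
extends to the 2-cells; the induced map to `G` is inverse on generators (`presHom_injective`). It is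
surjective by the van Kampen principle for homotopy coequalizers: cutting a path into pieces running
in `X` or in a cylinder shows that it is a product of loops in `X` and generators of cylinders
(`mem_of_generators`).
-/

/-!
Statement 10: For `f(x,y) = x³ + x² − y²` (whose set of atypical values is
`B_f = {4/27, 0}`) and a finite set `B = {4/27, 0, λ₃, …, λ_r} ⊇ B_f`, the fundamental group
of `ℂ² ∖ f⁻¹(B)` admits the presentation `⟨γ₁,…,γ_r,x₁,x₂ ∣ γ₁⁻¹x₁γ₁ = x₁,
γ₁⁻¹x₂γ₁ = x₁x₂, γ₂⁻¹x₁γ₂ = x₂x₁, γ₂⁻¹x₂γ₂ = x₂, γ_k⁻¹x_iγ_k = x_i (k ≥ 3)⟩`, and the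
complement is homotopy equivalent to the 2-dimensional CW complex of this presentation.
-/

open unitInterval

noncomputable section

/-- The relation generating the wedge of circles indexed by `α`, with an extra point serving
as the wedge point: both endpoints of each interval are glued to the wedge point. -/
inductive WedgeGraphRel (α : Type) : (Σ _ : α, I) ⊕ Unit → (Σ _ : α, I) ⊕ Unit → Prop
  | zero (a : α) : WedgeGraphRel α (Sum.inl ⟨a, 0⟩) (Sum.inr ())
  | one (a : α) : WedgeGraphRel α (Sum.inl ⟨a, 1⟩) (Sum.inr ())

/-- The wedge of circles indexed by `α` (a point if `α` is empty). -/
def WedgeGraph (α : Type) : Type := Quot (WedgeGraphRel α)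

instance (α : Type) : TopologicalSpace (WedgeGraph α) :=
  inferInstanceAs (TopologicalSpace (Quot _))

/-- The wedge point. -/
def WedgeGraph.pt (α : Type) : WedgeGraph α := Quot.mk _ (Sum.inr ())

/-- The loop traversing the circle indexed by `a`. -/
def WedgeGraph.loop {α : Type} (a : α) : Path (WedgeGraph.pt α) (WedgeGraph.pt α) where
  toFun t := Quot.mk _ (Sum.inl ⟨a, t⟩)
  continuous_toFun := continuous_quot_mk.comp (continuous_inl.comp continuous_sigmaMk)
  source' := Quot.sound (WedgeGraphRel.zero a)
  target' := Quot.sound (WedgeGraphRel.one a)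

/-- The loop in the wedge of circles spelling a word `u` of the free group on `α`:  the
concatenation of the letters of (the reduced word of) `u`, each letter being the loop of the
corresponding generator or its reverse. -/
def wordPath {α : Type} [DecidableEq α] (u : FreeGroup α) :
    Path (WedgeGraph.pt α) (WedgeGraph.pt α) :=
  (FreeGroup.toWord u).foldl
    (fun p x => p.trans (if x.2 then WedgeGraph.loop x.1 else (WedgeGraph.loop x.1).symm))
    (Path.refl (WedgeGraph.pt α))

/-- The normalized angle of a point of the unit circle in `ℂ`, as a point of `[0,1]`. -/
def discAngle (z : ℂ) : I :=
  ⟨Int.fract (Complex.arg z / (2 * Real.pi)), Int.fract_nonneg _, (Int.fract_lt_one _).le⟩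

/-- The relation generating the 2-dimensional CW complex of the presentation with
generators `α` and relators `rel j`, `j : ρ`: for each `j`, the boundary of the disk `D²_j`
is glued to the wedge of circles along the loop spelling the word `rel j`. -/
def PresentationRel {α ρ : Type} [DecidableEq α] (rel : ρ → FreeGroup α) :
    WedgeGraph α ⊕ ((Σ _ : ρ, Metric.closedBall (0 : ℂ) 1)) →
      WedgeGraph α ⊕ ((Σ _ : ρ, Metric.closedBall (0 : ℂ) 1)) → Prop := fun a b =>
  ∃ (j : ρ) (z : Metric.closedBall (0 : ℂ) 1), ‖(z : ℂ)‖ = 1 ∧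
    a = Sum.inr ⟨j, z⟩ ∧ b = Sum.inl (wordPath (rel j) (discAngle z))

/-- The 2-dimensional CW complex with one 0-cell associated to the presentation with
generators `α` and relators `rel j`, `j : ρ`: one 1-cell for each generator and one 2-cell
for each relator, attached along the loop spelling the relator. -/
def PresentationComplex {α ρ : Type} [DecidableEq α] (rel : ρ → FreeGroup α) : Type :=
  Quot (PresentationRel rel)

instance {α ρ : Type} [DecidableEq α] (rel : ρ → FreeGroup α) :
    TopologicalSpace (PresentationComplex rel) :=
  inferInstanceAs (TopologicalSpace (Quot _))


/-- The generator `γ_k` of the free group on `γ₁, …, γ_r, x₁, x₂`. -/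
def gammaGen (r : ℕ) (k : Fin r) : FreeGroup (Fin r ⊕ Fin 2) :=
  FreeGroup.of (Sum.inl k)

/-- The generator `x_i` of the free group on `γ₁, …, γ_r, x₁, x₂`. -/
def xGen (r : ℕ) (i : Fin 2) : FreeGroup (Fin r ⊕ Fin 2) :=
  FreeGroup.of (Sum.inr i)

/-- The relators `γ_k⁻¹ x_i γ_k ((g_k)_*(x_i))⁻¹` of the presentation: the monodromy acts by
`(g_1)_*(x_1) = x_1`, `(g_1)_*(x_2) = x_1x_2` (a Dehn twist along the first circle),
`(g_2)_*(x_1) = x_2x_1`, `(g_2)_*(x_2) = x_2` (a Dehn twist along the second circle), and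
`(g_k)_*(x_i) = x_i` for `k ≥ 3`. -/
def cubicRelator (r : ℕ) : Fin r × Fin 2 → FreeGroup (Fin r ⊕ Fin 2) := fun p =>
  (gammaGen r p.1)⁻¹ * xGen r p.2 * gammaGen r p.1 *
    (if (p.1 : ℕ) = 0 then (if (p.2 : ℕ) = 0 then xGen r 0 else xGen r 0 * xGen r 1)
     else if (p.1 : ℕ) = 1 then (if (p.2 : ℕ) = 0 then xGen r 1 * xGen r 0 else xGen r 1)
     else xGen r p.2)⁻¹

set_option linter.unusedSectionVars false

/-! ### Homotopy equivalences and homotopy coequalizers -/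

/-- A continuous map is a homotopy equivalence. -/
def IsHE {X Y : Type} [TopologicalSpace X] [TopologicalSpace Y] (m : C(X, Y)) : Prop :=
  ∃ n : C(Y, X), (m.comp n).Homotopic (ContinuousMap.id Y) ∧
    (n.comp m).Homotopic (ContinuousMap.id X)

section IsHE

variable {X Y Z : Type} [TopologicalSpace X] [TopologicalSpace Y] [TopologicalSpace Z]

/-- A homotopy may be given by a continuous family of paths. -/
lemma homotopic_of_family {m n : C(X, Y)} (H : X → C(I, Y)) (hH : Continuous H)
    (h0 : ∀ x, H x 0 = m x) (h1 : ∀ x, H x 1 = n x) : m.Homotopic n :=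
  ⟨{ toFun := fun p => H p.2 p.1
     continuous_toFun := by
       have := ContinuousMap.continuous_uncurry_of_continuous ⟨H, hH⟩
       exact this.comp continuous_swap
     map_zero_left := h0
     map_one_left := h1 }⟩

lemma homotopic_of_fun {m n : C(X, Y)} (H : I × X → Y) (hH : Continuous H)
    (h0 : ∀ x, H (0, x) = m x) (h1 : ∀ x, H (1, x) = n x) : m.Homotopic n :=
  ⟨{ toFun := H, continuous_toFun := hH, map_zero_left := h0, map_one_left := h1 }⟩

lemma Homotopic.exists_fun {m n : C(X, Y)} (h : m.Homotopic n) :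
    ∃ P : C(X × I, Y), (∀ x, P (x, 0) = m x) ∧ ∀ x, P (x, 1) = n x := by
  obtain ⟨F⟩ := h
  exact ⟨⟨fun p => F (p.2, p.1), by fun_prop⟩, fun x => by simp, fun x => by simp⟩

lemma Homotopic.comp_left {m n : C(X, Y)} (h : m.Homotopic n) (k : C(Y, Z)) :
    (k.comp m).Homotopic (k.comp n) := (ContinuousMap.Homotopic.refl k).comp h

lemma Homotopic.comp_right {m n : C(Y, Z)} (h : m.Homotopic n) (k : C(X, Y)) :
    (m.comp k).Homotopic (n.comp k) := h.comp (ContinuousMap.Homotopic.refl k)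

lemma IsHE.of_inverses {m : C(X, Y)} (l r : C(Y, X))
    (hl : (l.comp m).Homotopic (ContinuousMap.id X))
    (hr : (m.comp r).Homotopic (ContinuousMap.id Y)) : IsHE m := by
  refine ⟨r, hr, ?_⟩
  have h1 : l.Homotopic r := by
    have a := Homotopic.comp_left hr l
    have b := Homotopic.comp_right hl r
    rw [ContinuousMap.comp_id] at a
    rw [ContinuousMap.id_comp] at b
    exact (a.symm).trans b
  exact ((Homotopic.comp_right h1 m).symm).trans hl

lemma IsHE.of_homotopic {m n : C(X, Y)} (h : IsHE m) (hmn : m.Homotopic n) : IsHE n := by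
  obtain ⟨k, h1, h2⟩ := h
  exact ⟨k, (Homotopic.comp_right hmn.symm k).trans h1,
    (Homotopic.comp_left hmn.symm k).trans h2⟩

lemma IsHE.id : IsHE (ContinuousMap.id X) :=
  ⟨ContinuousMap.id X, ContinuousMap.Homotopic.refl _, ContinuousMap.Homotopic.refl _⟩

lemma IsHE.comp {n : C(Y, Z)} {m : C(X, Y)} (hn : IsHE n) (hm : IsHE m) : IsHE (n.comp m) := by
  obtain ⟨n', hn1, hn2⟩ := hn
  obtain ⟨m', hm1, hm2⟩ := hm
  refine ⟨m'.comp n', ?_, ?_⟩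
  · have := Homotopic.comp_left (Homotopic.comp_right hm1 n') n
    exact this.trans hn1
  · have := Homotopic.comp_left (Homotopic.comp_right hn2 m) m'
    exact this.trans hm2

lemma IsHE.of_homeo (e : X ≃ₜ Y) : IsHE (e : C(X, Y)) := by
  refine ⟨(e.symm : C(Y, X)), ?_, ?_⟩
  · have : (e : C(X, Y)).comp (e.symm : C(Y, X)) = ContinuousMap.id Y := by ext; simp
    rw [this]
  · have : (e.symm : C(Y, X)).comp (e : C(X, Y)) = ContinuousMap.id X := by ext; simp
    rw [this]

/-- If `n ∘ m` and `m` are homotopy equivalences, so is `n`. -/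
lemma IsHE.of_comp_right {n : C(Y, Z)} {m : C(X, Y)} (h : IsHE (n.comp m)) (hm : IsHE m) :
    IsHE n := by
  obtain ⟨m', hm1, hm2⟩ := hm
  have h1 : IsHE ((n.comp m).comp m') := h.comp ⟨m, hm2, hm1⟩
  exact h1.of_homotopic (Homotopic.comp_left hm1 n)

/-- If `n ∘ m` and `n` are homotopy equivalences, so is `m`. -/
lemma IsHE.of_comp_left {n : C(Y, Z)} {m : C(X, Y)} (h : IsHE (n.comp m)) (hn : IsHE n) :
    IsHE m := by
  obtain ⟨n', hn1, hn2⟩ := hn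
  have h1 : IsHE (n'.comp (n.comp m)) := IsHE.comp ⟨n, hn2, hn1⟩ h
  exact h1.of_homotopic (Homotopic.comp_right hn2 m)

lemma IsHE.nonempty_homotopyEquiv {m : C(X, Y)} (h : IsHE m) :
    Nonempty (ContinuousMap.HomotopyEquiv X Y) := by
  obtain ⟨n, h1, h2⟩ := h
  exact ⟨⟨m, n, h2, h1⟩⟩

lemma isHE_toFun (e : ContinuousMap.HomotopyEquiv X Y) : IsHE e.toFun :=
  ⟨e.invFun, e.right_inv, e.left_inv⟩

end IsHE

/-- The point of `[0,1]` nearest to a real number. -/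
def clampI (t : ℝ) : I := Set.projIcc 0 1 zero_le_one t

@[fun_prop]
lemma continuous_clampI : Continuous clampI :=
  continuous_projIcc (h := zero_le_one)

lemma clampI_coe (s : I) : clampI s = s := Set.projIcc_val _ s

lemma clampI_nonpos {t : ℝ} (h : t ≤ 0) : clampI t = 0 := Set.projIcc_of_le_left _ h

lemma clampI_one_le {t : ℝ} (h : 1 ≤ t) : clampI t = 1 := Set.projIcc_of_right_le _ h

lemma clampI_val {t : ℝ} (h0 : 0 ≤ t) (h1 : t ≤ 1) : (clampI t : ℝ) = t := by
  rw [clampI, Set.coe_projIcc]; simp [h0, h1]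

lemma clampI_val' (t : ℝ) : (clampI t : ℝ) = max 0 (min 1 t) := Set.coe_projIcc _ _ zero_le_one _

/-- The identifications defining the homotopy coequalizer. -/
inductive HocRel {A X : Type} (f g : A → X) : X ⊕ A × I → X ⊕ A × I → Prop
  | zero (a : A) : HocRel f g (Sum.inr (a, 0)) (Sum.inl (f a))
  | one (a : A) : HocRel f g (Sum.inr (a, 1)) (Sum.inl (g a))

/-- The homotopy coequalizer of `f, g : A → X`: a cylinder `A × [0,1]` glued to `X` along `f`
at one end and along `g` at the other end. -/
def Hoc {A X : Type} (f g : A → X) : Type := Quot (HocRel f g)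

instance {A X : Type} [TopologicalSpace A] [TopologicalSpace X] (f g : A → X) :
    TopologicalSpace (Hoc f g) := inferInstanceAs (TopologicalSpace (Quot _))

namespace Hoc

variable {A A' X X' Z : Type} [TopologicalSpace A] [TopologicalSpace A'] [TopologicalSpace X]
  [TopologicalSpace X'] [TopologicalSpace Z]

/-- The inclusion of `X`. -/
def inX (f g : A → X) (x : X) : Hoc f g := Quot.mk _ (Sum.inl x)

/-- The cylinder. -/
def cyl (f g : A → X) (p : A × I) : Hoc f g := Quot.mk _ (Sum.inr p)

@[fun_prop]
lemma continuous_inX (f g : A → X) : Continuous (inX f g) :=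
  continuous_quot_mk.comp continuous_inl

@[fun_prop]
lemma continuous_cyl (f g : A → X) : Continuous (cyl f g) :=
  continuous_quot_mk.comp continuous_inr

@[simp] lemma cyl_zero (f g : A → X) (a : A) : cyl f g (a, 0) = inX f g (f a) :=
  Quot.sound (HocRel.zero a)

@[simp] lemma cyl_one (f g : A → X) (a : A) : cyl f g (a, 1) = inX f g (g a) :=
  Quot.sound (HocRel.one a)

lemma ind {f g : A → X} {P : Hoc f g → Prop} (hX : ∀ x, P (inX f g x))
    (hA : ∀ a s, P (cyl f g (a, s))) (z : Hoc f g) : P z := by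
  induction z using Quot.ind with
  | mk z =>
    rcases z with x | ⟨a, s⟩
    · exact hX x
    · exact hA a s

/-- The universal property, for sets. -/
def descFun {f g : A → X} {Z : Type} (u : X → Z) (v : A × I → Z)
    (h0 : ∀ a, v (a, 0) = u (f a)) (h1 : ∀ a, v (a, 1) = u (g a)) : Hoc f g → Z :=
  Quot.lift (Sum.elim u v) (by
    rintro _ _ (a | a)
    · exact h0 a
    · exact h1 a)

lemma continuous_descFun {f g : A → X} {u : X → Z} {v : A × I → Z}
    (hu : Continuous u) (hv : Continuous v)
    (h0 : ∀ a, v (a, 0) = u (f a)) (h1 : ∀ a, v (a, 1) = u (g a)) :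
    Continuous (descFun u v h0 h1) :=
  continuous_quot_lift _ (hu.sumElim hv)

/-- The universal property. -/
def desc {f g : A → X} (u : X → Z) (v : A × I → Z) (hu : Continuous u) (hv : Continuous v)
    (h0 : ∀ a, v (a, 0) = u (f a)) (h1 : ∀ a, v (a, 1) = u (g a)) : C(Hoc f g, Z) :=
  ⟨descFun u v h0 h1, continuous_descFun hu hv h0 h1⟩

@[simp] lemma desc_inX {f g : A → X} (u : X → Z) (v : A × I → Z) (hu : Continuous u)
    (hv : Continuous v) (h0 : ∀ a, v (a, 0) = u (f a)) (h1 : ∀ a, v (a, 1) = u (g a)) (x : X) :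
    desc u v hu hv h0 h1 (inX f g x) = u x := rfl

@[simp] lemma desc_cyl {f g : A → X} (u : X → Z) (v : A × I → Z) (hu : Continuous u)
    (hv : Continuous v) (h0 : ∀ a, v (a, 0) = u (f a)) (h1 : ∀ a, v (a, 1) = u (g a))
    (p : A × I) : desc u v hu hv h0 h1 (cyl f g p) = v p := rfl

lemma continuous_of {f g : A → X} {m : Hoc f g → Z} (hX : Continuous fun x => m (inX f g x))
    (hA : Continuous fun p => m (cyl f g p)) : Continuous m := by
  refine continuous_quot_lift (f := fun z => m (Quot.mk _ z)) (fun a b h => ?_) ?_ |>.congr ?_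
  · exact congrArg m (Quot.sound h)
  · exact continuous_sum_dom.2 ⟨hX, hA⟩
  · intro z; induction z using Quot.ind; rfl

lemma homotopic_of {f g : A → X} {m n : C(Hoc f g, Z)} (u : X × I → Z) (v : (A × I) × I → Z)
    (hu : Continuous u) (hv : Continuous v)
    (h0 : ∀ a r, v ((a, 0), r) = u (f a, r)) (h1 : ∀ a r, v ((a, 1), r) = u (g a, r))
    (hmu : ∀ x, u (x, 0) = m (inX f g x)) (hnu : ∀ x, u (x, 1) = n (inX f g x))
    (hmv : ∀ p, v (p, 0) = m (cyl f g p)) (hnv : ∀ p, v (p, 1) = n (cyl f g p)) :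
    m.Homotopic n := by
  refine homotopic_of_family (descFun (f := f) (g := g) (fun x => (⟨fun r => u (x, r), by fun_prop⟩ : C(I, Z)))
    (fun p => ⟨fun r => v (p, r), by fun_prop⟩) (fun a => by ext r; exact h0 a r)
    (fun a => by ext r; exact h1 a r)) (continuous_descFun ?_ ?_ _ _) ?_ ?_
  · exact ContinuousMap.continuous_of_continuous_uncurry _ hu
  · exact ContinuousMap.continuous_of_continuous_uncurry _ hv
  · exact ind hmu (fun a s => hmv (a, s))
  · exact ind hnu (fun a s => hnv (a, s))

section ext

variable {f g f' g' : C(A, X)} (P Q : C(A × I, X))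

/-- The cylinder of the homotopy coequalizer of `f, g`, extended on both sides by
homotopies `P` starting at `f` and `Q` starting at `g`. -/
def ext (f g : C(A, X)) (P Q : C(A × I, X)) (p : A × ℝ) : Hoc f g :=
  if p.2 ≤ 0 then inX f g (P (p.1, clampI (-p.2)))
  else if p.2 ≤ 1 then cyl f g (p.1, clampI p.2) else inX f g (Q (p.1, clampI (p.2 - 1)))

lemma ext_nonpos {P Q : C(A × I, X)} (a : A) {t : ℝ} (h : t ≤ 0) :
    ext f g P Q (a, t) = inX f g (P (a, clampI (-t))) := by simp [ext, h]

lemma ext_mid {P Q : C(A × I, X)} (hP : ∀ a, P (a, 0) = f a) (a : A) {t : ℝ} (h : 0 ≤ t)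
    (h1 : t ≤ 1) : ext f g P Q (a, t) = cyl f g (a, clampI t) := by
  rcases h.eq_or_lt with rfl | h
  · simp [ext, clampI_nonpos le_rfl, hP]
  · simp [ext, h.not_ge, h1]

lemma ext_one_le {P Q : C(A × I, X)} (hQ : ∀ a, Q (a, 0) = g a) (a : A) {t : ℝ} (h : 1 ≤ t) :
    ext f g P Q (a, t) = inX f g (Q (a, clampI (t - 1))) := by
  rcases h.eq_or_lt with rfl | h
  · simp [ext, clampI_nonpos le_rfl, clampI_one_le le_rfl, hQ]
  · simp [ext, h.not_ge, (zero_lt_one.trans h).not_ge]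

lemma continuous_ext {P Q : C(A × I, X)} (hP : ∀ a, P (a, 0) = f a) (hQ : ∀ a, Q (a, 0) = g a) :
    Continuous (ext f g P Q) := by
  unfold ext
  refine Continuous.if_le (by fun_prop) (Continuous.if_le (by fun_prop) (by fun_prop)
    (by fun_prop) (by fun_prop) ?_) (by fun_prop) (by fun_prop) ?_
  · rintro ⟨a, t⟩ h
    simp only at h
    simp [h, clampI_nonpos le_rfl, clampI_one_le le_rfl, hQ]
  · rintro ⟨a, t⟩ h
    simp only at h
    simp [h, clampI_nonpos le_rfl, hP]

variable (hP : ∀ a, P (a, 0) = f a) (hP' : ∀ a, P (a, 1) = f' a) (hQ : ∀ a, Q (a, 0) = g a)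
  (hQ' : ∀ a, Q (a, 1) = g' a)

/-- The comparison map between homotopy coequalizers of homotopic pairs. -/
def shift : C(Hoc f' g', Hoc f g) :=
  desc (inX f g) (fun p => ext f g P Q (p.1, 3 * (p.2 : ℝ) - 1)) (by fun_prop)
    ((continuous_ext hP hQ).comp (by fun_prop))
    (fun a => by
      rw [ext_nonpos _ (by simp)]
      simp [clampI_one_le le_rfl, hP'])
    (fun a => by
      rw [ext_one_le hQ _ (by simp; norm_num)]
      rw [clampI_one_le (by simp; norm_num), hQ'])

lemma shift_inX (x : X) : shift P Q hP hP' hQ hQ' (inX f' g' x) = inX f g x := rfl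

lemma shift_cyl (a : A) (s : I) : shift P Q hP hP' hQ hQ' (cyl f' g' (a, s)) =
    ext f g P Q (a, 3 * (s : ℝ) - 1) := rfl

/-- The homotopy run backwards. -/
def rev (P : C(A × I, X)) : C(A × I, X) := ⟨fun p => P (p.1, σ p.2), by fun_prop⟩

lemma shift_ext (a : A) {t : ℝ} (h0 : -1 ≤ t) (h2 : t ≤ 2) :
    shift P Q hP hP' hQ hQ' (ext f' g' (rev P) (rev Q) (a, t)) =
      ext f g P Q (a, 3 * t - 1 - 4 * min t 0 - 4 * max (t - 1) 0) := by
  rcases le_total t 0 with h | h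
  · rw [ext_nonpos _ h, shift_inX, min_eq_left h, max_eq_right (by linarith),
      ext_nonpos _ (by linarith)]
    change inX f g (P (a, σ (clampI (-t)))) = _
    congr 3
    apply Subtype.ext
    rw [coe_symm_eq, clampI_val (by linarith) (by linarith), clampI_val (by linarith) (by linarith)]
    ring
  · rcases le_total t 1 with h1 | h1
    · rw [ext_mid (by simp [rev, hP']) _ h h1, shift_cyl, clampI_val h h1, min_eq_right h,
        max_eq_right (by linarith)]
      congr 2
      ring
    · rw [ext_one_le (by simp [rev, hQ']) _ h1, shift_inX, min_eq_right h,
        max_eq_left (by linarith), ext_one_le hQ _ (by linarith)]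
      change inX f g (Q (a, σ (clampI (t - 1)))) = _
      congr 3
      apply Subtype.ext
      rw [coe_symm_eq, clampI_val (by linarith) (by linarith),
        clampI_val (by linarith) (by linarith)]
      ring

lemma shift_shift : ((shift P Q hP hP' hQ hQ').comp
    (shift (f := f') (g := g') (f' := f) (g' := g) (rev P) (rev Q) (by simp [rev, hP'])
      (by simp [rev, hP]) (by simp [rev, hQ']) (by simp [rev, hQ]))).Homotopic
      (ContinuousMap.id _) := by
  refine homotopic_of (fun p => inX f g p.1)
    (fun p => ext f g P Q (p.1.1, (1 - (p.2 : ℝ)) * (3 * (3 * p.1.2 - 1) - 1 -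
      4 * min (3 * (p.1.2 : ℝ) - 1) 0 - 4 * max ((3 * (p.1.2 : ℝ) - 1) - 1) 0) + p.2 * p.1.2))
    (by fun_prop) ((continuous_ext hP hQ).comp (by fun_prop)) ?_ ?_ ?_ ?_ ?_ ?_
  · intro a r
    have e : (1 - (r : ℝ)) * (3 * (3 * ((0 : I) : ℝ) - 1) - 1 -
      4 * min (3 * ((0 : I) : ℝ) - 1) 0 - 4 * max ((3 * ((0 : I) : ℝ) - 1) - 1) 0) +
        r * ((0 : I) : ℝ) = 0 := by
      simp only [Set.Icc.coe_zero]
      rw [min_eq_left (by norm_num), max_eq_right (by norm_num)]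
      ring
    simp only [e]
    rw [ext_mid hP _ le_rfl zero_le_one, clampI_nonpos le_rfl, cyl_zero]
  · intro a r
    have e : (1 - (r : ℝ)) * (3 * (3 * ((1 : I) : ℝ) - 1) - 1 -
      4 * min (3 * ((1 : I) : ℝ) - 1) 0 - 4 * max ((3 * ((1 : I) : ℝ) - 1) - 1) 0) +
        r * ((1 : I) : ℝ) = 1 := by
      simp only [Set.Icc.coe_one]
      rw [min_eq_right (by norm_num), max_eq_left (by norm_num)]
      ring
    simp only [e]
    rw [ext_mid hP _ zero_le_one le_rfl, clampI_one_le le_rfl, cyl_one]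
  · intro x; rfl
  · intro x; rfl
  · rintro ⟨a, s⟩
    rw [ContinuousMap.comp_apply, shift_cyl, shift_ext _ _ _ _ _ _ _ (by linarith [s.2.1])
      (by linarith [s.2.2])]
    simp
  · rintro ⟨a, s⟩
    simp only [Set.Icc.coe_one, sub_self, zero_mul, one_mul, zero_add]
    rw [ext_mid hP _ s.2.1 s.2.2, clampI_coe]
    rfl

/-- Homotopic pairs have equivalent homotopy coequalizers. -/
lemma isHE_shift : IsHE (shift P Q hP hP' hQ hQ') := by
  refine ⟨_, shift_shift P Q hP hP' hQ hQ', ?_⟩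
  have := shift_shift (f := f') (g := g') (f' := f) (g' := g) (rev P) (rev Q)
    (by simp [rev, hP']) (by simp [rev, hP]) (by simp [rev, hQ']) (by simp [rev, hQ])
  have e : ∀ P : C(A × I, X), rev (rev P) = P := by
    intro P; ext ⟨a, t⟩; simp [rev]
  simpa only [e] using this

end ext

lemma exists_isHE_of_homotopic {f g f' g' : C(A, X)} (hf : f.Homotopic f')
    (hg : g.Homotopic g') : ∃ m : C(Hoc f' g', Hoc f g), IsHE m ∧
      ∀ x, m (inX f' g' x) = inX f g x := by
  obtain ⟨P, hP, hP'⟩ := Homotopic.exists_fun hf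
  obtain ⟨Q, hQ, hQ'⟩ := Homotopic.exists_fun hg
  exact ⟨_, isHE_shift P Q hP hP' hQ hQ', fun x => rfl⟩

/-- Functoriality in the domain of the cylinder. -/
def pre (f g : C(A, X)) (e : C(A', A)) : C(Hoc (f.comp e) (g.comp e), Hoc f g) :=
  desc (inX f g) (fun p => cyl f g (e p.1, p.2)) (by fun_prop) (by fun_prop)
    (fun a => by simp) (fun a => by simp)

/-- Functoriality in the target. -/
def post (f g : C(A, X)) (e : C(X, X')) : C(Hoc f g, Hoc (e.comp f) (e.comp g)) :=
  desc (fun x => inX _ _ (e x)) (fun p => cyl _ _ p) (by fun_prop) (by fun_prop)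
    (fun a => by simp) (fun a => by simp)

lemma pre_rightInverse (f g : C(A, X)) (e : C(A', A)) (e' : C(A, A'))
    (h : (e.comp e').Homotopic (ContinuousMap.id A)) :
    ∃ n : C(Hoc f g, Hoc ((f.comp e).comp e') ((g.comp e).comp e')), IsHE n ∧
      (((pre f g e).comp (pre (f.comp e) (g.comp e) e')).comp n).Homotopic
        (ContinuousMap.id _) := by
  obtain ⟨K, hK0, hK1⟩ := Homotopic.exists_fun h
  let P : C(A × I, X) := f.comp K
  let Q : C(A × I, X) := g.comp K
  have hP : ∀ a, P (a, 0) = ((f.comp e).comp e') a := fun a => by simp [P, hK0]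
  have hP' : ∀ a, P (a, 1) = f a := fun a => by simp [P, hK1]
  have hQ : ∀ a, Q (a, 0) = ((g.comp e).comp e') a := fun a => by simp [Q, hK0]
  have hQ' : ∀ a, Q (a, 1) = g a := fun a => by simp [Q, hK1]
  refine ⟨shift P Q hP hP' hQ hQ', isHE_shift P Q hP hP' hQ hQ', ?_⟩
  refine homotopic_of (fun p => inX f g p.1)
    (fun p => cyl f g (K (p.1.1, clampI ((1 - (p.2 : ℝ)) *
      (max (max (1 - 3 * (p.1.2 : ℝ)) 0) (3 * p.1.2 - 2)) + p.2)),
      clampI ((1 - (p.2 : ℝ)) * (clampI (3 * p.1.2 - 1)) + p.2 * p.1.2)))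
    (by fun_prop) (by fun_prop) ?_ ?_ ?_ ?_ ?_ ?_
  · intro a r
    dsimp only
    rw [clampI_one_le, hK1, clampI_nonpos]
    · simp
    · simp [clampI_nonpos]
    · simp only [Set.Icc.coe_zero]
      rw [max_eq_left (a := max _ _), max_eq_left (by norm_num)]
      · linarith
      · exact le_max_of_le_right (by norm_num)
  · intro a r
    dsimp only
    rw [clampI_one_le, hK1, clampI_one_le]
    · simp
    · rw [clampI_one_le (by simp; norm_num)]; simp
    · simp only [Set.Icc.coe_one]
      rw [max_eq_right (by norm_num)]
      linarith
  · intro x; rfl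
  · intro x; rfl
  · rintro ⟨a, s⟩
    rw [ContinuousMap.comp_apply, shift_cyl]
    simp only [Set.Icc.coe_zero, sub_zero, one_mul, zero_mul, add_zero]
    have hs0 := s.2.1
    have hs1 := s.2.2
    rw [clampI_coe]
    rcases le_total (3 * (s : ℝ) - 1) 0 with h | h
    · rw [ext_nonpos _ h, clampI_nonpos h, cyl_zero, max_eq_left (a := max _ _),
        max_eq_left (by linarith)]
      · change _ = inX f g (f _)
        simp
      · exact le_max_of_le_right (by linarith)
    · rcases le_total (3 * (s : ℝ) - 1) 1 with h1 | h1
      · rw [ext_mid hP _ h h1, max_eq_left (a := max _ _), max_eq_right (by linarith),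
          clampI_nonpos le_rfl, hK0]
        · rfl
        · exact le_max_of_le_right (by linarith)
      · rw [ext_one_le hQ _ h1, clampI_one_le h1, cyl_one, max_eq_right (b := 3 * (s : ℝ) - 2)]
        · rw [show 3 * (s : ℝ) - 1 - 1 = 3 * s - 2 by ring]
          rfl
        · exact max_le (by linarith) (by linarith)
  · rintro ⟨a, s⟩
    simp [clampI_one_le, hK1, clampI_coe]

/-- Precomposition with a homotopy equivalence. -/
lemma isHE_pre (f g : C(A, X)) (e : C(A', A)) (he : IsHE e) : IsHE (pre f g e) := by
  obtain ⟨e', h1, h2⟩ := he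
  obtain ⟨n, hn, hn'⟩ := pre_rightInverse f g e e' h1
  obtain ⟨m, hm, hm'⟩ := pre_rightInverse (f.comp e) (g.comp e) e' e h2
  have huv : IsHE ((pre f g e).comp (pre (f.comp e) (g.comp e) e')) :=
    IsHE.of_comp_right (IsHE.id.of_homotopic hn'.symm) hn
  obtain ⟨k, hk, hk'⟩ := huv
  have hv : IsHE (pre (f.comp e) (g.comp e) e') :=
    IsHE.of_inverses (k.comp (pre f g e)) ((pre _ _ e).comp m) hk' hm'
  exact IsHE.of_comp_right ⟨k, hk, hk'⟩ hv

lemma post_leftInverse (f g : C(A, X)) (e : C(X, X')) (e' : C(X', X))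
    (h : (e'.comp e).Homotopic (ContinuousMap.id X)) :
    ∃ n : C(Hoc (e'.comp (e.comp f)) (e'.comp (e.comp g)), Hoc f g), IsHE n ∧
      (n.comp ((post (e.comp f) (e.comp g) e').comp (post f g e))).Homotopic
        (ContinuousMap.id _) := by
  obtain ⟨K, hK1, hK0⟩ := Homotopic.exists_fun h
  let P : C(A × I, X) := ⟨fun p => K (f p.1, σ p.2), by fun_prop⟩
  let Q : C(A × I, X) := ⟨fun p => K (g p.1, σ p.2), by fun_prop⟩
  have hP' : ∀ a, P (a, 1) = (e'.comp (e.comp f)) a := fun a => by simp [P, hK1]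
  have hP : ∀ a, P (a, 0) = f a := fun a => by simp [P, hK0]
  have hQ' : ∀ a, Q (a, 1) = (e'.comp (e.comp g)) a := fun a => by simp [Q, hK1]
  have hQ : ∀ a, Q (a, 0) = g a := fun a => by simp [Q, hK0]
  refine ⟨shift P Q hP hP' hQ hQ', isHE_shift P Q hP hP' hQ hQ', ?_⟩
  refine homotopic_of (fun p => inX f g (K p))
    (fun p => ext f g P Q (p.1.1, p.1.2 + (1 - (p.2 : ℝ)) * (2 * p.1.2 - 1)))
    (by fun_prop) ((continuous_ext hP hQ).comp (by fun_prop)) ?_ ?_ ?_ ?_ ?_ ?_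
  · intro a r
    have h1 := r.2.2
    have h0 := r.2.1
    simp only [Set.Icc.coe_zero]
    rw [ext_nonpos _ (by linarith)]
    simp only [P, ContinuousMap.coe_mk]
    congr 3
    apply Subtype.ext
    rw [coe_symm_eq, clampI_val (by linarith) (by linarith)]
    ring
  · intro a r
    have h1 := r.2.2
    have h0 := r.2.1
    simp only [Set.Icc.coe_one]
    rw [ext_one_le hQ _ (by linarith)]
    simp only [Q, ContinuousMap.coe_mk]
    congr 3
    apply Subtype.ext
    rw [coe_symm_eq, clampI_val (by linarith) (by linarith)]
    ring
  · intro x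
    simp only [hK1]; rfl
  · intro x
    simp only [hK0]; rfl
  · rintro ⟨a, s⟩
    change _ = ext f g P Q (a, 3 * (s : ℝ) - 1)
    congr 2
    simp only [Set.Icc.coe_zero]
    ring
  · rintro ⟨a, s⟩
    simp only [Set.Icc.coe_one, sub_self, zero_mul, add_zero]
    rw [ext_mid hP _ s.2.1 s.2.2, clampI_coe]
    rfl

/-- Postcomposition with a homotopy equivalence. -/
lemma isHE_post (f g : C(A, X)) (e : C(X, X')) (he : IsHE e) : IsHE (post f g e) := by
  obtain ⟨e', h1, h2⟩ := he
  obtain ⟨n, hn, hn'⟩ := post_leftInverse f g e e' h2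
  obtain ⟨m, hm, hm'⟩ := post_leftInverse (e.comp f) (e.comp g) e' e h1
  have huv : IsHE ((post (e.comp f) (e.comp g) e').comp (post f g e)) :=
    IsHE.of_comp_left (IsHE.id.of_homotopic hn'.symm) hn
  obtain ⟨k, hk, hk'⟩ := huv
  have hv : IsHE (post (e.comp f) (e.comp g) e') :=
    IsHE.of_inverses (m.comp (post _ _ e)) ((post f g e).comp k) hm' hk
  exact IsHE.of_comp_left ⟨k, hk, hk'⟩ hv

end Hoc

/-! ### Cutting a space along a cylinder -/

/-- A space which is the union of a closed subspace `U` and of a closed cylinder meeting `U`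
exactly in its two ends is the homotopy coequalizer of the two end inclusions. -/
lemma isHE_of_cylinder {A X : Type} [TopologicalSpace A] [TopologicalSpace X] (U : Set X)
    (hU : IsClosed U) (e : A × I → X) (he : Topology.IsClosedEmbedding e)
    (hends : ∀ a s, e (a, s) ∈ U ↔ s = 0 ∨ s = 1)
    (hcover : ∀ x, x ∈ U ∨ x ∈ Set.range e) :
    ∃ m : C(Hoc (fun a => (⟨e (a, 0), (hends a 0).2 (Or.inl rfl)⟩ : U))
      (fun a => (⟨e (a, 1), (hends a 1).2 (Or.inr rfl)⟩ : U)), X), IsHE m := by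
  set f : A → U := fun a => ⟨e (a, 0), (hends a 0).2 (Or.inl rfl)⟩ with hf
  set g : A → U := fun a => ⟨e (a, 1), (hends a 1).2 (Or.inr rfl)⟩ with hg
  let m : C(Hoc f g, X) := Hoc.desc (fun x => (x : X)) e (by fun_prop) he.continuous
    (fun a => rfl) (fun a => rfl)
  have hinj : Function.Injective m := by
    have key : ∀ (x : U) (a : A) (s : I), (x : X) = e (a, s) →
        Hoc.inX f g x = Hoc.cyl f g (a, s) := by
      intro x a s h
      rcases (hends a s).1 (h ▸ x.2) with rfl | rfl
      · rw [Hoc.cyl_zero]; congr 1; exact Subtype.ext h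
      · rw [Hoc.cyl_one]; congr 1; exact Subtype.ext h
    intro z w
    induction z using Hoc.ind with
    | hX x =>
      induction w using Hoc.ind with
      | hX y => intro h; congr 1; exact Subtype.ext h
      | hA a s => exact key x a s
    | hA a s =>
      induction w using Hoc.ind with
      | hX y => intro h; exact (key y a s h.symm).symm
      | hA b t => intro h; congr 1; exact he.injective h
  have hsurj : Function.Surjective m := by
    intro x
    rcases hcover x with h | ⟨p, rfl⟩
    · exact ⟨Hoc.inX f g ⟨x, h⟩, rfl⟩
    · exact ⟨Hoc.cyl f g p, rfl⟩
  have hcl : IsClosedMap m := by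
    intro K hK
    have h1 : IsClosed ((fun x : U => (x : X)) '' (Hoc.inX f g ⁻¹' K)) :=
      hU.isClosedEmbedding_subtypeVal.isClosedMap _ (hK.preimage (by fun_prop))
    have h2 : IsClosed (e '' (Hoc.cyl f g ⁻¹' K)) :=
      he.isClosedMap _ (hK.preimage (by fun_prop))
    convert h1.union h2 using 1
    ext x
    constructor
    · rintro ⟨z, hz, rfl⟩
      induction z using Hoc.ind with
      | hX y => exact Or.inl ⟨y, hz, rfl⟩
      | hA a s => exact Or.inr ⟨(a, s), hz, rfl⟩
    · rintro (⟨y, hy, rfl⟩ | ⟨p, hp, rfl⟩)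
      · exact ⟨_, hy, rfl⟩
      · exact ⟨_, hp, rfl⟩
  exact ⟨_, IsHE.of_homeo
    ((Equiv.ofBijective m ⟨hinj, hsurj⟩).toHomeomorphOfContinuousClosed m.continuous hcl)⟩

/-! ### Square roots and shears carrying one root triple to another -/

/-- The principal square root. -/
def csqrt (z : ℂ) : ℂ := z ^ (2⁻¹ : ℂ)

lemma csqrt_sq (z : ℂ) : csqrt z ^ 2 = z := Complex.cpow_ofNat_inv_pow z 2

lemma csqrt_mul_self (z : ℂ) : csqrt z * csqrt z = z := by rw [← sq, csqrt_sq]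

lemma csqrt_ne_zero {z : ℂ} (h : z ≠ 0) : csqrt z ≠ 0 := fun h' => h (by
  rw [← csqrt_sq z, h']; simp)

lemma csqrt_of_sq {z w : ℂ} (h : w ^ 2 = z) (hw : 0 < w.re) : csqrt z = w := by
  rw [← h, csqrt]; exact Complex.sq_cpow_two_inv hw

lemma csqrt_one : csqrt 1 = 1 := csqrt_of_sq (by norm_num) (by norm_num)

lemma csqrt_zero : csqrt 0 = 0 := by
  have := csqrt_sq 0
  exact pow_eq_zero_iff (two_ne_zero) |>.1 this

lemma csqrt_re_pos {z : ℂ} (h : z ∈ Complex.slitPlane) : 0 < (csqrt z).re := by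
  have hz : z ≠ 0 := Complex.slitPlane_ne_zero h
  rw [csqrt, Complex.cpow_def_of_ne_zero hz, Complex.exp_re]
  refine mul_pos (Real.exp_pos _) (Real.cos_pos_of_mem_Ioo ?_)
  have h1 := Complex.neg_pi_lt_arg z
  have h2 := (Complex.arg_le_pi z).lt_of_ne (Complex.mem_slitPlane_iff_arg.1 h).1
  have : (Complex.log z * 2⁻¹).im = Complex.arg z / 2 := by
    simp [Complex.log_im]; ring
  rw [this]
  constructor <;> linarith

lemma csqrt_inv {z : ℂ} (h : z ∈ Complex.slitPlane) : csqrt z * csqrt z⁻¹ = 1 := by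
  have h1 : csqrt z⁻¹ = (csqrt z)⁻¹ := by
    refine csqrt_of_sq (by rw [inv_pow, csqrt_sq]) ?_
    rw [Complex.inv_re]
    have := csqrt_re_pos h
    have h0 : csqrt z ≠ 0 := fun h' => by simp [h'] at this
    exact div_pos this (Complex.normSq_pos.2 h0)
  rw [h1, mul_inv_cancel₀ (csqrt_ne_zero (Complex.slitPlane_ne_zero h))]

lemma continuousAt_csqrt {z : ℂ} (h : z ∈ Complex.slitPlane) : ContinuousAt csqrt z :=
  continuousAt_id.cpow continuousAt_const h

lemma norm_csqrt_sq (z : ℂ) : ‖csqrt z‖ ^ 2 = ‖z‖ := by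
  rw [← norm_pow, csqrt_sq]

/-- The principal square root is continuous along maps avoiding the open negative axis. -/
lemma continuous_csqrt_comp {Z : Type} [TopologicalSpace Z] {u : Z → ℂ} (hu : Continuous u)
    (h : ∀ z, u z = 0 ∨ u z ∈ Complex.slitPlane) : Continuous fun z => csqrt (u z) := by
  rw [continuous_iff_continuousAt]
  intro z
  rcases h z with h | h
  · have hz : csqrt (u z) = 0 := by rw [h, csqrt_zero]
    change Filter.Tendsto _ _ (nhds (csqrt (u z)))
    rw [hz, tendsto_zero_iff_norm_tendsto_zero]
    have : ∀ w, ‖csqrt (u w)‖ = Real.sqrt ‖u w‖ := fun w => by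
      rw [← norm_csqrt_sq (u w), Real.sqrt_sq (norm_nonneg _)]
    simp only [this]
    have hc : Continuous fun w => Real.sqrt ‖u w‖ := by fun_prop
    have := hc.tendsto z
    simpa [h] using this
  · exact (continuousAt_csqrt h).comp hu.continuousAt

/-- Triples of complex numbers with increasing real parts. -/
abbrev Srt : Type := {T : Fin 3 → ℂ // (T 0).re < (T 1).re ∧ (T 1).re < (T 2).re}

/-- The position of `x` between the vertical lines through `p` and `q`. -/
def pos (p q x : ℂ) : I := clampI ((x.re - p.re) / (q.re - p.re))

/-- The piecewise affine shear of the plane carrying the triple `T` to the triple `T'`. -/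
def shear (T T' : Fin 3 → ℂ) (x : ℂ) : ℂ :=
  x - T 0 - (T 1 - T 0) * (pos (T 0) (T 1) x : ℝ) - (T 2 - T 1) * (pos (T 1) (T 2) x : ℝ) +
    T' 0 + (T' 1 - T' 0) * (pos (T 0) (T 1) x : ℝ) + (T' 2 - T' 1) * (pos (T 1) (T 2) x : ℝ)

lemma pos_of_le {p q x : ℂ} (h : p.re < q.re) (hx : x.re ≤ p.re) : pos p q x = 0 :=
  clampI_nonpos (div_nonpos_of_nonpos_of_nonneg (by linarith) (by linarith))

lemma pos_of_ge {p q x : ℂ} (h : p.re < q.re) (hx : q.re ≤ x.re) : pos p q x = 1 :=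
  clampI_one_le (by rw [le_div_iff₀ (by linarith)]; linarith)

lemma pos_mid {p q x : ℂ} (h : p.re < q.re) (hx : p.re ≤ x.re) (hx' : x.re ≤ q.re) :
    (pos p q x : ℝ) = (x.re - p.re) / (q.re - p.re) :=
  clampI_val (div_nonneg (by linarith) (by linarith))
    (by rw [div_le_one (by linarith)]; linarith)

lemma pos_mid_mul {p q x : ℂ} (h : p.re < q.re) (hx : p.re ≤ x.re) (hx' : x.re ≤ q.re) :
    (q.re - p.re) * (pos p q x : ℝ) = x.re - p.re := by
  rw [pos_mid h hx hx']
  have : q.re - p.re ≠ 0 := by linarith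
  field_simp

lemma pos_mono {p q x w : ℂ} (h : p.re < q.re) (hx : x.re ≤ w.re) :
    (pos p q x : ℝ) ≤ pos p q w := by
  have : pos p q x ≤ pos p q w := Set.monotone_projIcc zero_le_one (by
    have : 0 ≤ q.re - p.re := by linarith
    gcongr)
  exact this

lemma pos_val_of_mul {p q x : ℂ} {t : ℝ} (h : p.re < q.re) (ht : 0 ≤ t) (ht' : t ≤ 1)
    (hx : x.re = p.re + (q.re - p.re) * t) : (pos p q x : ℝ) = t := by
  rw [pos_mid h (by nlinarith) (by nlinarith), hx]
  have : q.re - p.re ≠ 0 := by linarith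
  field_simp
  ring

lemma shear_re (T T' : Fin 3 → ℂ) (x : ℂ) : (shear T T' x).re =
  x.re - (T 0).re - ((T 1).re - (T 0).re) * (pos (T 0) (T 1) x : ℝ)
    - ((T 2).re - (T 1).re) * (pos (T 1) (T 2) x : ℝ) +
    (T' 0).re + ((T' 1).re - (T' 0).re) * (pos (T 0) (T 1) x : ℝ)
    + ((T' 2).re - (T' 1).re) * (pos (T 1) (T 2) x : ℝ) := by
  simp [shear]

lemma shear_root (T : Srt) (T' : Fin 3 → ℂ) (i : Fin 3) : shear T.1 T' (T.1 i) = T' i := by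
  obtain ⟨T, h0, h1⟩ := T
  fin_cases i
  · simp [shear, pos_of_le h0 le_rfl, pos_of_le h1 h0.le]
  · simp [shear, pos_of_ge h0 le_rfl, pos_of_le h1 le_rfl]
  · simp [shear, pos_of_ge h0 h1.le, pos_of_ge h1 le_rfl]

lemma pos_shear (T T' : Srt) (x : ℂ) :
    pos (T'.1 0) (T'.1 1) (shear T.1 T'.1 x) = pos (T.1 0) (T.1 1) x ∧
    pos (T'.1 1) (T'.1 2) (shear T.1 T'.1 x) = pos (T.1 1) (T.1 2) x := by
  obtain ⟨T, h0, h1⟩ := T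
  obtain ⟨T', h0', h1'⟩ := T'
  have hre := shear_re T T' x
  simp only
  rcases le_total x.re (T 0).re with h | h
  · rw [pos_of_le h0 h, pos_of_le h1 (h.trans h0.le)] at *
    simp at hre
    constructor <;> apply pos_of_le <;> linarith
  rcases le_total x.re (T 1).re with h' | h'
  · rw [pos_of_le h1 h'] at *
    have e := pos_mid_mul h0 h h'
    simp at hre
    have h3 := (pos (T 0) (T 1) x).2.1
    have h4 := (pos (T 0) (T 1) x).2.2
    constructor
    · apply Subtype.ext
      exact pos_val_of_mul h0' h3 h4 (by linarith)
    · apply pos_of_le h1'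
      nlinarith
  rcases le_total x.re (T 2).re with h'' | h''
  · rw [pos_of_ge h0 h'] at *
    have e := pos_mid_mul h1 h' h''
    simp at hre
    have h3 := (pos (T 1) (T 2) x).2.1
    have h4 := (pos (T 1) (T 2) x).2.2
    constructor
    · apply pos_of_ge h0'
      nlinarith
    · apply Subtype.ext
      exact pos_val_of_mul h1' h3 h4 (by linarith)
  · rw [pos_of_ge h0 h', pos_of_ge h1 h''] at *
    simp at hre
    constructor <;> apply pos_of_ge <;> linarith

lemma shear_shear (T T' : Srt) (x : ℂ) : shear T'.1 T.1 (shear T.1 T'.1 x) = x := by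
  conv_lhs => rw [shear]
  rw [(pos_shear T T' x).1, (pos_shear T T' x).2, shear]
  ring

lemma shear_re_lt (T T' : Srt) {x w : ℂ} (h : x.re < w.re) :
    (shear T.1 T'.1 x).re < (shear T.1 T'.1 w).re := by
  obtain ⟨⟨T, h0, h1⟩, hT⟩ : ∃ S : Srt, S = T := ⟨T, rfl⟩
  obtain ⟨⟨T', h0', h1'⟩, hT'⟩ : ∃ S : Srt, S = T' := ⟨T', rfl⟩
  subst hT hT'
  -- equal or reversed real parts would contradict monotonicity of the inverse shear
  have mono : ∀ (T T' : Srt) {x w : ℂ}, x.re ≤ w.re →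
      (shear T.1 T'.1 x).re ≤ (shear T.1 T'.1 w).re := by
    rintro ⟨T, h0, h1⟩ ⟨T', h0', h1'⟩ x w h
    rw [shear_re, shear_re]
    have m0 := pos_mono h0 h
    have m1 := pos_mono h1 h
    -- the residual displacement outside the outer two lines is monotone
    have key : x.re - (T 0).re - ((T 1).re - (T 0).re) * (pos (T 0) (T 1) x : ℝ)
        - ((T 2).re - (T 1).re) * (pos (T 1) (T 2) x : ℝ) ≤
        w.re - (T 0).re - ((T 1).re - (T 0).re) * (pos (T 0) (T 1) w : ℝ)
        - ((T 2).re - (T 1).re) * (pos (T 1) (T 2) w : ℝ) := by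
      have val : ∀ x : ℂ, x.re - (T 0).re - ((T 1).re - (T 0).re) * (pos (T 0) (T 1) x : ℝ)
        - ((T 2).re - (T 1).re) * (pos (T 1) (T 2) x : ℝ) =
          min (x.re - (T 0).re) 0 + max (x.re - (T 2).re) 0 := by
        intro x
        rcases le_total x.re (T 0).re with h | h
        · rw [pos_of_le h0 h, pos_of_le h1 (h.trans h0.le), min_eq_left (by linarith),
            max_eq_right (by linarith)]
          simp
        rcases le_total x.re (T 1).re with h' | h'
        · rw [pos_of_le h1 h', pos_mid_mul h0 h h', min_eq_right (by linarith),
            max_eq_right (by linarith)]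
          simp
        rcases le_total x.re (T 2).re with h'' | h''
        · rw [pos_of_ge h0 h', pos_mid_mul h1 h' h'', min_eq_right (by linarith),
            max_eq_right (by linarith)]
          simp
        · rw [pos_of_ge h0 h', pos_of_ge h1 h'', min_eq_right (by linarith),
            max_eq_left (by linarith)]
          simp
      rw [val, val]
      gcongr
    have e0 := mul_le_mul_of_nonneg_left m0 (sub_pos.2 h0').le
    have e1 := mul_le_mul_of_nonneg_left m1 (sub_pos.2 h1').le
    linarith
  by_contra! hc
  have := mono ⟨T', h0', h1'⟩ ⟨T, h0, h1⟩ hc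
  rw [shear_shear, shear_shear] at this
  linarith

lemma shear_sub_of_re_eq (T T' : Fin 3 → ℂ) {x w : ℂ} (h : x.re = w.re) :
    shear T T' x - shear T T' w = x - w := by
  simp only [shear, pos, h]; ring

/-- A quotient of two numbers with real parts of the same strict sign is not a nonpositive
real number. -/
lemma div_mem_slitPlane {z w : ℂ} (h : 0 < z.re * w.re) : z / w ∈ Complex.slitPlane := by
  have hw : w ≠ 0 := by rintro rfl; simp at h
  have hn : 0 < Complex.normSq w := Complex.normSq_pos.2 hw
  rw [Complex.mem_slitPlane_iff, Complex.div_re, Complex.div_im]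
  by_contra! hc
  obtain ⟨h1, h2⟩ := hc
  rw [← add_div, div_nonpos_iff] at h1
  have h1' : z.re * w.re + z.im * w.im ≤ 0 := by
    rcases h1 with h1 | h1
    · linarith [h1.2]
    · exact h1.1
  rw [← sub_div, div_eq_zero_iff] at h2
  have h2' : z.im * w.re - z.re * w.im = 0 := by
    rcases h2 with h2 | h2
    · exact h2
    · linarith
  have h3 : z.im * w.re = z.re * w.im := by linarith
  have h4 : (z.re * w.re) * (z.im * w.im) = (z.re * w.im) ^ 2 := by
    linear_combination (z.re * w.im) * h3
  nlinarith [mul_pos h h, sq_nonneg (z.re * w.im), mul_le_mul_of_nonneg_right h1' h.le]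

lemma shear_ratio (T T' : Srt) {x w : ℂ} (h : x ≠ w) :
    (shear T.1 T'.1 x - shear T.1 T'.1 w) / (x - w) ∈ Complex.slitPlane := by
  rcases lt_trichotomy x.re w.re with h' | h' | h'
  · apply div_mem_slitPlane
    have := shear_re_lt T T' h'
    simp only [Complex.sub_re]
    nlinarith
  · rw [shear_sub_of_re_eq _ _ h', div_self (sub_ne_zero.2 h)]
    exact Complex.one_mem_slitPlane
  · apply div_mem_slitPlane
    have := shear_re_lt T T' h'
    simp only [Complex.sub_re]
    nlinarith

/-- The lift of the shear to the double covers `y² = ∏ (x - T i)` of the plane. -/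
def shearY (T T' : Fin 3 → ℂ) (x y : ℂ) : ℂ :=
  y * ∏ i, csqrt ((shear T T' x - T' i) / (x - T i))

lemma root_of_y_eq_zero {T : Fin 3 → ℂ} {x y : ℂ} (h : y ^ 2 = ∏ i, (x - T i)) :
    y = 0 ↔ ∃ i, x = T i := by
  rw [← sq_eq_zero_iff, h, Finset.prod_eq_zero_iff]
  simp [sub_eq_zero]

lemma shearY_sq (T T' : Srt) {x y : ℂ} (h : y ^ 2 = ∏ i, (x - T.1 i)) :
    shearY T.1 T'.1 x y ^ 2 = ∏ i, (shear T.1 T'.1 x - T'.1 i) := by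
  rw [shearY, mul_pow, ← Finset.prod_pow]
  simp only [csqrt_sq]
  by_cases hx : ∃ i, x = T.1 i
  · obtain ⟨i, rfl⟩ := hx
    rw [(root_of_y_eq_zero h).2 ⟨i, rfl⟩, shear_root]
    rw [Finset.prod_eq_zero (f := fun j => T'.1 i - T'.1 j) (Finset.mem_univ i) (sub_self _)]
    simp
  · push Not at hx
    rw [h, ← Finset.prod_mul_distrib]
    refine Finset.prod_congr rfl fun i _ => ?_
    rw [mul_div_cancel₀]
    exact sub_ne_zero.2 (hx i)

lemma shearY_shearY (T T' : Srt) {x y : ℂ} (h : y ^ 2 = ∏ i, (x - T.1 i)) :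
    shearY T'.1 T.1 (shear T.1 T'.1 x) (shearY T.1 T'.1 x y) = y := by
  by_cases hx : ∃ i, x = T.1 i
  · simp [shearY, (root_of_y_eq_zero h).2 hx]
  · push Not at hx
    rw [shearY, shearY, shear_shear, mul_assoc, ← Finset.prod_mul_distrib]
    rw [Finset.prod_eq_one, mul_one]
    intro i _
    have := shear_ratio T T' (hx i)
    rw [shear_root] at this
    rw [← inv_div (shear T.1 T'.1 x - T'.1 i), mul_comm (csqrt _)]
    exact (mul_comm _ _).trans (csqrt_inv this)

section cont

variable {Z : Type} [TopologicalSpace Z]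

lemma continuous_shear {T T' : Z → Srt} {x : Z → ℂ} (hT : Continuous T) (hT' : Continuous T')
    (hx : Continuous x) : Continuous fun z => shear (T z).1 (T' z).1 (x z) := by
  have hTi : ∀ i, Continuous fun z => (T z).1 i := fun i =>
    (continuous_apply i).comp (continuous_subtype_val.comp hT)
  have hTi' : ∀ i, Continuous fun z => (T' z).1 i := fun i =>
    (continuous_apply i).comp (continuous_subtype_val.comp hT')
  have c0 : Continuous fun z => (pos ((T z).1 0) ((T z).1 1) (x z) : ℝ) := by
    unfold pos
    refine continuous_subtype_val.comp (continuous_clampI.comp (Continuous.div ?_ ?_ ?_))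
    · exact (Complex.continuous_re.comp hx).sub (Complex.continuous_re.comp (hTi 0))
    · exact (Complex.continuous_re.comp (hTi 1)).sub (Complex.continuous_re.comp (hTi 0))
    · intro z; linarith [(T z).2.1]
  have c1 : Continuous fun z => (pos ((T z).1 1) ((T z).1 2) (x z) : ℝ) := by
    unfold pos
    refine continuous_subtype_val.comp (continuous_clampI.comp (Continuous.div ?_ ?_ ?_))
    · exact (Complex.continuous_re.comp hx).sub (Complex.continuous_re.comp (hTi 1))
    · exact (Complex.continuous_re.comp (hTi 2)).sub (Complex.continuous_re.comp (hTi 1))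
    · intro z; linarith [(T z).2.2]
  unfold shear
  have := hTi 0; have := hTi 1; have := hTi 2
  have := hTi' 0; have := hTi' 1; have := hTi' 2
  fun_prop

lemma continuous_shearY {T T' : Z → Srt} {x y : Z → ℂ} (hT : Continuous T)
    (hT' : Continuous T') (hx : Continuous x) (hy : Continuous y)
    (h : ∀ z, y z ^ 2 = ∏ i, (x z - (T z).1 i)) :
    Continuous fun z => shearY (T z).1 (T' z).1 (x z) (y z) := by
  have hs := continuous_shear hT hT' hx
  have hTi : ∀ i, Continuous fun z => (T z).1 i := fun i =>
    (continuous_apply i).comp (continuous_subtype_val.comp hT)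
  have hTi' : ∀ i, Continuous fun z => (T' z).1 i := fun i =>
    (continuous_apply i).comp (continuous_subtype_val.comp hT')
  rw [continuous_iff_continuousAt]
  intro z
  by_cases hz : ∃ i, x z = (T z).1 i
  · have h0 : shearY (T z).1 (T' z).1 (x z) (y z) = 0 := by
      simp [shearY, (root_of_y_eq_zero (h z)).2 hz]
    change Filter.Tendsto _ _ (nhds (shearY (T z).1 (T' z).1 (x z) (y z)))
    rw [h0, tendsto_zero_iff_norm_tendsto_zero]
    have : ∀ w, ‖shearY (T w).1 (T' w).1 (x w) (y w)‖ =
        Real.sqrt ‖∏ i, (shear (T w).1 (T' w).1 (x w) - (T' w).1 i)‖ := fun w => by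
      rw [← shearY_sq _ _ (h w), norm_pow, Real.sqrt_sq (norm_nonneg _)]
    simp only [this]
    have hc : Continuous fun w =>
        Real.sqrt ‖∏ i, (shear (T w).1 (T' w).1 (x w) - (T' w).1 i)‖ := by
      refine Real.continuous_sqrt.comp (continuous_norm.comp ?_)
      exact continuous_finsetProd _ fun i _ => hs.sub (hTi' i)
    have hh := hc.tendsto z
    rw [← this z, h0, norm_zero] at hh
    exact hh
  · push Not at hz
    unfold shearY
    refine hy.continuousAt.mul (tendsto_finsetProd _ fun i _ => ?_)
    have hr := shear_ratio (T z) (T' z) (hz i)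
    rw [shear_root] at hr
    refine ContinuousAt.comp (g := csqrt) (f := fun w =>
      (shear (T w).1 (T' w).1 (x w) - (T' w).1 i) / (x w - (T w).1 i)) (continuousAt_csqrt hr) ?_
    exact (hs.sub (hTi' i)).continuousAt.div (hx.sub (hTi i)).continuousAt
      (sub_ne_zero.2 (hz i))

end cont

/-! ### Sorted roots of `x³ - 3x - s` -/

/-- The numbers `u * T i` are the roots of `x³ - 3x - s`.  The factor `u` is `1` or `I`, according
to whether roots are sorted by real or by imaginary parts. -/
def IsRoots (u s : ℂ) (T : Fin 3 → ℂ) : Prop := ∀ x, x ^ 3 - 3 * x - s = ∏ i, (x - u * T i)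

/-- Sorted triples stay sorted in the same way under small perturbation. -/
lemma Srt.close {T T' : Srt} {δ : ℝ} (h0 : (T.1 0).re + 2 * δ < (T.1 1).re)
    (h1 : (T.1 1).re + 2 * δ < (T.1 2).re) (h : ∀ i, ∃ j, ‖T.1 i - T'.1 j‖ ≤ δ) (i : Fin 3) :
    ‖T.1 i - T'.1 i‖ ≤ δ := by
  obtain ⟨T, hT⟩ := T
  obtain ⟨T', h0', h1'⟩ := T'
  choose j hj using h
  simp only at *
  have hre : ∀ i, |(T i).re - (T' (j i)).re| ≤ δ := fun i => by
    rw [← Complex.sub_re]; exact (Complex.abs_re_le_norm _).trans (hj i)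
  have a0 := abs_le.1 (hre 0)
  have a1 := abs_le.1 (hre 1)
  have a2 := abs_le.1 (hre 2)
  have h01 : (T' (j 0)).re < (T' (j 1)).re := by linarith
  have h12 : (T' (j 1)).re < (T' (j 2)).re := by linarith
  suffices j 0 = 0 ∧ j 1 = 1 ∧ j 2 = 2 by
    obtain ⟨e0, e1, e2⟩ := this
    fin_cases i
    · simpa [e0] using hj 0
    · simpa [e1] using hj 1
    · simpa [e2] using hj 2
  generalize j 0 = a at *
  generalize j 1 = b at *
  generalize j 2 = c at *
  clear hj hre a0 a1 a2
  fin_cases a <;> fin_cases b <;> fin_cases c <;> simp at * <;> linarith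

lemma IsRoots.exists_eq {u s : ℂ} {T : Fin 3 → ℂ} (hu : ‖u‖ = 1) (h : IsRoots u s T) (x : ℂ)
    {s' : ℂ} {δ : ℝ} (hδ : 0 ≤ δ) (hx : (u * x) ^ 3 - 3 * (u * x) - s' = 0)
    (hs : ‖s - s'‖ ≤ δ ^ 3) : ∃ j, ‖x - T j‖ ≤ δ := by
  by_contra! hc
  have h1 := h (u * x)
  have h2 : s' - s = ∏ i, (u * x - u * T i) := by
    rw [← h1]; linear_combination -hx
  have h3 : ‖s - s'‖ = ∏ i, ‖x - T i‖ := by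
    rw [norm_sub_rev, h2, norm_prod]
    refine Finset.prod_congr rfl fun i _ => ?_
    rw [← mul_sub, norm_mul, hu, one_mul]
  have h4 : δ ^ 3 < ∏ i, ‖x - T i‖ := by
    rw [Fin.prod_univ_three]
    have := hc 0
    have := hc 1
    have := hc 2
    rcases hδ.eq_or_lt with rfl | hδ
    · simp only [ne_eq, OfNat.ofNat_ne_zero, not_false_eq_true, zero_pow]; positivity
    · calc δ ^ 3 = δ * δ * δ := by ring
        _ < _ := by gcongr
  linarith

lemma IsRoots.root {u s : ℂ} {T : Fin 3 → ℂ} (h : IsRoots u s T) (i : Fin 3) :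
    (u * T i) ^ 3 - 3 * (u * T i) - s = 0 := by
  rw [h, Finset.prod_eq_zero (Finset.mem_univ i) (sub_self _)]

lemma IsRoots.unique {u s : ℂ} {T T' : Srt} (hu : ‖u‖ = 1) (h : IsRoots u s T.1)
    (h' : IsRoots u s T'.1) : T = T' := by
  have := Srt.close (T := T) (T' := T') (δ := 0) (by simpa using T.2.1) (by simpa using T.2.2)
    (fun i => h'.exists_eq hu (T.1 i) le_rfl (h.root i) (by simp))
  apply Subtype.ext
  funext i
  have := this i
  rw [norm_le_zero_iff, sub_eq_zero] at this
  exact this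

/-- Sorted root triples depend continuously on the parameter. -/
lemma continuous_roots {Z : Type} [TopologicalSpace Z] {u : ℂ} (hu : ‖u‖ = 1) {s : Z → ℂ}
    (hs : Continuous s) {T : Z → Srt} (h : ∀ z, IsRoots u (s z) (T z).1) : Continuous T := by
  rw [continuous_iff_continuousAt]
  intro z
  refine tendsto_subtype_rng.2 (tendsto_pi_nhds.2 fun i => ?_)
  rw [Metric.tendsto_nhds]
  intro ε hε
  obtain ⟨δ, hδ, hδε, hδ0, hδ1⟩ : ∃ δ : ℝ, 0 < δ ∧ δ < ε ∧
      ((T z).1 0).re + 2 * δ < ((T z).1 1).re ∧ ((T z).1 1).re + 2 * δ < ((T z).1 2).re := by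
    have g0 := (T z).2.1
    have g1 := (T z).2.2
    refine ⟨min (ε / 2) (min ((((T z).1 1).re - ((T z).1 0).re) / 3)
      ((((T z).1 2).re - ((T z).1 1).re) / 3)), by
        refine lt_min (by linarith) (lt_min ?_ ?_) <;> linarith, ?_, ?_, ?_⟩
    · exact (min_le_left _ _).trans_lt (by linarith)
    · have := (min_le_right (ε / 2) (min ((((T z).1 1).re - ((T z).1 0).re) / 3)
        ((((T z).1 2).re - ((T z).1 1).re) / 3))).trans (min_le_left _ _)
      linarith
    · have := (min_le_right (ε / 2) (min ((((T z).1 1).re - ((T z).1 0).re) / 3)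
        ((((T z).1 2).re - ((T z).1 1).re) / 3))).trans (min_le_right _ _)
      linarith
  have hev : ∀ᶠ w in nhds z, ‖s w - s z‖ < δ ^ 3 := by
    have := (Metric.tendsto_nhds.1 (hs.tendsto z)) (δ ^ 3) (by positivity)
    simpa [dist_eq_norm] using this
  filter_upwards [hev] with w hw
  have := Srt.close (T := T z) (T' := T w) hδ0 hδ1
    (fun i => (h w).exists_eq hu _ hδ.le ((h z).root i) hw.le) i
  rw [dist_eq_norm, norm_sub_rev]
  exact this.trans_lt hδε

/-- Three numbers with distinct real parts can be sorted. -/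
lemma exists_srt (u : ℂ) {p q r : ℂ} (hpq : p.re ≠ q.re) (hqr : q.re ≠ r.re) (hpr : p.re ≠ r.re) :
    ∃ T : Srt, ∀ x, (x - u * p) * (x - u * q) * (x - u * r) = ∏ i, (x - u * T.1 i) := by
  simp only [Fin.prod_univ_three]
  have mk : ∀ a b c : ℂ, a.re < b.re → b.re < c.re → ∃ T : Srt, T.1 0 = a ∧ T.1 1 = b ∧ T.1 2 = c :=
    fun a b c h1 h2 => ⟨⟨![a, b, c], by simpa using ⟨h1, h2⟩⟩, rfl, rfl, rfl⟩
  rcases lt_or_gt_of_ne hpq with h1 | h1 <;> rcases lt_or_gt_of_ne hqr with h2 | h2 <;>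
    rcases lt_or_gt_of_ne hpr with h3 | h3
  · obtain ⟨T, h0, h1, h2⟩ := mk p q r h1 h2; exact ⟨T, fun x => by rw [h0, h1, h2]⟩
  · linarith
  · obtain ⟨T, h0, h1, h2⟩ := mk p r q h3 h2; exact ⟨T, fun x => by rw [h0, h1, h2]; ring⟩
  · obtain ⟨T, h0, h1, h2⟩ := mk r p q h3 h1; exact ⟨T, fun x => by rw [h0, h1, h2]; ring⟩
  · obtain ⟨T, h0, h1, h2⟩ := mk q p r h1 h3; exact ⟨T, fun x => by rw [h0, h1, h2]; ring⟩
  · obtain ⟨T, h0, h1, h2⟩ := mk q r p h2 h3; exact ⟨T, fun x => by rw [h0, h1, h2]; ring⟩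
  · linarith
  · obtain ⟨T, h0, h1, h2⟩ := mk r q p h2 h1; exact ⟨T, fun x => by rw [h0, h1, h2]; ring⟩

lemma exists_three_roots (s : ℂ) : ∃ p q r : ℂ, p + q + r = 0 ∧ p * q + q * r + r * p = -3 ∧
    p * q * r = s := by
  obtain ⟨p, hp⟩ : ∃ p : ℂ, p ^ 3 - 3 * p - s = 0 := by
    have := IsAlgClosed.exists_root (Polynomial.X ^ 3 - 3 * Polynomial.X - Polynomial.C s : Polynomial ℂ)
      (by
        have : (Polynomial.X ^ 3 - 3 * Polynomial.X - Polynomial.C s : Polynomial ℂ).degree = 3 := by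
          have : (Polynomial.X ^ 3 - 3 * Polynomial.X - Polynomial.C s : Polynomial ℂ) =
            Polynomial.X ^ 3 - Polynomial.C 3 * Polynomial.X - Polynomial.C s := by
              rfl
          rw [this]
          compute_degree!
        rw [this]; norm_num)
    obtain ⟨p, hp⟩ := this
    refine ⟨p, ?_⟩
    simpa using hp
  have hd := csqrt_sq (12 - 3 * p ^ 2)
  set d := csqrt (12 - 3 * p ^ 2)
  refine ⟨p, (-p + d) / 2, (-p - d) / 2, by ring, ?_, ?_⟩
  · linear_combination (-1 / 4) * hd
  · linear_combination (-1 / 4 * p) * hd + hp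

/-- The parameters for which the roots have distinct real parts. -/
def Om : Set ℂ := {s | ¬ (s.im = 0 ∧ 2 ≤ |s.re|)}

/-- A set of parameters for which the roots have distinct imaginary parts. -/
def Vm : Set ℂ := {s | s.re ≠ 0 ∧ ¬ (s.im = 0 ∧ |s.re| ≤ 2)}

lemma roots_re_ne {s p q r : ℂ} (hs : s ∈ Om) (h1 : p + q + r = 0)
    (h2 : p * q + q * r + r * p = -3) (h3 : p * q * r = s) : p.re ≠ q.re := by
  intro hpq
  apply hs
  obtain rfl : r = -(p + q) := by linear_combination h1
  obtain ⟨a, b⟩ := p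
  obtain ⟨c, d⟩ := q
  simp only at hpq
  subst hpq
  have e1 := congrArg Complex.re h2
  have e2 := congrArg Complex.im h2
  have e3 := congrArg Complex.re h3
  have e4 := congrArg Complex.im h3
  simp [Complex.add_re, Complex.mul_re, Complex.mul_im] at e1 e2 e3 e4
  -- the half sum of the two imaginary parts vanishes
  have e5 : a * (b + d) = 0 := by linarith
  have e6 : b + d = 0 := by
    rcases mul_eq_zero.1 e5 with h | h
    · subst h
      nlinarith [sq_nonneg (b + d), sq_nonneg (b - d)]
    · exact h
  obtain rfl : d = -b := by linarith
  have e7 : b ^ 2 = 3 * a ^ 2 - 3 := by nlinarith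
  have e8 : s.re = -2 * a * (4 * a ^ 2 - 3) := by rw [← e3]; linear_combination (-2 * a) * e7
  refine ⟨by rw [← e4]; ring, ?_⟩
  have e9 : 1 ≤ a ^ 2 := by nlinarith [sq_nonneg b]
  rw [← abs_of_pos (zero_lt_two' ℝ), ← sq_le_sq, e8]
  have e10 : 1 ≤ (4 * a ^ 2 - 3) ^ 2 := by nlinarith
  nlinarith

lemma roots_im_ne {s p q r : ℂ} (hs : s ∈ Vm) (h1 : p + q + r = 0)
    (h2 : p * q + q * r + r * p = -3) (h3 : p * q * r = s) : p.im ≠ q.im := by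
  intro hpq
  obtain ⟨hs1, hs2⟩ := hs
  obtain rfl : r = -(p + q) := by linear_combination h1
  obtain ⟨a, b⟩ := p
  obtain ⟨c, d⟩ := q
  simp only at hpq
  subst hpq
  have e1 := congrArg Complex.re h2
  have e2 := congrArg Complex.im h2
  have e3 := congrArg Complex.re h3
  have e4 := congrArg Complex.im h3
  simp [Complex.add_re, Complex.mul_re, Complex.mul_im] at e1 e2 e3 e4
  have e5 : b * (a + c) = 0 := by linarith
  rcases mul_eq_zero.1 e5 with rfl | h
  · apply hs2
    refine ⟨by rw [← e4]; ring, ?_⟩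
    have e7 : ((a - c) / 2) ^ 2 = 3 - 3 * ((a + c) / 2) ^ 2 := by linarith
    have e8 : s.re = -2 * ((a + c) / 2) * (4 * ((a + c) / 2) ^ 2 - 3) := by
      rw [← e3]; linear_combination (2 * ((a + c) / 2)) * e7
    generalize (a + c) / 2 = m at *
    generalize (a - c) / 2 = n at *
    have e9 : m ^ 2 ≤ 1 := by nlinarith [sq_nonneg n]
    rw [← abs_of_pos (zero_lt_two' ℝ), ← sq_le_sq, e8]
    have : 4 - (-2 * m * (4 * m ^ 2 - 3)) ^ 2 = 4 * (1 - m ^ 2) * (4 * m ^ 2 - 1) ^ 2 := by ring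
    nlinarith [mul_nonneg (sub_nonneg.2 e9) (sq_nonneg (4 * m ^ 2 - 1))]
  · apply hs1
    obtain rfl : c = -a := by linarith
    rw [← e3]; ring

lemma exists_roots_Om {s : ℂ} (hs : s ∈ Om) : ∃ T : Srt, IsRoots 1 s T.1 := by
  obtain ⟨p, q, r, h1, h2, h3⟩ := exists_three_roots s
  obtain ⟨T, hT⟩ := exists_srt 1 (roots_re_ne hs h1 h2 h3)
    (roots_re_ne (p := q) (q := r) (r := p) hs (by linear_combination h1)
      (by linear_combination h2) (by linear_combination h3))
    (roots_re_ne (p := p) (q := r) (r := q) hs (by linear_combination h1)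
      (by linear_combination h2) (by linear_combination h3))
  refine ⟨T, fun x => ?_⟩
  rw [← hT]
  linear_combination (x ^ 2) * h1 - x * h2 + h3

lemma exists_roots_Vm {s : ℂ} (hs : s ∈ Vm) : ∃ T : Srt, IsRoots Complex.I s T.1 := by
  obtain ⟨p, q, r, h1, h2, h3⟩ := exists_three_roots s
  have n1 := roots_im_ne hs h1 h2 h3
  have n2 := roots_im_ne (p := q) (q := r) (r := p) hs (by linear_combination h1)
    (by linear_combination h2) (by linear_combination h3)
  have n3 := roots_im_ne (p := p) (q := r) (r := q) hs (by linear_combination h1)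
    (by linear_combination h2) (by linear_combination h3)
  obtain ⟨T, hT⟩ := exists_srt Complex.I (p := -Complex.I * p) (q := -Complex.I * q)
    (r := -Complex.I * r) (by simpa using n1) (by simpa using n2) (by simpa using n3)
  refine ⟨T, fun x => ?_⟩
  rw [← hT]
  have e : ∀ z, Complex.I * (-Complex.I * z) = z := fun z => by
    rw [← mul_assoc, mul_neg, Complex.I_mul_I]; simp
  rw [e, e, e]
  linear_combination (x ^ 2) * h1 - x * h2 + h3

/-! ### Trivializations of the pencil -/

/-- The normalized polynomial. -/
def Fp (v : ℂ × ℂ) : ℂ := v.1 ^ 3 - 3 * v.1 - v.2 ^ 2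

@[fun_prop]
lemma continuous_Fp : Continuous Fp := by unfold Fp; fun_prop

/-- The triple `(-1, 0, 1)`. -/
def T₀ : Srt := ⟨![-1, 0, 1], by simp⟩

/-- The model fibre `y² = (x + 1) x (x - 1)`. -/
abbrev F₀ : Type := {v : ℂ × ℂ // v.2 ^ 2 = ∏ i, (v.1 - T₀.1 i)}

section chart

variable (u κ : ℂ) (hu : ‖u‖ = 1) (hκ : κ ^ 2 = u ^ 3)

lemma isRoots_Fp {u κ : ℂ} (hκ : κ ^ 2 = u ^ 3) {s : ℂ} {T : Fin 3 → ℂ} (hR : IsRoots u s T)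
    {x y : ℂ} (h : y ^ 2 = ∏ i, (x - T i)) : Fp (u * x, κ * y) = s := by
  have := hR (u * x)
  have e : ∏ i, (u * x - u * T i) = u ^ 3 * ∏ i, (x - T i) := by
    simp only [← mul_sub, Finset.prod_mul_distrib]; simp
  rw [e, ← h] at this
  simp only [Fp]
  linear_combination this - y ^ 2 * hκ

lemma isRoots_of_Fp {u κ : ℂ} (hu : ‖u‖ = 1) (hκ : κ ^ 2 = u ^ 3) {T : Fin 3 → ℂ} {v : ℂ × ℂ}
    (hR : IsRoots u (Fp v) T) : (κ⁻¹ * v.2) ^ 2 = ∏ i, (u⁻¹ * v.1 - T i) := by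
  have hu0 : u ≠ 0 := by rintro rfl; simp at hu
  have hκ0 : κ ≠ 0 := by
    rintro rfl
    exact hu0 (by simpa using hκ.symm)
  have e : ∏ i, (v.1 - u * T i) = u ^ 3 * ∏ i, (u⁻¹ * v.1 - T i) := by
    have : ∀ i, v.1 - u * T i = u * (u⁻¹ * v.1 - T i) := fun i => by
      field_simp
    simp only [this, Finset.prod_mul_distrib]; simp
  have h := hR v.1
  rw [e, ← hκ] at h
  simp only [Fp] at h
  rw [mul_pow, inv_pow, inv_mul_eq_iff_eq_mul₀ (pow_ne_zero 2 hκ0)]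
  linear_combination h

/-- The trivialization of the pencil over a set of parameters with sorted roots. -/
def chart {U : Set ℂ} (T : U → Srt) (hT : Continuous T)
    (hR : ∀ s : U, IsRoots u s (T s).1) : U × F₀ ≃ₜ (Fp ⁻¹' U) where
  toFun p := ⟨(u * shear T₀.1 (T p.1).1 p.2.1.1, κ * shearY T₀.1 (T p.1).1 p.2.1.1 p.2.1.2), by
    rw [Set.mem_preimage, isRoots_Fp hκ (hR p.1) (shearY_sq T₀ (T p.1) p.2.2)]
    exact p.1.2⟩
  invFun v := (⟨Fp v.1, v.2⟩,
    ⟨(shear (T ⟨Fp v.1, v.2⟩).1 T₀.1 (u⁻¹ * v.1.1),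
      shearY (T ⟨Fp v.1, v.2⟩).1 T₀.1 (u⁻¹ * v.1.1) (κ⁻¹ * v.1.2)),
      shearY_sq _ T₀ (isRoots_of_Fp hu hκ (hR ⟨Fp v.1, v.2⟩))⟩)
  left_inv := by
    rintro ⟨s, v, hv⟩
    have hu0 : u ≠ 0 := by rintro rfl; simp at hu
    have hκ0 : κ ≠ 0 := by
      rintro rfl
      exact hu0 (by simpa using hκ.symm)
    have e := isRoots_Fp hκ (hR s) (shearY_sq T₀ (T s) hv)
    have e' : ∀ h, (⟨Fp (u * shear T₀.1 (T s).1 v.1, κ * shearY T₀.1 (T s).1 v.1 v.2), h⟩ : U)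
        = s := fun _ => Subtype.ext e
    refine Prod.ext (e' _) (Subtype.ext (Prod.ext ?_ ?_))
    · simp only [e', inv_mul_cancel_left₀ hu0]
      exact shear_shear _ _ _
    · simp only [e', inv_mul_cancel_left₀ hu0, inv_mul_cancel_left₀ hκ0]
      exact shearY_shearY _ _ hv
  right_inv := by
    rintro ⟨v, hv⟩
    have hu0 : u ≠ 0 := by rintro rfl; simp at hu
    have hκ0 : κ ≠ 0 := by
      rintro rfl
      exact hu0 (by simpa using hκ.symm)
    refine Subtype.ext (Prod.ext ?_ ?_)
    · simp only [shear_shear, mul_inv_cancel_left₀ hu0]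
    · change κ * _ = _
      dsimp only
      rw [shearY_shearY _ _ (isRoots_of_Fp hu hκ (hR ⟨Fp v, hv⟩)), mul_inv_cancel_left₀ hκ0]
  continuous_toFun := by
    refine Continuous.subtype_mk (Continuous.prodMk ?_ ?_) _
    · exact continuous_const.mul (continuous_shear continuous_const (hT.comp continuous_fst)
        (by fun_prop))
    · exact continuous_const.mul (continuous_shearY continuous_const (hT.comp continuous_fst)
        (by fun_prop) (by fun_prop) (fun p => p.2.2))
  continuous_invFun := by
    have c : Continuous fun v : (Fp ⁻¹' U) => (⟨Fp v.1, v.2⟩ : U) := by fun_prop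
    refine c.prodMk (Continuous.subtype_mk (Continuous.prodMk ?_ ?_) _)
    · exact continuous_shear (hT.comp c) continuous_const (by fun_prop)
    · exact continuous_shearY (hT.comp c) continuous_const (by fun_prop) (by fun_prop)
        (fun v => isRoots_of_Fp hu hκ (hR ⟨Fp v.1, v.2⟩))

lemma Fp_chart {U : Set ℂ} (T : U → Srt) (hT : Continuous T)
    (hR : ∀ s : U, IsRoots u s (T s).1) (p : U × F₀) :
    Fp (chart u κ hu hκ T hT hR p) = p.1 :=
  isRoots_Fp hκ (hR p.1) (shearY_sq T₀ (T p.1) p.2.2)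

lemma chart_symm_fst {U : Set ℂ} (T : U → Srt) (hT : Continuous T)
    (hR : ∀ s : U, IsRoots u s (T s).1) (v : Fp ⁻¹' U) :
    ((chart u κ hu hκ T hT hR).symm v).1 = ⟨Fp v, v.2⟩ := rfl

end chart

/-- The root triple sorted by real parts. -/
def TΩ (s : Om) : Srt := (exists_roots_Om s.2).choose

lemma isRoots_TΩ (s : Om) : IsRoots 1 s (TΩ s).1 := (exists_roots_Om s.2).choose_spec

lemma continuous_TΩ : Continuous TΩ :=
  continuous_roots (u := 1) (by simp) continuous_subtype_val isRoots_TΩ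

/-- The root triple sorted by imaginary parts, multiplied by `-I`. -/
def TV (s : Vm) : Srt := (exists_roots_Vm s.2).choose

lemma isRoots_TV (s : Vm) : IsRoots Complex.I s (TV s).1 := (exists_roots_Vm s.2).choose_spec

lemma continuous_TV : Continuous TV :=
  continuous_roots (u := Complex.I) (by simp) continuous_subtype_val isRoots_TV

/-- The trivialization over `Om`. -/
def chartΩ : Om × F₀ ≃ₜ (Fp ⁻¹' Om) :=
  chart 1 1 (by simp) (by simp) TΩ continuous_TΩ isRoots_TΩ

/-- The trivialization over `Vm`. -/
def chartV : Vm × F₀ ≃ₜ (Fp ⁻¹' Vm) :=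
  chart Complex.I (csqrt (Complex.I ^ 3)) (by simp) (csqrt_sq _) TV continuous_TV isRoots_TV

lemma Fp_chartΩ (p : Om × F₀) : Fp (chartΩ p) = p.1 := Fp_chart _ _ _ _ _ _ _ p

lemma Fp_chartV (p : Vm × F₀) : Fp (chartV p) = p.1 := Fp_chart _ _ _ _ _ _ _ p

lemma isOpen_Om : IsOpen Om := by
  have : Om = ({s : ℂ | s.im = 0} ∩ {s : ℂ | 2 ≤ |s.re|})ᶜ := rfl
  rw [this, isOpen_compl_iff]
  exact (isClosed_eq (by fun_prop) (by fun_prop)).inter (isClosed_le (by fun_prop) (by fun_prop))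

lemma isOpen_Vm : IsOpen Vm := by
  have : Vm = {s : ℂ | s.re = 0}ᶜ ∩ ({s : ℂ | s.im = 0} ∩ {s : ℂ | |s.re| ≤ 2})ᶜ := rfl
  rw [this]
  refine (isOpen_compl_iff.2 (isClosed_eq (by fun_prop) (by fun_prop))).inter
    (isOpen_compl_iff.2 ?_)
  exact (isClosed_eq (by fun_prop) (by fun_prop)).inter (isClosed_le (by fun_prop) (by fun_prop))

/-- Every noncritical parameter lies in one of the two trivialized regions. -/
lemma mem_Om_or_Vm {s : ℂ} (h : s ≠ 2) (h' : s ≠ -2) : s ∈ Om ∨ s ∈ Vm := by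
  by_contra! hc
  obtain ⟨h1, h2⟩ := hc
  replace h1 : ¬¬(s.im = 0 ∧ 2 ≤ |s.re|) := h1
  replace h2 : s.re = 0 ∨ (s.im = 0 ∧ |s.re| ≤ 2) := by
    by_contra hc
    push Not at hc
    exact h2 ⟨hc.1, fun h => absurd h.2 (not_le.2 (hc.2 h.1))⟩
  rw [not_not] at h1
  obtain ⟨h1, h3⟩ := h1
  rcases h2 with h2 | h2
  · rw [h2] at h3; simp at h3; linarith
  · have h4 : |s.re| = 2 := le_antisymm h2.2 h3
    rcases (abs_eq (by norm_num)).1 h4 with h5 | h5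
    · exact h (Complex.ext (by simpa using h5) (by simpa using h1))
    · exact h' (Complex.ext (by simpa using h5) (by simpa using h1))

/-! ### Moving the regular values -/

section lift

variable {U K : Set ℂ} (Φ : U × F₀ ≃ₜ (Fp ⁻¹' U))

open Classical in
/-- The lift to the total space of a self-map of the base preserving a trivialized region. -/
def liftFun (ψ : ℂ → ℂ) (hψ : ∀ z ∈ U, ψ z ∈ U) (v : ℂ × ℂ) : ℂ × ℂ :=
  if h : Fp v ∈ U then Φ (⟨ψ (Fp v), hψ _ h⟩, (Φ.symm ⟨v, h⟩).2) else v

variable {Φ}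

lemma symm_fst (hΦ : ∀ p, Fp (Φ p) = p.1) (v : Fp ⁻¹' U) : ((Φ.symm v).1 : ℂ) = Fp v := by
  rw [← hΦ, Homeomorph.apply_symm_apply]

lemma Fp_liftFun (hΦ : ∀ p, Fp (Φ p) = p.1) {ψ : ℂ → ℂ} (hψ : ∀ z ∈ U, ψ z ∈ U)
    (h' : ∀ z ∉ U, ψ z = z) (v : ℂ × ℂ) : Fp (liftFun Φ ψ hψ v) = ψ (Fp v) := by
  unfold liftFun
  split_ifs with h
  · rw [hΦ]
  · rw [h' _ h]

lemma continuous_liftFun (hΦ : ∀ p, Fp (Φ p) = p.1) (hU : IsOpen U) (hK : IsClosed K)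
    (hKU : K ⊆ U) {ψ : ℂ → ℂ} (hc : Continuous ψ) (hψ : ∀ z ∈ U, ψ z ∈ U)
    (h' : ∀ z ∉ K, ψ z = z) : Continuous (liftFun Φ ψ hψ) := by
  rw [continuous_iff_continuousAt]
  intro v
  by_cases h : Fp v ∈ U
  · have ho : IsOpen (Fp ⁻¹' U) := hU.preimage continuous_Fp
    refine ContinuousOn.continuousAt (s := Fp ⁻¹' U) ?_ (ho.mem_nhds h)
    rw [continuousOn_iff_continuous_domRestrict]
    have : (Fp ⁻¹' U).domRestrict (liftFun Φ ψ hψ) = fun w : (Fp ⁻¹' U) =>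
        ((Φ (⟨ψ (Fp w), hψ _ w.2⟩, (Φ.symm w).2) : Fp ⁻¹' U) : ℂ × ℂ) := by
      funext w
      have hw : Fp w.1 ∈ U := w.2
      simp only [Set.domRestrict_apply, liftFun, hw, dite_true]
    rw [this]
    fun_prop
  · have ho : IsOpen (Fp ⁻¹' Kᶜ) := hK.isOpen_compl.preimage continuous_Fp
    refine ContinuousAt.congr (f := id) continuousAt_id ?_
    filter_upwards [ho.mem_nhds (show v ∈ Fp ⁻¹' Kᶜ from fun hk => h (hKU hk))] with w hw
    unfold liftFun
    split_ifs with h2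
    · have e : (⟨ψ (Fp w), hψ _ h2⟩, (Φ.symm ⟨w, h2⟩).2) = Φ.symm ⟨w, h2⟩ := by
        refine Prod.ext (Subtype.ext ?_) rfl
        rw [symm_fst hΦ]
        exact h' _ hw
      rw [e, Homeomorph.apply_symm_apply]
      rfl
    · rfl

lemma liftFun_liftFun (hΦ : ∀ p, Fp (Φ p) = p.1) {ψ χ : ℂ → ℂ} (hψ : ∀ z ∈ U, ψ z ∈ U)
    (hχ : ∀ z ∈ U, χ z ∈ U) (h : ∀ z, χ (ψ z) = z) (v : ℂ × ℂ) :
    liftFun Φ χ hχ (liftFun Φ ψ hψ v) = v := by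
  by_cases hv : Fp v ∈ U
  · have e : liftFun Φ ψ hψ v = Φ (⟨ψ (Fp v), hψ _ hv⟩, (Φ.symm ⟨v, hv⟩).2) := by
      simp only [liftFun, hv, dite_true]
    have h2 : Fp (Φ (⟨ψ (Fp v), hψ _ hv⟩, (Φ.symm ⟨v, hv⟩).2) : Fp ⁻¹' U) = ψ (Fp v) := hΦ _
    rw [e]
    have h3 : Fp (Φ (⟨ψ (Fp v), hψ _ hv⟩, (Φ.symm ⟨v, hv⟩).2) : Fp ⁻¹' U) ∈ U := by
      rw [h2]; exact hψ _ hv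
    simp only [liftFun, h3, dite_true]
    have e2 : ((⟨χ (Fp (Φ (⟨ψ (Fp v), hψ _ hv⟩, (Φ.symm ⟨v, hv⟩).2) : Fp ⁻¹' U)), hχ _ h3⟩ : U),
        (Φ.symm (Φ (⟨ψ (Fp v), hψ _ hv⟩, (Φ.symm ⟨v, hv⟩).2))).2) = Φ.symm ⟨v, hv⟩ := by
      rw [Homeomorph.symm_apply_apply]
      refine Prod.ext (Subtype.ext ?_) rfl
      rw [symm_fst hΦ]
      change χ (Fp _) = _
      rw [h2, h]
    exact (congrArg (fun p => ((Φ p : Fp ⁻¹' U) : ℂ × ℂ)) e2).trans (by simp)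
  · have e : ∀ (χ : ℂ → ℂ) hχ, liftFun Φ χ hχ v = v := fun χ hχ => by
      simp only [liftFun, hv, dite_false]
    rw [e, e]

/-- A homeomorphism of the base supported in a trivialized region lifts. -/
lemma exists_lift (hΦ : ∀ p, Fp (Φ p) = p.1) (hU : IsOpen U) (hK : IsClosed K)
    (hKU : K ⊆ U) (ψ : ℂ ≃ₜ ℂ) (h' : ∀ z ∉ K, ψ z = z) :
    ∃ Ψ : ℂ × ℂ ≃ₜ ℂ × ℂ, ∀ v, Fp (Ψ v) = ψ (Fp v) := by
  have h'' : ∀ z ∉ K, ψ.symm z = z := fun z hz => by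
    rw [Homeomorph.symm_apply_eq, h' z hz]
  have hψ : ∀ z ∈ U, ψ z ∈ U := fun z hz => by
    by_contra hc
    have := h' _ (fun hk => hc (hKU hk))
    exact hc ((ψ.injective this).symm ▸ hz)
  have hψ' : ∀ z ∈ U, ψ.symm z ∈ U := fun z hz => by
    by_contra hc
    have := h'' _ (fun hk => hc (hKU hk))
    exact hc ((ψ.symm.injective this).symm ▸ hz)
  exact ⟨{  toFun := liftFun Φ ψ hψ
            invFun := liftFun Φ ψ.symm hψ'
            left_inv := liftFun_liftFun hΦ hψ hψ' (by simp)
            right_inv := liftFun_liftFun hΦ hψ' hψ (by simp)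
            continuous_toFun := continuous_liftFun hΦ hU hK hKU ψ.continuous hψ h'
            continuous_invFun := continuous_liftFun hΦ hU hK hKU ψ.symm.continuous hψ' h'' },
    Fp_liftFun hΦ hψ (fun z hz => h' z fun hk => hz (hKU hk))⟩

end lift

/-- A homeomorphism of the plane supported in a disc that moves the centre a little. -/
lemma exists_push {c d : ℂ} {R : ℝ} (hR : 0 < R) (hd : ‖d - c‖ ≤ R / 2) :
    ∃ ψ : ℂ ≃ₜ ℂ, ψ c = d ∧ ∀ z ∉ Metric.closedBall c R, ψ z = z := by
  let f : ℂ → ℂ := fun z => z + ((max 0 (1 - ‖z - c‖ / R) : ℝ) : ℂ) * (d - c)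
  have hf : ApproximatesLinearOn f
      ((ContinuousLinearEquiv.refl ℝ ℂ : ℂ ≃L[ℝ] ℂ) : ℂ →L[ℝ] ℂ) Set.univ (1 / 2) := by
    intro x _ y _
    have e : f x - f y - ((ContinuousLinearEquiv.refl ℝ ℂ : ℂ ≃L[ℝ] ℂ) : ℂ →L[ℝ] ℂ) (x - y)
        = ((max 0 (1 - ‖x - c‖ / R) - max 0 (1 - ‖y - c‖ / R) : ℝ) : ℂ) * (d - c) := by
      simp [f]; ring
    rw [e, norm_mul, Complex.norm_real, Real.norm_eq_abs]
    have h1 : |max 0 (1 - ‖x - c‖ / R) - max 0 (1 - ‖y - c‖ / R)| ≤ ‖x - y‖ / R := by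
      rw [max_comm, max_comm (0 : ℝ)]
      refine (abs_max_sub_max_le_abs (1 - ‖x - c‖ / R) (1 - ‖y - c‖ / R) 0).trans ?_
      · have : (1 - ‖x - c‖ / R) - (1 - ‖y - c‖ / R) = (‖y - c‖ - ‖x - c‖) / R := by ring
        rw [this, abs_div, abs_of_pos hR]
        gcongr
        refine (abs_norm_sub_norm_le _ _).trans ?_
        rw [norm_sub_rev x y]; simp
    calc _ ≤ ‖x - y‖ / R * (R / 2) := by gcongr
      _ = _ := by
        have : ((1 / 2 : NNReal) : ℝ) = 1 / 2 := by norm_num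
        rw [this]; field_simp
  have hN : Subsingleton ℂ ∨ (1 / 2 : NNReal) <
      ‖((ContinuousLinearEquiv.refl ℝ ℂ).symm : ℂ →L[ℝ] ℂ)‖₊⁻¹ := by
    right
    have : ‖((ContinuousLinearEquiv.refl ℝ ℂ).symm : ℂ →L[ℝ] ℂ)‖₊ = 1 := by
      refine NNReal.eq ?_
      exact ContinuousLinearMap.norm_id
    rw [this]
    refine NNReal.coe_lt_coe.1 ?_
    norm_num
  refine ⟨hf.toHomeomorph f hN, ?_, fun z hz => ?_⟩
  · change f c = d
    simp [f]
  · change f z = z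
    have : max 0 (1 - ‖z - c‖ / R) = 0 := by
      refine max_eq_left ?_
      rw [Metric.mem_closedBall, dist_eq_norm, not_le] at hz
      rw [sub_nonpos, one_le_div hR]; exact hz.le
    simp [f, this]

/-- Two configurations of values are related by a homeomorphism of the base covered by a
homeomorphism of the total space. -/
def Mv {ι : Type} (l l' : ι → ℂ) : Prop :=
  ∃ (Ψ : ℂ × ℂ ≃ₜ ℂ × ℂ) (ψ : ℂ ≃ₜ ℂ), (∀ v, Fp (Ψ v) = ψ (Fp v)) ∧ ∀ k, ψ (l k) = l' k

lemma Mv.refl {ι : Type} (l : ι → ℂ) : Mv l l :=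
  ⟨Homeomorph.refl _, Homeomorph.refl _, fun _ => rfl, fun _ => rfl⟩

lemma Mv.trans {ι : Type} {l l' l'' : ι → ℂ} : Mv l l' → Mv l' l'' → Mv l l'' := by
  rintro ⟨Ψ, ψ, h, h'⟩ ⟨Χ, χ, k, k'⟩
  exact ⟨Ψ.trans Χ, ψ.trans χ, fun v => by simp [h, k], fun i => by simp [h', k']⟩

lemma Mv.symm {ι : Type} {l l' : ι → ℂ} : Mv l l' → Mv l' l := by
  rintro ⟨Ψ, ψ, h, h'⟩
  refine ⟨Ψ.symm, ψ.symm, fun v => ?_, fun i => ?_⟩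
  · rw [Homeomorph.eq_symm_apply, ← h, Homeomorph.apply_symm_apply]
  · rw [Homeomorph.symm_apply_eq, h']

lemma mv_local {ι : Type} [Finite ι] [DecidableEq ι] (l : ι → ℂ) (n : ι) (h2 : ∃ k ≠ n, l k = 2)
    (h2' : ∃ k ≠ n, l k = -2) {c : ℂ} (hc : c ∈ (l '' {n}ᶜ)ᶜ) :
    ∃ R > 0, ∀ d, ‖d - c‖ ≤ R → Mv (Function.update l n c) (Function.update l n d) := by
  have hS : IsOpen (l '' {n}ᶜ)ᶜ := ((Set.toFinite _).image l).isClosed.isOpen_compl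
  have hcU : ∃ (U : Set ℂ) (Φ : U × F₀ ≃ₜ (Fp ⁻¹' U)), IsOpen U ∧ c ∈ U ∧
      ∀ p, Fp (Φ p) = p.1 := by
    obtain ⟨k, hk, e⟩ := h2
    obtain ⟨k', hk', e'⟩ := h2'
    rcases mem_Om_or_Vm (s := c) (fun h => hc ⟨k, hk, e.trans h.symm⟩)
      (fun h => hc ⟨k', hk', e'.trans h.symm⟩) with h | h
    · exact ⟨Om, chartΩ, isOpen_Om, h, Fp_chartΩ⟩
    · exact ⟨Vm, chartV, isOpen_Vm, h, Fp_chartV⟩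
  obtain ⟨U, Φ, hU, hcU, hΦ⟩ := hcU
  obtain ⟨R, hR, hball⟩ := Metric.nhds_basis_closedBall.mem_iff.1
    ((hS.inter hU).mem_nhds ⟨hc, hcU⟩)
  refine ⟨R / 2, by positivity, fun d hd => ?_⟩
  obtain ⟨ψ, hψ, hψ'⟩ := exists_push hR hd
  obtain ⟨Ψ, hΨ⟩ := exists_lift hΦ hU Metric.isClosed_closedBall
    (fun z hz => (hball hz).2) ψ hψ'
  refine ⟨Ψ, ψ, hΨ, fun k => ?_⟩
  by_cases hk : k = n
  · subst hk; simpa using hψ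
  · simp only [Function.update_of_ne hk]
    exact hψ' _ fun h => (hball h).1 ⟨k, hk, rfl⟩

lemma mv_update {ι : Type} [Finite ι] [DecidableEq ι] (l : ι → ℂ) (n : ι)
    (h2 : ∃ k ≠ n, l k = 2) (h2' : ∃ k ≠ n, l k = -2) {c d : ℂ}
    (hc : c ∈ (l '' {n}ᶜ)ᶜ) (hd : d ∈ (l '' {n}ᶜ)ᶜ) :
    Mv (Function.update l n c) (Function.update l n d) := by
  have hconn : IsPreconnected (l '' {n}ᶜ)ᶜ :=
    (Set.Countable.isConnected_compl_of_one_lt_rank (by simp)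
      ((Set.toFinite _).image l).countable).isPreconnected
  refine hconn.induction₂ (fun c d => Mv (Function.update l n c) (Function.update l n d))
    (fun x hx => ?_) (fun x y z _ _ _ h h' => h.trans h') (fun x y _ _ h => h.symm) hc hd
  obtain ⟨R, hR, h⟩ := mv_local l n h2 h2' hx
  filter_upwards [mem_nhdsWithin_of_mem_nhds (Metric.closedBall_mem_nhds x hR)] with y hy
  exact h y (by simpa [dist_eq_norm] using hy)

/-- Configurations of values with the same critical values, and with disjoint sets of regular
values, are related. -/
lemma mv_of_disjoint {r : ℕ} (l l' : Fin r → ℂ) (hl : l.Injective) (hl' : l'.Injective)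
    {a b : Fin r} (ha : l a = 2) (hb : l b = -2) (ha' : l' a = 2) (hb' : l' b = -2)
    (hd : ∀ j k, j ≠ a → j ≠ b → l j ≠ l' k) : Mv l l' := by
  have key : ∀ n : ℕ, Mv l (fun k => if (k : ℕ) < n then l' k else l k) := by
    intro n
    induction n with
    | zero => simpa using Mv.refl l
    | succ n ih =>
      refine ih.trans ?_
      by_cases hn : n < r
      swap
      · have : (fun k : Fin r => if (k : ℕ) < n + 1 then l' k else l k)
            = fun k : Fin r => if (k : ℕ) < n then l' k else l k := by
          funext k
          have := k.2
          simp [show (k : ℕ) < n by omega, show (k : ℕ) < n + 1 by omega]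
        rw [this]; exact Mv.refl _
      let m : Fin r := ⟨n, hn⟩
      by_cases hma : l m = l' m
      · have : (fun k : Fin r => if (k : ℕ) < n + 1 then l' k else l k)
            = fun k : Fin r => if (k : ℕ) < n then l' k else l k := by
          funext k
          by_cases hk : k = m
          · subst hk; simp [m, ← hma]
          · have : (k : ℕ) ≠ n := fun h => hk (Fin.ext h)
            simp [show (k : ℕ) < n + 1 ↔ (k : ℕ) < n by omega]
        rw [this]; exact Mv.refl _
      have hm1 : m ≠ a := by rintro h; rw [h, ha, ha'] at hma; exact hma rfl
      have hm2 : m ≠ b := by rintro h; rw [h, hb, hb'] at hma; exact hma rfl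
      let L : Fin r → ℂ := fun k : Fin r => if (k : ℕ) < n then l' k else l k
      have e1 : (fun k : Fin r => if (k : ℕ) < n then l' k else l k)
          = Function.update L m (l m) := by
        funext k
        by_cases hk : k = m
        · subst hk; simp [m]
        · simp [hk, L]
      have e2 : (fun k : Fin r => if (k : ℕ) < n + 1 then l' k else l k)
          = Function.update L m (l' m) := by
        funext k
        by_cases hk : k = m
        · subst hk; simp [m]
        · have : (k : ℕ) ≠ n := fun h => hk (Fin.ext h)
          simp [hk, L, show (k : ℕ) < n + 1 ↔ (k : ℕ) < n by omega]
      rw [e1, e2]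
      refine mv_update L m ⟨a, hm1.symm, by simp [L, ha, ha']⟩ ⟨b, hm2.symm, by simp [L, hb, hb']⟩
        ?_ ?_
      · rintro ⟨k, hk, e⟩
        simp only [L] at e
        split_ifs at e
        · exact hd m k hm1 hm2 e.symm
        · exact hk (hl e)
      · rintro ⟨k, hk, e⟩
        simp only [L] at e
        split_ifs at e
        · exact hk (hl' e)
        · by_cases ka : k = a
          · subst ka; rw [ha, ← ha'] at e; exact hk (hl' e)
          by_cases kb : k = b
          · subst kb; rw [hb, ← hb'] at e; exact hk (hl' e)
          exact hd k m ka kb e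
  have := key r
  simpa using this

/-- The complement of the fibres over a set of values. -/
abbrev Xc (S : Set ℂ) : Type := {v : ℂ × ℂ // Fp v ∉ S}

lemma Mv.homeo {ι : Type} {l l' : ι → ℂ} (h : Mv l l') :
    Nonempty (Xc (Set.range l) ≃ₜ Xc (Set.range l')) := by
  obtain ⟨Ψ, ψ, h, h'⟩ := h
  refine ⟨Ψ.subtype fun v => not_congr ?_⟩
  rw [h]
  constructor
  · rintro ⟨k, e⟩; exact ⟨k, by rw [← h', e]⟩
  · rintro ⟨k, e⟩; exact ⟨k, ψ.injective (by rw [h', e])⟩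

/-! ### Maps out of a wedge of two circles -/

/-- The wedge of two circles. -/
abbrev Wd : Type := Hoc (fun _ : Fin 2 => ()) (fun _ => ())

section wmap

variable {Z Z' : Type} [TopologicalSpace Z] [TopologicalSpace Z']

/-- The map out of the wedge of two circles given by a pair of loops. -/
def wmap {z : Z} (p : Fin 2 → Path z z) : C(Wd, Z) :=
  Hoc.desc (fun _ => z) (fun q => p q.1 q.2) continuous_const
    (continuous_prod_of_discrete_left.2 fun i => (p i).continuous) (by simp) (by simp)

@[simp] lemma wmap_inX {z : Z} (p : Fin 2 → Path z z) (x : Unit) :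
    wmap p (Hoc.inX _ _ x) = z := rfl

@[simp] lemma wmap_cyl {z : Z} (p : Fin 2 → Path z z) (i : Fin 2) (s : I) :
    wmap p (Hoc.cyl _ _ (i, s)) = p i s := rfl

lemma Wd.ext {m n : C(Wd, Z)} (h : ∀ i s, m (Hoc.cyl _ _ (i, s)) = n (Hoc.cyl _ _ (i, s))) :
    m = n := by
  ext z
  induction z using Hoc.ind with
  | hX x =>
    have := h 0 0
    simpa using this
  | hA a s => exact h a s

/-- The loops in the wedge of two circles. -/
def wl (i : Fin 2) : Path (Hoc.inX _ _ () : Wd) (Hoc.inX _ _ ()) where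
  toFun s := Hoc.cyl _ _ (i, s)
  continuous_toFun := by fun_prop
  source' := by simp
  target' := by simp

lemma wmap_wl : wmap wl = ContinuousMap.id Wd := Wd.ext fun _ _ => rfl

lemma comp_wmap {z : Z} (k : C(Z, Z')) (p : Fin 2 → Path z z) :
    k.comp (wmap p) = wmap (fun i => (p i).map k.continuous) := Wd.ext fun _ _ => rfl

lemma continuous_Wd_prod {Y Y' : Type} [TopologicalSpace Y] [TopologicalSpace Y'] {ι : Type}
    [TopologicalSpace ι] [DiscreteTopology ι] {f : (ι × Y) × Y' → Z}
    (h : ∀ i, Continuous fun x : Y × Y' => f ((i, x.1), x.2)) : Continuous f := by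
  have : Continuous fun x : ι × (Y × Y') => f ((x.1, x.2.1), x.2.2) :=
    continuous_prod_of_discrete_left.2 h
  exact this.comp (Homeomorph.prodAssoc _ _ _).continuous

lemma wmap_homotopic {z : Z} {p q : Fin 2 → Path z z} (h : ∀ i, (p i).Homotopic (q i)) :
    (wmap p).Homotopic (wmap q) := by
  have F : ∀ i, (p i).Homotopy (q i) := fun i => (h i).some
  refine Hoc.homotopic_of (fun _ => z) (fun x => F x.1.1 (x.2, x.1.2)) continuous_const ?_
    ?_ ?_ ?_ ?_ ?_ ?_
  · exact continuous_Wd_prod fun i => (F i).continuous.comp continuous_swap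
  all_goals simp

lemma conjTime_mem (t r : I) : (1 - (r : ℝ)) * t + r * ((1 + t) / 4) ∈ I := by
  have h1 := t.2.1; have h2 := t.2.2; have h3 := r.2.1; have h4 := r.2.2
  constructor
  · have : 0 ≤ 1 - (r : ℝ) := by linarith
    positivity
  · nlinarith

/-- The affine deformation of the time interval onto `[1/4, 1/2]`, the part of
`(α.trans p).trans α.symm` where `p` runs. -/
def conjTime (t r : I) : I := ⟨_, conjTime_mem t r⟩

lemma continuous_conjTime : Continuous fun x : I × I => conjTime x.1 x.2 := by
  unfold conjTime; fun_prop

lemma conjTime_coe (t r : I) : (conjTime t r : ℝ) = (1 - (r : ℝ)) * t + r * ((1 + t) / 4) := rfl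

lemma conj_left {z w : Z} (α : Path z w) (p : Path w w) {t r : I} (h : (t : ℝ) = r / 4) :
    ((α.trans p).trans α.symm) t = α r := by
  have h3 := r.2.1; have h4 := r.2.2
  simp only [Path.trans_apply]
  rw [dif_pos (by linarith), dif_pos (by simp; linarith)]
  refine congrArg α (Subtype.ext ?_)
  simp only [h]
  ring

lemma conj_right {z w : Z} (α : Path z w) (p : Path w w) {t r : I} (h : (t : ℝ) = 1 - r / 2) :
    ((α.trans p).trans α.symm) t = α r := by
  have h3 := r.2.1; have h4 := r.2.2
  by_cases hr : r = 1
  · subst hr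
    have : t = ⟨1 / 2, by norm_num, by norm_num⟩ := by ext; simp [h]; norm_num
    subst this
    simp [Path.trans_apply]
  have h5 : (r : ℝ) < 1 := lt_of_le_of_ne h4 fun h => hr (Subtype.ext h)
  rw [Path.trans_apply, dif_neg (by linarith), Path.symm_apply]
  refine congrArg α (Subtype.ext ?_)
  simp only [unitInterval.coe_symm_eq, h]
  ring

lemma conj_mid {z w : Z} (α : Path z w) (p : Path w w) {t u : I} (h : (t : ℝ) = (1 + u) / 4) :
    ((α.trans p).trans α.symm) t = p u := by
  have h1 := u.2.1; have h2 := u.2.2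
  by_cases hu : u = 0
  · subst hu
    rw [conj_left α p (r := 1) (by simp [h])]
    simp
  have h5 : (0 : ℝ) < u := lt_of_le_of_ne h1 fun h => hu (Subtype.ext h.symm)
  simp only [Path.trans_apply]
  rw [dif_pos (by linarith), dif_neg (by simp; linarith)]
  refine congrArg p (Subtype.ext ?_)
  simp only [h]
  ring

/-- Conjugating a pair of loops by a path does not change the free homotopy class. -/
lemma wmap_conj {z w : Z} (α : Path z w) (p : Fin 2 → Path w w) :
    (wmap fun i => (α.trans (p i)).trans α.symm).Homotopic (wmap p) := by
  refine Hoc.homotopic_of (fun x => α x.2)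
    (fun x => ((α.trans (p x.1.1)).trans α.symm) (conjTime x.1.2 x.2)) (by fun_prop) ?_
    (fun i r => ?_) (fun i r => ?_) (fun x => ?_) (fun x => ?_) ?_ ?_
  · exact continuous_Wd_prod fun i => by
      exact (Path.continuous ((α.trans (p i)).trans α.symm)).comp continuous_conjTime
  · exact conj_left _ _ (by simp [conjTime_coe]; ring)
  · exact conj_right _ _ (by simp [conjTime_coe]; ring)
  · simp
  · simp
  · rintro ⟨i, t⟩
    have : conjTime t 0 = t := by ext; simp [conjTime_coe]
    simp [this]
  · rintro ⟨i, t⟩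
    exact conj_mid _ _ (by simp [conjTime_coe])

/-- Pairs of loops that are simultaneously conjugate define homotopic maps. -/
lemma wmap_homotopic_of_conj {z w : Z} (α : Path z w) {p : Fin 2 → Path z z}
    {q : Fin 2 → Path w w} (h : ∀ i, ((α.trans (q i)).trans α.symm).Homotopic (p i)) :
    (wmap q).Homotopic (wmap p) :=
  (wmap_conj α q).symm.trans (wmap_homotopic h)

end wmap

/-! ### The loops generating the fundamental group of a fibre -/

/-- The first coordinate of the standard ellipse `κ (1 - κ) = η²`, starting from `(0, 0)`. -/
def kap (t : ℝ) : ℝ := (1 - Real.cos (2 * Real.pi * t)) / 2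

/-- The second coordinate of the standard ellipse `κ (1 - κ) = η²`. -/
def eta (t : ℝ) : ℝ := Real.sin (2 * Real.pi * t) / 2

@[fun_prop] lemma continuous_kap : Continuous kap := by unfold kap; fun_prop

@[fun_prop] lemma continuous_eta : Continuous eta := by unfold eta; fun_prop

lemma eta_sq (t : ℝ) : eta t ^ 2 = kap t * (1 - kap t) := by
  have := Real.sin_sq_add_cos_sq (2 * Real.pi * t)
  simp only [eta, kap]; linear_combination this / 4

lemma kap_mem (t : ℝ) : 0 ≤ kap t ∧ kap t ≤ 1 := by
  have h1 := Real.neg_one_le_cos (2 * Real.pi * t)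
  have h2 := Real.cos_le_one (2 * Real.pi * t)
  constructor <;> simp only [kap] <;> linarith

@[simp] lemma kap_zero : kap 0 = 0 := by simp [kap]
@[simp] lemma kap_one : kap 1 = 0 := by simp [kap]
@[simp] lemma eta_zero : eta 0 = 0 := by simp [eta]
@[simp] lemma eta_one : eta 1 = 0 := by simp [eta]

lemma kap_neg (t : ℝ) : kap (1 - t) = kap t := by
  have : 2 * Real.pi * (1 - t) = 2 * Real.pi - 2 * Real.pi * t := by ring
  simp only [kap, this, Real.cos_two_pi_sub]

lemma eta_neg (t : ℝ) : eta (1 - t) = - eta t := by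
  have : 2 * Real.pi * (1 - t) = 2 * Real.pi - 2 * Real.pi * t := by ring
  simp only [eta, this, Real.sin_two_pi_sub]; ring

/-- The lifts to `y² = (x - a) (x - b) (x - c)` of the segments joining `b` to `a` (for `i = 0`)
and `b` to `c` (for `i = 1`), traversed back and forth on the two sheets. -/
def jl (a b c : ℂ) (i : Fin 2) (t : ℝ) : ℂ × ℂ :=
  if i = 0 then (b + kap t * (a - b), (b - a) * eta t * csqrt (c - (b + kap t * (a - b))))
  else (b + kap t * (c - b), Complex.I * (c - b) * eta t * csqrt (b + kap t * (c - b) - a))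

lemma jl_zero (a b c : ℂ) (i : Fin 2) : jl a b c i 0 = (b, 0) := by
  unfold jl; split_ifs <;> simp

lemma jl_one (a b c : ℂ) (i : Fin 2) : jl a b c i 1 = (b, 0) := by
  unfold jl; split_ifs <;> simp

lemma jl_sq (a b c : ℂ) (i : Fin 2) (t : ℝ) : (jl a b c i t).2 ^ 2 =
    ((jl a b c i t).1 - a) * ((jl a b c i t).1 - b) * ((jl a b c i t).1 - c) := by
  have h : (eta t : ℂ) ^ 2 = kap t * (1 - kap t) := by exact_mod_cast eta_sq t
  unfold jl
  split_ifs
  · simp only [mul_pow, csqrt_sq, h]; ring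
  · simp only [mul_pow, csqrt_sq, h, Complex.I_sq]; ring

/-- The conditions under which the two loops are continuous. -/
def Adm (a b c : ℂ) : Prop :=
  (∀ κ : ℝ, 0 ≤ κ → κ ≤ 1 → c - (b + κ * (a - b)) ∈ Complex.slitPlane) ∧
    ∀ κ : ℝ, 0 ≤ κ → κ ≤ 1 → b + κ * (c - b) - a ∈ Complex.slitPlane

lemma continuous_jl {Z : Type} [TopologicalSpace Z] {a b c : Z → ℂ} {t : Z → ℝ}
    (ha : Continuous a) (hb : Continuous b) (hc : Continuous c) (ht : Continuous t)
    (h : ∀ z, Adm (a z) (b z) (c z)) (i : Fin 2) :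
    Continuous fun z => jl (a z) (b z) (c z) i (t z) := by
  unfold jl
  split_ifs
  · refine Continuous.prodMk (by fun_prop) (Continuous.mul (by fun_prop) ?_)
    exact continuous_csqrt_comp (by fun_prop) fun z =>
      Or.inr ((h z).1 _ (kap_mem _).1 (kap_mem _).2)
  · refine Continuous.prodMk (by fun_prop) (Continuous.mul (by fun_prop) ?_)
    exact continuous_csqrt_comp (by fun_prop) fun z =>
      Or.inr ((h z).2 _ (kap_mem _).1 (kap_mem _).2)

lemma adm_of_re {a b c : ℂ} (h : a.re < b.re) (h' : b.re < c.re) : Adm a b c := by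
  constructor
  · intro κ h0 h1
    left
    simp
    nlinarith
  · intro κ h0 h1
    left
    simp
    nlinarith

lemma Srt.adm (T : Srt) : Adm (T.1 0) (T.1 1) (T.1 2) := adm_of_re T.2.1 T.2.2

/-- The loop `jl a b c i` in a subspace of the plane. -/
def jp {P : ℂ × ℂ → Prop} {a b c : ℂ} (h : Adm a b c) (hP : ∀ i (t : ℝ), P (jl a b c i t))
    (i : Fin 2) : Path (⟨(b, 0), jl_zero a b c 0 ▸ hP 0 0⟩ : {v // P v}) ⟨(b, 0), jl_zero a b c 0 ▸ hP 0 0⟩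
    where
  toFun t := ⟨jl a b c i t, hP i t⟩
  continuous_toFun := Continuous.subtype_mk (continuous_jl continuous_const continuous_const
    continuous_const continuous_subtype_val (fun _ => h) i) _
  source' := Subtype.ext (by simp [jl_zero])
  target' := Subtype.ext (by simp [jl_one])

/-- The map from the wedge of two circles given by the loops `jl a b c`. -/
def jw {P : ℂ × ℂ → Prop} {a b c : ℂ} (h : Adm a b c) (hP : ∀ i (t : ℝ), P (jl a b c i t)) :
    C(Wd, {v // P v}) := wmap (jp h hP)

@[simp] lemma jw_cyl {P : ℂ × ℂ → Prop} {a b c : ℂ} (h : Adm a b c)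
    (hP : ∀ i (t : ℝ), P (jl a b c i t)) (i : Fin 2) (t : I) :
    (jw h hP (Hoc.cyl _ _ (i, t))).1 = jl a b c i t := rfl

lemma jl_mem (T : Srt) (i : Fin 2) (t : ℝ) :
    (jl (T.1 0) (T.1 1) (T.1 2) i t).2 ^ 2 =
      ∏ k, ((jl (T.1 0) (T.1 1) (T.1 2) i t).1 - T.1 k) := by
  rw [jl_sq, Fin.prod_univ_three]

/-- The wedge of two circles in the model fibre. -/
def j₀ : C(Wd, F₀) := jw T₀.adm (jl_mem T₀)

/-- The trivializations by shears match the standard loops. -/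
lemma shear_jl (T : Srt) (i : Fin 2) (t : ℝ) :
    (shear T₀.1 T.1 (jl (T₀.1 0) (T₀.1 1) (T₀.1 2) i t).1,
      shearY T₀.1 T.1 (jl (T₀.1 0) (T₀.1 1) (T₀.1 2) i t).1
        (jl (T₀.1 0) (T₀.1 1) (T₀.1 2) i t).2) = jl (T.1 0) (T.1 1) (T.1 2) i t := by
  have hk := kap_mem t
  have he := eta_sq t
  have h0 : T₀.1 0 = -1 := rfl
  have h1 : T₀.1 1 = 0 := rfl
  have h2 : T₀.1 2 = 1 := rfl
  have key : ∀ (x : ℂ) (s : ℝ), 0 < s → csqrt s * csqrt (x / s) = csqrt x := by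
    intro x s hs
    have e : csqrt s = (Real.sqrt s : ℂ) := csqrt_of_sq (by
      exact_mod_cast Real.sq_sqrt hs.le) (by simpa using Real.sqrt_pos.2 hs)
    by_cases hx : x = 0
    · subst hx; simp [csqrt_zero]
    have h1 := csqrt_sq (x / s)
    have h3 : 0 ≤ (csqrt (x / s)).re := by
      rw [csqrt, Complex.cpow_def_of_ne_zero (div_ne_zero hx (by exact_mod_cast hs.ne')),
        Complex.exp_re]
      refine mul_nonneg (Real.exp_pos _).le (Real.cos_nonneg_of_mem_Icc ?_)
      have h1 := Complex.neg_pi_lt_arg (x / s)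
      have h2 := Complex.arg_le_pi (x / s)
      simp [Complex.log_im]
      constructor <;> linarith
    rw [csqrt, csqrt, csqrt, Complex.cpow_def_of_ne_zero (by exact_mod_cast hs.ne'),
      Complex.cpow_def_of_ne_zero (div_ne_zero hx (by exact_mod_cast hs.ne')),
      Complex.cpow_def_of_ne_zero hx, ← Complex.exp_add]
    congr 1
    have : x / s = ((s⁻¹ : ℝ) : ℂ) * x := by push_cast; field_simp
    rw [this, Complex.log_ofReal_mul (by positivity) hx, ← Complex.ofReal_log hs.le, Real.log_inv]
    push_cast
    ring
  generalize hκ : kap t = κ at hk he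
  have hE : (eta t = 0) ∨ (0 < κ ∧ κ < 1) := by
    by_contra! hcon
    obtain ⟨h1, h2⟩ := hcon
    have : 0 < eta t ^ 2 := by positivity
    rcases hk.1.lt_or_eq with h3 | h3
    · have := h2 h3; nlinarith
    · rw [← h3] at he; simp [h1] at he
  by_cases hi : i = 0
  · simp only [jl, hi, if_true, h0, h1, h2, hκ]
    have p0 : (pos (T₀.1 0) (T₀.1 1) (0 + κ * (-1 - 0)) : ℝ) = 1 - κ :=
      pos_val_of_mul T₀.2.1 (by linarith) (by linarith) (by simp [h0, h1]; ring)
    have p1 : pos (T₀.1 1) (T₀.1 2) (0 + κ * (-1 - 0)) = 0 :=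
      pos_of_le T₀.2.2 (by simp [h1, hk.1])
    have hs : shear T₀.1 T.1 (0 + κ * (-1 - 0)) = T.1 1 + κ * (T.1 0 - T.1 1) := by
      rw [shear, p0, p1, h0, h1, h2]; push_cast; simp; ring
    rw [hs]
    refine Prod.ext rfl ?_
    rcases hE with hE | ⟨hp, hq⟩
    · simp [shearY, hE]
    have n0 : (1 - κ : ℂ) ≠ 0 := by
      have : (1 - κ : ℝ) ≠ 0 := by linarith
      exact_mod_cast this
    have n1 : (κ : ℂ) ≠ 0 := by exact_mod_cast hp.ne'
    have n2 : (1 + κ : ℂ) ≠ 0 := by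
      have : (1 + κ : ℝ) ≠ 0 := by linarith
      exact_mod_cast this
    have r0 : (T.1 1 + κ * (T.1 0 - T.1 1) - T.1 0) / (0 + κ * (-1 - 0) - -1) = T.1 1 - T.1 0 := by
      rw [div_eq_iff (by convert n0 using 1; ring)]; ring
    have r1 : (T.1 1 + κ * (T.1 0 - T.1 1) - T.1 1) / (0 + κ * (-1 - 0) - 0) = T.1 1 - T.1 0 := by
      rw [div_eq_iff (by convert neg_ne_zero.2 n1 using 1; ring)]; ring
    have r2 : (T.1 1 + κ * (T.1 0 - T.1 1) - T.1 2) / (0 + κ * (-1 - 0) - 1) =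
        (T.1 2 - (T.1 1 + κ * (T.1 0 - T.1 1))) / ((1 + κ : ℝ) : ℂ) := by
      push_cast
      rw [div_eq_div_iff (by convert neg_ne_zero.2 n2 using 1; ring) n2]; ring
    have k := key (T.1 2 - (T.1 1 + κ * (T.1 0 - T.1 1))) (1 + κ) (by linarith)
    simp only [shearY, hs, Fin.prod_univ_three, h0, h1, h2, r0, r1, r2]
    have e1 : (1 - (0 + (κ : ℂ) * (-1 - 0))) = ((1 + κ : ℝ) : ℂ) := by push_cast; ring
    rw [csqrt_mul_self, e1, ← k]
    ring
  · simp only [jl, hi, if_false, h0, h1, h2, hκ]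
    have p0 : pos (T₀.1 0) (T₀.1 1) (0 + κ * (1 - 0)) = 1 :=
      pos_of_ge T₀.2.1 (by simp [h1, hk.1])
    have p1 : (pos (T₀.1 1) (T₀.1 2) (0 + κ * (1 - 0)) : ℝ) = κ :=
      pos_val_of_mul T₀.2.2 (by linarith) (by linarith) (by simp [h2, h1])
    have hs : shear T₀.1 T.1 (0 + κ * (1 - 0)) = T.1 1 + κ * (T.1 2 - T.1 1) := by
      rw [shear, p0, p1, h0, h1, h2]; push_cast; simp; ring
    rw [hs]
    refine Prod.ext rfl ?_
    rcases hE with hE | ⟨hp, hq⟩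
    · simp [shearY, hE]
    have n0 : (1 - κ : ℂ) ≠ 0 := by
      have : (1 - κ : ℝ) ≠ 0 := by linarith
      exact_mod_cast this
    have n1 : (κ : ℂ) ≠ 0 := by exact_mod_cast hp.ne'
    have n2 : (1 + κ : ℂ) ≠ 0 := by
      have : (1 + κ : ℝ) ≠ 0 := by linarith
      exact_mod_cast this
    have r0 : (T.1 1 + κ * (T.1 2 - T.1 1) - T.1 0) / (0 + κ * (1 - 0) - -1) =
        (T.1 1 + κ * (T.1 2 - T.1 1) - T.1 0) / ((1 + κ : ℝ) : ℂ) := by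
      congr 1; push_cast; ring
    have r1 : (T.1 1 + κ * (T.1 2 - T.1 1) - T.1 1) / (0 + κ * (1 - 0) - 0) = T.1 2 - T.1 1 := by
      rw [div_eq_iff (by convert n1 using 1; ring)]; ring
    have r2 : (T.1 1 + κ * (T.1 2 - T.1 1) - T.1 2) / (0 + κ * (1 - 0) - 1) = T.1 2 - T.1 1 := by
      rw [div_eq_iff (by convert neg_ne_zero.2 n0 using 1; ring)]; ring
    have k := key (T.1 1 + κ * (T.1 2 - T.1 1) - T.1 0) (1 + κ) (by linarith)
    simp only [shearY, hs, Fin.prod_univ_three, h0, h1, h2, r0, r1, r2]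
    have e1 : (0 + (κ : ℂ) * (1 - 0) - -1) = ((1 + κ : ℝ) : ℂ) := by push_cast; ring
    have cs := csqrt_mul_self (T.1 2 - T.1 1)
    rw [e1, ← k]
    linear_combination (Complex.I * eta t * csqrt ((1 + κ : ℝ) : ℂ) *
      csqrt ((T.1 1 + κ * (T.1 2 - T.1 1) - T.1 0) / ((1 + κ : ℝ) : ℂ))) * cs

/-! ### The model fibre is a wedge of two circles -/

/-- The real part of `x` clamped to `[-1, 1]`. -/
def clampR (x : ℂ) : ℝ := max (-1) (min 1 x.re)

@[fun_prop] lemma continuous_clampR : Continuous clampR := by unfold clampR; fun_prop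

lemma clampR_mem (x : ℂ) : -1 ≤ clampR x ∧ clampR x ≤ 1 := by
  unfold clampR; constructor
  · exact le_max_left _ _
  · exact max_le (by norm_num) (min_le_left _ _)

/-- Linear interpolation between `x` and its clamped real part. -/
def flat (s : ℝ) (x : ℂ) : ℂ := (1 - s) * x + s * clampR x

lemma T₀_re (i : Fin 3) : (T₀.1 i).im = 0 ∧ -1 ≤ (T₀.1 i).re ∧ (T₀.1 i).re ≤ 1 := by
  fin_cases i <;> simp [T₀]

lemma flat_root (s : ℝ) (i : Fin 3) : flat s (T₀.1 i) = T₀.1 i := by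
  obtain ⟨h1, h2, h3⟩ := T₀_re i
  have : clampR (T₀.1 i) = (T₀.1 i).re := by
    unfold clampR; rw [min_eq_right h3, max_eq_right h2]
  rw [flat, this]
  apply Complex.ext <;> simp [h1]; ring

lemma flat_ratio {s : ℝ} (hs : 0 ≤ s) (hs' : s ≤ 1) {x : ℂ} {i : Fin 3}
    (hx : flat s x ≠ T₀.1 i) : (flat s x - T₀.1 i) / (x - T₀.1 i) ∈ Complex.slitPlane := by
  obtain ⟨h1, h2, h3⟩ := T₀_re i
  have hxi : x ≠ T₀.1 i := by rintro rfl; exact hx (flat_root _ _)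
  generalize T₀.1 i = w at *
  have hn : 0 < Complex.normSq (x - w) := Complex.normSq_pos.2 (sub_ne_zero.2 hxi)
  have hc : (x.re < w.re ∧ clampR x ≤ w.re) ∨ (x.re = w.re ∧ clampR x = w.re) ∨
      (w.re < x.re ∧ w.re ≤ clampR x) := by
    unfold clampR
    rcases lt_trichotomy x.re w.re with h | h | h
    · exact Or.inl ⟨h, max_le h2 ((min_le_right _ _).trans h.le)⟩
    · exact Or.inr (Or.inl ⟨h, by rw [h, min_eq_right h3, max_eq_right h2]⟩)
    · exact Or.inr (Or.inr ⟨h, le_max_of_le_right (le_min h3 h.le)⟩)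
  have hre : ((flat s x - w) / (x - w)).re =
      ((1 - s) * Complex.normSq (x - w) + s * ((clampR x - w.re) * (x.re - w.re))) /
        Complex.normSq (x - w) := by
    rw [Complex.div_re, ← add_div]
    congr 1
    simp [flat, Complex.normSq_apply, h1]; ring
  left
  rw [hre]
  refine div_pos ?_ hn
  have hp : 0 ≤ (clampR x - w.re) * (x.re - w.re) := by
    rcases hc with h | h | h
    · nlinarith
    · rw [h.1]; simp
    · nlinarith
  rcases hs'.lt_or_eq with h | h
  · have : 0 < (1 - s) * Complex.normSq (x - w) := mul_pos (by linarith) hn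
    have := mul_nonneg hs hp
    linarith
  subst h
  rcases hp.lt_or_eq with h | h
  · linarith
  · exfalso
    apply hx
    have hcw : clampR x = w.re := by
      rcases hc with h' | h' | h'
      · rcases mul_eq_zero.1 h.symm with h | h <;> linarith
      · exact h'.2
      · rcases mul_eq_zero.1 h.symm with h | h <;> linarith
    rw [flat, hcw]
    apply Complex.ext <;> simp [h1]

/-- The lift of `flat` to the fibre. -/
def flatY (s : ℝ) (x y : ℂ) : ℂ := y * ∏ i, csqrt ((flat s x - T₀.1 i) / (x - T₀.1 i))

lemma flatY_sq (s : ℝ) {x y : ℂ} (h : y ^ 2 = ∏ i, (x - T₀.1 i)) :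
    flatY s x y ^ 2 = ∏ i, (flat s x - T₀.1 i) := by
  rw [flatY, mul_pow, ← Finset.prod_pow, h, ← Finset.prod_mul_distrib]
  simp only [csqrt_sq]
  by_cases hx : ∃ i, x = T₀.1 i
  · obtain ⟨i, rfl⟩ := hx
    rw [Finset.prod_eq_zero (Finset.mem_univ i) (by simp),
      Finset.prod_eq_zero (Finset.mem_univ i) (by simp [flat_root])]
  · push Not at hx
    refine Finset.prod_congr rfl fun i _ => ?_
    have := sub_ne_zero.2 (hx i)
    field_simp

/-- The fibrewise straight-line retraction of `F₀` onto its part over `[-1, 1]`. -/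
def flatF (s : I) (v : F₀) : F₀ := ⟨(flat s v.1.1, flatY s v.1.1 v.1.2), flatY_sq _ v.2⟩

lemma continuous_flatF : Continuous fun p : I × F₀ => flatF p.1 p.2 := by
  have hs : Continuous fun p : I × F₀ => flat p.1 p.2.1.1 := by unfold flat; fun_prop
  refine Continuous.subtype_mk (hs.prodMk ?_) _
  rw [continuous_iff_continuousAt]
  intro z
  by_cases hz : ∃ i, flat z.1 z.2.1.1 = T₀.1 i
  · have h0 : flatY z.1 z.2.1.1 z.2.1.2 = 0 := by
      have := flatY_sq (z.1 : ℝ) z.2.2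
      exact (root_of_y_eq_zero this).2 hz
    change Filter.Tendsto _ _ (nhds (flatY z.1 z.2.1.1 z.2.1.2))
    rw [h0, tendsto_zero_iff_norm_tendsto_zero]
    have : ∀ w : I × F₀, ‖flatY w.1 w.2.1.1 w.2.1.2‖ =
        Real.sqrt ‖∏ i, (flat w.1 w.2.1.1 - T₀.1 i)‖ := fun w => by
      rw [← flatY_sq _ w.2.2, norm_pow, Real.sqrt_sq (norm_nonneg _)]
    simp only [this]
    have hc : Continuous fun w : I × F₀ => Real.sqrt ‖∏ i, (flat w.1 w.2.1.1 - T₀.1 i)‖ := by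
      refine Real.continuous_sqrt.comp (continuous_norm.comp ?_)
      exact continuous_finsetProd _ fun i _ => hs.sub continuous_const
    have hh := hc.tendsto z
    rw [← this z, h0, norm_zero] at hh
    exact hh
  · push Not at hz
    unfold flatY
    have hy : Continuous fun w : I × F₀ => w.2.1.2 := by fun_prop
    have hx : Continuous fun w : I × F₀ => w.2.1.1 := by fun_prop
    refine hy.continuousAt.mul (tendsto_finsetProd _ fun i _ => ?_)
    have hr := flat_ratio z.1.2.1 z.1.2.2 (hz i)
    refine ContinuousAt.comp (g := csqrt) (f := fun w : I × F₀ =>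
      (flat w.1 w.2.1.1 - T₀.1 i) / (w.2.1.1 - T₀.1 i)) (continuousAt_csqrt hr) ?_
    refine (hs.sub continuous_const).continuousAt.div (hx.sub continuous_const).continuousAt
      (sub_ne_zero.2 fun h => hz i ?_)
    rw [h, flat_root]

lemma flatF_of_fixed (s : I) (v : F₀) (h : flat s v.1.1 = v.1.1) : flatF s v = v := by
  refine Subtype.ext (Prod.ext h ?_)
  change flatY s v.1.1 v.1.2 = v.1.2
  by_cases hx : ∃ i, v.1.1 = T₀.1 i
  · simp [flatY, (root_of_y_eq_zero v.2).2 hx]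
  · push Not at hx
    rw [flatY, h, Finset.prod_eq_one, mul_one]
    intro i _
    rw [div_self (sub_ne_zero.2 (hx i)), csqrt_one]

lemma flatF_zero (v : F₀) : flatF 0 v = v := flatF_of_fixed _ _ (by simp [flat])

/-- The part of the model fibre over the segment `[-1, 1]`. -/
abbrev F₁ : Type := {v : F₀ // v.1.1.im = 0 ∧ -1 ≤ v.1.1.re ∧ v.1.1.re ≤ 1}

lemma exists_kap_eta {κ η : ℝ} (h : η ^ 2 = κ * (1 - κ)) : ∃ t : I, kap t = κ ∧ eta t = η := by
  set z : ℂ := ⟨1 - 2 * κ, 2 * η⟩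
  have hz : ‖z‖ = 1 := by
    rw [← sq_eq_sq₀ (norm_nonneg _) zero_le_one, ← Complex.normSq_eq_norm_sq, Complex.normSq_apply]
    simp only [z]; linear_combination 4 * h
  have hz0 : z ≠ 0 := by rintro h; rw [h] at hz; simp at hz
  have hpi := Real.pi_pos
  refine ⟨⟨Int.fract (Complex.arg z / (2 * Real.pi)), Int.fract_nonneg _,
    (Int.fract_lt_one _).le⟩, ?_, ?_⟩
  all_goals
    have e : 2 * Real.pi * Int.fract (Complex.arg z / (2 * Real.pi)) =
        Complex.arg z - ⌊Complex.arg z / (2 * Real.pi)⌋ * (2 * Real.pi) := by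
      rw [Int.fract]; field_simp
  · simp only [kap, e, Real.cos_sub_int_mul_two_pi, Complex.cos_arg hz0, hz]
    simp only [z]; ring
  · simp only [eta, e, Real.sin_sub_int_mul_two_pi, Complex.sin_arg, hz]
    simp only [z]; ring

lemma eq_of_kap_eta {t t' : I} (h : kap t = kap t') (h' : eta t = eta t') :
    t = t' ∨ (t = 0 ∧ t' = 1) ∨ (t = 1 ∧ t' = 0) := by
  have hpi := Real.pi_pos
  have hc : Real.cos (2 * Real.pi * t) = Real.cos (2 * Real.pi * t') := by
    simp only [kap] at h; linarith
  have hs : Real.sin (2 * Real.pi * t) = Real.sin (2 * Real.pi * t') := by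
    simp only [eta] at h'; linarith
  obtain ⟨k, hk⟩ := Real.Angle.angle_eq_iff_two_pi_dvd_sub.1 (Real.Angle.cos_sin_inj hc hs)
  have hk' : (t : ℝ) - t' = k := by
    have : 2 * Real.pi * ((t : ℝ) - t') = 2 * Real.pi * k := by linarith
    exact mul_left_cancel₀ (by positivity) this
  have h1 := t.2.1; have h2 := t.2.2; have h3 := t'.2.1; have h4 := t'.2.2
  have k1 : k ≤ 1 := by
    have : (k : ℝ) ≤ 1 := by linarith
    exact_mod_cast this
  have k2 : -1 ≤ k := by
    have : (-1 : ℝ) ≤ k := by linarith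
    exact_mod_cast this
  obtain rfl | rfl | rfl : k = -1 ∨ k = 0 ∨ k = 1 := by omega
  · right; left
    push_cast at hk'
    exact ⟨Set.Icc.coe_eq_zero.1 (by linarith), Set.Icc.coe_eq_one.1 (by linarith)⟩
  · left; push_cast at hk'; exact Subtype.ext (by linarith)
  · right; right
    push_cast at hk'
    exact ⟨Set.Icc.coe_eq_one.1 (by linarith), Set.Icc.coe_eq_zero.1 (by linarith)⟩

instance : CompactSpace Wd := inferInstanceAs (CompactSpace (Quot _))

lemma jl₀_apply (i : Fin 2) (t : ℝ) : jl (T₀.1 0) (T₀.1 1) (T₀.1 2) i t =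
    if i = 0 then (-(kap t : ℂ), (eta t : ℂ) * (Real.sqrt (1 + kap t) : ℂ))
    else ((kap t : ℂ), Complex.I * ((eta t : ℂ) * (Real.sqrt (1 + kap t) : ℂ))) := by
  have hk := (kap_mem t).1
  have e : csqrt ((1 + kap t : ℝ) : ℂ) = (Real.sqrt (1 + kap t) : ℂ) := csqrt_of_sq (by
    exact_mod_cast Real.sq_sqrt (by linarith)) (by
      simpa using Real.sqrt_pos.2 (by linarith : 0 < 1 + kap t))
  have h0 : T₀.1 0 = -1 := rfl
  have h1 : T₀.1 1 = 0 := rfl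
  have h2 : T₀.1 2 = 1 := rfl
  rw [← e]
  unfold jl
  rw [h0, h1, h2]
  split_ifs
  · ext1
    · simp
    · simp
  · ext1
    · simp
    · simp; rw [add_comm]; ring

/-- The wedge of circles parametrizes the part of the model fibre over `[-1, 1]`. -/
def jF₁ : C(Wd, F₁) where
  toFun z := ⟨j₀ z, by
    induction z using Hoc.ind with
    | hX x =>
      have : (j₀ (Hoc.inX _ _ x)).1 = (0, 0) := rfl
      rw [this]; simp
    | hA i t =>
      have hk := kap_mem t
      have : (j₀ (Hoc.cyl _ _ (i, t))).1 = _ := jl₀_apply i t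
      rw [this]
      split_ifs
      · simp; constructor <;> linarith
      · simp; constructor <;> linarith⟩
  continuous_toFun := by fun_prop

lemma Wd_cyl_surj (z : Wd) : ∃ i t, z = Hoc.cyl _ _ (i, t) := by
  induction z using Hoc.ind with
  | hX => exact ⟨0, 0, (Hoc.cyl_zero _ _ _).symm⟩
  | hA i t => exact ⟨i, t, rfl⟩

lemma Wd_cyl_end (i j : Fin 2) {t t' : I} (ht : t = 0 ∨ t = 1) (ht' : t' = 0 ∨ t' = 1) :
    (Hoc.cyl _ _ (i, t) : Wd) = Hoc.cyl _ _ (j, t') := by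
  rcases ht with rfl | rfl <;> rcases ht' with rfl | rfl <;> simp

lemma jF₁_injective : Function.Injective jF₁ := by
  intro z z' h
  obtain ⟨i, t, rfl⟩ := Wd_cyl_surj z
  obtain ⟨j, t', rfl⟩ := Wd_cyl_surj z'
  have h' : jl (T₀.1 0) (T₀.1 1) (T₀.1 2) i t = jl (T₀.1 0) (T₀.1 1) (T₀.1 2) j t' :=
    congrArg (fun v : F₁ => v.1.1) h
  have hk := kap_mem t
  have hk' := kap_mem t'
  have hsq : Real.sqrt (1 + kap t') ≠ 0 := (Real.sqrt_pos.2 (by linarith)).ne'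
  rw [jl₀_apply, jl₀_apply] at h'
  have zero_of : ∀ u : I, kap u = 0 → u = 0 ∨ u = 1 := by
    intro u hu
    have he : eta u = 0 := by
      have := eta_sq u
      rw [hu] at this
      simpa using this
    rcases eq_of_kap_eta (t := u) (t' := 0) (by simpa using hu) (by simpa using he) with h | h | h
    · exact Or.inl h
    · exact Or.inl h.1
    · exact Or.inr h.1
  have same : kap t = kap t' → eta t = eta t' → i = j →
      (Hoc.cyl _ _ (i, t) : Wd) = Hoc.cyl _ _ (j, t') := by
    rintro a b rfl
    rcases eq_of_kap_eta a b with h | h | h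
    · rw [h]
    · exact Wd_cyl_end _ _ (Or.inl h.1) (Or.inr h.2)
    · exact Wd_cyl_end _ _ (Or.inr h.1) (Or.inl h.2)
  have ext2 : ∀ a b c d : ℝ, (a : ℂ) * b = c * d → b = d → d ≠ 0 → a = c := by
    intro a b c d e1 e2 e3
    subst e2
    have : a * b = c * b := by exact_mod_cast e1
    exact mul_right_cancel₀ e3 this
  split_ifs at h' with h1 h2 h2
  · obtain ⟨e1, e2⟩ := Prod.mk.inj h'
    have e1' : kap t = kap t' := by
      have := neg_injective e1; exact_mod_cast this
    exact same e1' (ext2 _ _ _ _ e2 (by rw [e1']) hsq) (h1.trans h2.symm)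
  · obtain ⟨e1, e2⟩ := Prod.mk.inj h'
    have e1' : -kap t = kap t' := by exact_mod_cast e1
    exact Wd_cyl_end _ _ (zero_of _ (by linarith)) (zero_of _ (by linarith))
  · obtain ⟨e1, e2⟩ := Prod.mk.inj h'
    have e1' : kap t = -kap t' := by exact_mod_cast e1
    exact Wd_cyl_end _ _ (zero_of _ (by linarith)) (zero_of _ (by linarith))
  · obtain ⟨e1, e2⟩ := Prod.mk.inj h'
    have e1' : kap t = kap t' := by exact_mod_cast e1
    exact same e1' (ext2 _ _ _ _ (mul_left_cancel₀ Complex.I_ne_zero e2) (by rw [e1']) hsq)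
      (by omega)

lemma exists_real_of_sq {y : ℂ} {c : ℝ} (hc : 0 ≤ c) (h : y ^ 2 = c) : ∃ η : ℝ, y = η := by
  have hre := congrArg Complex.re h
  have him := congrArg Complex.im h
  simp [sq] at hre him
  have : y.im = 0 := by
    by_contra h0
    have : y.re = 0 := by
      have h2 : y.re * y.im = 0 := by linarith
      exact (mul_eq_zero.1 h2).resolve_right h0
    rw [this] at hre
    have := mul_self_pos.2 h0
    linarith
  exact ⟨y.re, Complex.ext (by simp) (by simp [this])⟩

lemma jF₁_surjective : Function.Surjective jF₁ := by
  rintro ⟨⟨⟨x, y⟩, h⟩, h1, h2, h3⟩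
  simp only at h1 h2 h3
  obtain ⟨a, rfl⟩ : ∃ a : ℝ, x = a := ⟨x.re, Complex.ext (by simp) (by simp [h1])⟩
  rw [Complex.ofReal_re] at h2 h3
  have hy : y ^ 2 = ((a * (a ^ 2 - 1) : ℝ) : ℂ) := by
    rw [h, Fin.prod_univ_three]; simp [T₀]; ring
  suffices H : ∃ (i : Fin 2) (t : I), jl (T₀.1 0) (T₀.1 1) (T₀.1 2) i t = ((a : ℂ), y) by
    obtain ⟨i, t, H⟩ := H
    exact ⟨Hoc.cyl _ _ (i, t), Subtype.ext (Subtype.ext H)⟩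
  have solve : ∀ κ η : ℝ, 0 ≤ κ → η ^ 2 = κ * (1 - κ) * (1 + κ) →
      ∃ t : I, kap t = κ ∧ eta t * Real.sqrt (1 + kap t) = η := by
    intro κ η hk he
    have hq : 0 < Real.sqrt (1 + κ) := Real.sqrt_pos.2 (by linarith)
    obtain ⟨t, e1, e2⟩ := exists_kap_eta (κ := κ) (η := η / Real.sqrt (1 + κ)) (by
      rw [div_pow, he, Real.sq_sqrt (by linarith)]
      field_simp)
    refine ⟨t, e1, ?_⟩
    rw [e1, e2]; field_simp
  rcases le_total a 0 with ha | ha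
  · obtain ⟨η, rfl⟩ := exists_real_of_sq (by
      have := mul_nonneg (neg_nonneg.2 ha)
        (mul_nonneg (sub_nonneg.2 h3) (by linarith : 0 ≤ 1 + a))
      nlinarith) hy
    obtain ⟨t, e1, e2⟩ := solve (-a) η (by linarith) (by
      have : η ^ 2 = a * (a ^ 2 - 1) := by exact_mod_cast hy
      rw [this]; ring)
    refine ⟨0, t, ?_⟩
    rw [jl₀_apply, ← e2, e1]
    simp
  · obtain ⟨η, hη⟩ := exists_real_of_sq (y := -Complex.I * y) (c := -(a * (a ^ 2 - 1)))
      (by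
        have := mul_nonneg ha (mul_nonneg (sub_nonneg.2 h3) (by linarith : 0 ≤ 1 + a))
        nlinarith)
      (by rw [mul_pow, hy, neg_sq, Complex.I_sq]; push_cast; ring)
    have hy' : y = Complex.I * η := by
      rw [← hη]; linear_combination y * Complex.I_mul_I
    subst hy'
    obtain ⟨t, e1, e2⟩ := solve a η ha (by
      have : (η : ℂ) ^ 2 = -((a * (a ^ 2 - 1) : ℝ) : ℂ) := by
        rw [← hy, mul_pow, Complex.I_sq]; ring
      have : η ^ 2 = -(a * (a ^ 2 - 1)) := by exact_mod_cast this
      rw [this]; ring)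
    refine ⟨1, t, ?_⟩
    rw [jl₀_apply, ← e2, e1]
    simp

/-- The model fibre is homotopy equivalent to a wedge of two circles. -/
lemma isHE_j₀ : IsHE j₀ := by
  let E : Wd ≃ₜ F₁ := Continuous.homeoOfEquivCompactToT2
    (f := Equiv.ofBijective jF₁ ⟨jF₁_injective, jF₁_surjective⟩) jF₁.continuous
  let inc : C(F₁, F₀) := ⟨Subtype.val, continuous_subtype_val⟩
  have e : j₀ = inc.comp (E : C(Wd, F₁)) := rfl
  rw [e]
  refine IsHE.comp ?_ (IsHE.of_homeo E)
  have hm : ∀ v : F₀, (flatF 1 v).1.1.im = 0 ∧ -1 ≤ (flatF 1 v).1.1.re ∧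
      (flatF 1 v).1.1.re ≤ 1 := fun v => by
    have := clampR_mem v.1.1
    simpa [flatF, flat] using this
  have hcont : Continuous fun v : F₀ => flatF 1 v :=
    continuous_flatF.comp (continuous_const.prodMk continuous_id)
  let ret : C(F₀, F₁) := ⟨fun v => ⟨flatF 1 v, hm v⟩, hcont.subtype_mk _⟩
  refine IsHE.of_inverses ret ret ?_ ?_
  · have : ret.comp inc = ContinuousMap.id F₁ := by
      ext1 v
      refine Subtype.ext (flatF_of_fixed _ _ ?_)
      have h2 : clampR v.1.1.1 = v.1.1.1.re := by
        unfold clampR; rw [min_eq_right v.2.2.2, max_eq_right v.2.2.1]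
      have h3 := v.2.1
      change (1 - ((1 : I) : ℂ)) * v.1.1.1 + ((1 : I) : ℂ) * clampR v.1.1.1 = v.1.1.1
      rw [h2]
      exact Complex.ext (by simp) (by simp [h3])
    rw [this]
  · symm
    refine homotopic_of_fun (fun p => flatF p.1 p.2) continuous_flatF ?_ ?_
    · intro v; exact flatF_zero v
    · intro v; rfl

/-! ### The monodromy computation in a triangle of branch points -/

lemma csqrt_real_mul {κ : ℝ} (hκ : 0 ≤ κ) {z : ℂ} (hz : z ∈ Complex.slitPlane) :
    csqrt (κ * z) = Real.sqrt κ * csqrt z := by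
  rcases hκ.lt_or_eq with h | rfl
  · refine csqrt_of_sq ?_ ?_
    · rw [mul_pow, csqrt_sq]
      congr 1
      exact_mod_cast Real.sq_sqrt hκ
    · have := mul_pos (Real.sqrt_pos.2 h) (csqrt_re_pos hz)
      simpa using this
  · simp [csqrt_zero]

lemma csqrt_neg {z : ℂ} (hz : 0 < z.im) : csqrt (-z) = -Complex.I * csqrt z := by
  refine csqrt_of_sq ?_ ?_
  · rw [mul_pow, csqrt_sq, neg_sq, Complex.I_sq]; ring
  · have h1 := csqrt_re_pos (z := z) (Or.inr hz.ne')
    have h2 := congrArg Complex.im (csqrt_sq z)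
    simp only [sq, Complex.mul_im] at h2
    have h3 : 0 < (csqrt z).im := by
      by_contra h
      push Not at h
      nlinarith
    simpa using h3

/-- A region containing the triangle `PQR`, on which the three factors of `qs` are continuous. -/
def Tri (P Q R : ℂ) : Set ℂ :=
  {x | (x = P ∨ x.im < P.im) ∧ (x = Q ∨ Q.im < x.im) ∧ (x = R ∨ x.re < R.re)}

lemma convex_Tri (P Q R : ℂ) : Convex ℝ (Tri P Q R) := by
  have key : ∀ (p : ℂ) (L : ℂ →ₗ[ℝ] ℝ), Convex ℝ {x | x = p ∨ L x < L p} := by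
    intro p L x hx y hy a b ha hb hab
    have hp : L (a • x + b • y) = a * L x + b * L y := by
      rw [map_add, map_smul, map_smul, smul_eq_mul, smul_eq_mul]
    have hpp : L p = a * L p + b * L p := by rw [← add_mul, hab, one_mul]
    rcases hx with rfl | hx
    · rcases hy with rfl | hy
      · left; rw [← add_smul, hab, one_smul]
      · rcases hb.lt_or_eq with hb | rfl
        · right; rw [hp]; have := mul_lt_mul_of_pos_left hy hb; linarith
        · left; simp at hab; simp [hab]
    · rcases ha.lt_or_eq with ha | rfl
      · right
        rw [hp, hpp]
        have h1 := mul_lt_mul_of_pos_left hx ha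
        have h2 : b * L y ≤ b * L p := by
          rcases hy with rfl | hy
          · exact le_rfl
          · exact mul_le_mul_of_nonneg_left hy.le hb
        linarith
      · rcases hy with rfl | hy
        · left; simp at hab; simp [hab]
        · right; simp at hab; simpa [hab] using hy
  have h1 := key P Complex.imLm
  have h2 := key Q (-Complex.imLm)
  have h3 := key R Complex.reLm
  have : Tri P Q R = {x | x = P ∨ Complex.imLm x < Complex.imLm P} ∩
      ({x | x = Q ∨ (-Complex.imLm) x < (-Complex.imLm) Q} ∩
        {x | x = R ∨ Complex.reLm x < Complex.reLm R}) := by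
    ext x; simp [Tri]
  rw [this]
  exact h1.inter (h2.inter h3)

/-- A branch of the square root of `(x - P) (x - Q) (x - R)` over the triangle. -/
def qs (P Q R x : ℂ) : ℂ := Complex.I * (csqrt (x - P) * csqrt (x - Q) * csqrt (R - x))

lemma qs_sq (P Q R x : ℂ) : qs P Q R x ^ 2 = (x - P) * (x - Q) * (x - R) := by
  simp only [qs, mul_pow, csqrt_sq, Complex.I_sq]; ring

lemma continuous_qs (P Q R : ℂ) : Continuous fun x : Tri P Q R => qs P Q R x := by
  unfold qs
  refine continuous_const.mul ((Continuous.mul ?_ ?_).mul ?_)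
  all_goals
    refine continuous_csqrt_comp (by fun_prop) fun x => ?_
    obtain ⟨x, h1, h2, h3⟩ := x
  · exact h1.imp (fun h => by simp [h]) fun h => Or.inr (by
      simp only [Complex.sub_im]; intro h0; linarith)
  · exact h2.imp (fun h => by simp [h]) fun h => Or.inr (by
      simp only [Complex.sub_im]; intro h0; linarith)
  · exact h3.imp (fun h => by simp [h]) fun h => Or.inl (by
      simp only [Complex.sub_re]; linarith)

section triangle

variable {Pr : ℂ × ℂ → Prop} {P Q R : ℂ}
  (hPr : ∀ v : ℂ × ℂ, v.2 ^ 2 = (v.1 - P) * (v.1 - Q) * (v.1 - R) → Pr v)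

include hPr in
lemma sheet_mem {ε : ℝ} (hε : ε ^ 2 = 1) (x : ℂ) : Pr (x, ε * qs P Q R x) :=
  hPr _ (by
    have : (ε : ℂ) ^ 2 = 1 := by exact_mod_cast hε
    rw [mul_pow, this, one_mul, qs_sq])

/-- The two sheets over the triangle. -/
def sheet {ε : ℝ} (hε : ε ^ 2 = 1) : C(Tri P Q R, {v // Pr v}) :=
  ⟨fun x => ⟨(x, ε * qs P Q R x), sheet_mem hPr hε x⟩, by
    have := continuous_qs P Q R
    exact Continuous.subtype_mk (by fun_prop) _⟩

/-- The segment joining two points of the triangle. -/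
def edge (p q : Tri P Q R) : Path p q where
  toFun t := ⟨p + kap (t / 2) * (q - p), by
    have := (convex_Tri P Q R).add_smul_sub_mem p.2 q.2 (kap_mem (t / 2))
    simpa using this⟩
  continuous_toFun := by fun_prop
  source' := by ext1; simp
  target' := by
    ext1
    have : kap (1 / 2) = 1 := by
      rw [kap, show 2 * Real.pi * (1 / 2) = Real.pi by ring, Real.cos_pi]; norm_num
    simp only [Set.Icc.coe_one, this]; simp

include hPr in
lemma root_mem {p : ℂ} (h : qs P Q R p = 0) : Pr (p, 0) := by
  have := sheet_mem hPr (one_pow 2) p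
  rwa [h, mul_zero] at this

/-- The lift of a segment to one of the sheets. -/
def sp {ε : ℝ} (hε : ε ^ 2 = 1) (p q : Tri P Q R) (hp : qs P Q R p = 0) (hq : qs P Q R q = 0) :
    Path (⟨(p, 0), root_mem hPr hp⟩ : {v // Pr v}) ⟨(q, 0), root_mem hPr hq⟩ :=
  ((edge p q).map (sheet hPr hε).continuous).cast
    (Subtype.ext (by simp [sheet, hp])) (Subtype.ext (by simp [sheet, hq]))

lemma cast_trans_homotopic {T E : Type} [TopologicalSpace T] [TopologicalSpace E]
    [SimplyConnectedSpace T] (m : C(T, E)) {p q r : T} {u v w : E} (hu : u = m p) (hv : v = m q)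
    (hw : w = m r) (a : Path p q) (b : Path q r) (c : Path p r) :
    (((a.map m.continuous).cast hu hv).trans ((b.map m.continuous).cast hv hw)).Homotopic
      ((c.map m.continuous).cast hu hw) := by
  subst hu hv hw
  simp only [Path.cast_rfl_rfl]
  rw [← Path.map_trans]
  exact (SimplyConnectedSpace.paths_homotopic _ _).map m

lemma sp_trans {ε : ℝ} (hε : ε ^ 2 = 1) (p q r : Tri P Q R) (hp : qs P Q R p = 0)
    (hq : qs P Q R q = 0) (hr : qs P Q R r = 0) :
    Path.Homotopic.Quotient.trans (.mk (sp hPr hε p q hp hq)) (.mk (sp hPr hε q r hq hr)) =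
      .mk (sp hPr hε p r hp hr) := by
  have := (convex_Tri P Q R).contractibleSpace ⟨p, p.2⟩
  have := SimplyConnectedSpace.ofContractible (Tri P Q R)
  rw [← Path.Homotopic.Quotient.mk_trans]
  exact Path.Homotopic.Quotient.eq.2 (cast_trans_homotopic (sheet hPr hε) _ _ _ _ _ _)

lemma sp_inv {ε : ℝ} (hε : ε ^ 2 = 1) (p q : Tri P Q R) (hp : qs P Q R p = 0)
    (hq : qs P Q R q = 0) :
    Path.Homotopic.Quotient.mk (sp hPr hε p q hp hq) =
      .symm (.mk (sp hPr hε q p hq hp)) := by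
  have h1 := sp_trans hPr hε p q p hp hq hp
  have h2 : Path.Homotopic.Quotient.mk (sp hPr hε p p hp hp) = .refl _ := by
    have : sp hPr hε p p hp hp = Path.refl _ := by
      refine Path.ext (funext fun t => Subtype.ext ?_)
      change ((p : ℂ) + kap (t / 2) * (p - p), ε * qs P Q R (p + kap (t / 2) * (p - p))) =
        ((p : ℂ), (0 : ℂ))
      rw [sub_self, mul_zero, add_zero, hp, mul_zero]
    rw [this]; rfl
  rw [h2] at h1
  have := congrArg (fun z => Path.Homotopic.Quotient.trans z (.symm (.mk (sp hPr hε q p hq hp)))) h1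
  simpa [Path.Homotopic.Quotient.trans_assoc] using this

/-- A loop over an edge is a concatenation of lifts of the edge to the two sheets. -/
lemma jp_split {a b c : ℂ} (h : Adm a b c) (hP : ∀ i (t : ℝ), Pr (jl a b c i t)) (i : Fin 2)
    {ε : ℝ} (hε : ε ^ 2 = 1) (hε' : (-ε) ^ 2 = 1) (p q : Tri P Q R) (hp : qs P Q R p = 0)
    (hq : qs P Q R q = 0) (_ : b = p) (G : ℝ → ℂ)
    (hj : ∀ t : ℝ, jl a b c i t = ((p : ℂ) + kap t * (q - p), G (kap t) * eta t))
    (hG : ∀ κ : ℝ, 0 ≤ κ → κ ≤ 1 → qs P Q R (p + κ * (q - p)) =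
      ε * G κ * Real.sqrt (κ * (1 - κ))) :
    ∀ t, (jp h hP i t).1 = (((sp hPr hε p q hp hq).trans (sp hPr hε' q p hq hp)) t).1 := by
  intro t
  have hεc : (ε : ℂ) * ε = 1 := by rw [← sq]; exact_mod_cast hε
  have hpi := Real.pi_pos
  have h0 := t.2.1
  have h1 := t.2.2
  have hk := kap_mem t
  have habs : Real.sqrt (kap t * (1 - kap t)) = |eta t| := by rw [← eta_sq, Real.sqrt_sq_eq_abs]
  rw [Path.trans_apply]
  change jl a b c i t = _
  rw [hj]
  split_ifs with ht
  · have hs : 0 ≤ eta t := by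
      refine div_nonneg (Real.sin_nonneg_of_nonneg_of_le_pi (by positivity) ?_) (by norm_num)
      nlinarith
    have e := hG _ hk.1 hk.2
    rw [habs, abs_of_nonneg hs] at e
    have e2 : 2 * (t : ℝ) / 2 = t := by ring
    change _ = ((p : ℂ) + kap (2 * (t : ℝ) / 2) * (q - p),
      ε * qs P Q R (p + kap (2 * (t : ℝ) / 2) * (q - p)))
    rw [e2, e]
    refine Prod.ext rfl ?_
    linear_combination (-G (kap t) * eta t) * hεc
  · have hs : eta t ≤ 0 := by
      have : 0 ≤ eta (1 - t) := by
        refine div_nonneg (Real.sin_nonneg_of_nonneg_of_le_pi ?_ ?_) (by norm_num)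
        · have : 0 ≤ 1 - (t : ℝ) := by linarith
          positivity
        · nlinarith
      rw [eta_neg] at this; linarith
    have e := hG _ hk.1 hk.2
    rw [habs, abs_of_nonpos hs] at e
    have e2 : kap ((2 * (t : ℝ) - 1) / 2) = 1 - kap t := by
      rw [kap, kap, show 2 * Real.pi * ((2 * (t : ℝ) - 1) / 2) = 2 * Real.pi * t - Real.pi by ring,
        Real.cos_sub_pi]
      ring
    have e3 : (q : ℂ) + ((1 - kap t : ℝ) : ℂ) * (p - q) = p + kap t * (q - p) := by
      push_cast; ring
    change _ = ((q : ℂ) + kap ((2 * (t : ℝ) - 1) / 2) * (p - q),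
      ((-ε : ℝ) : ℂ) * qs P Q R (q + kap ((2 * (t : ℝ) - 1) / 2) * (p - q)))
    rw [e2, e3, e]
    refine Prod.ext rfl ?_
    push_cast
    linear_combination (-G (kap t) * eta t) * hεc

end triangle

/-- The pair of loops `x₁, x₁ x₂`. -/
def tw₀ : Fin 2 → Path (Hoc.inX _ _ () : Wd) (Hoc.inX _ _ ()) := ![wl 0, (wl 0).trans (wl 1)]

/-- The pair of loops `x₂ x₁, x₂`. -/
def tw₁ : Fin 2 → Path (Hoc.inX _ _ () : Wd) (Hoc.inX _ _ ()) := ![(wl 1).trans (wl 0), wl 1]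

lemma adm_tri {P Q R : ℂ} (h1 : Q.im < R.im) (h2 : R.im < P.im) (h3 : P.re < R.re)
    (h4 : Q.re < R.re) : Adm P Q R ∧ Adm Q P R := by
  refine ⟨⟨fun κ h0 h1 => ?_, fun κ h0 h1 => ?_⟩, ⟨fun κ h0 h1 => ?_, fun κ h0 h1 => ?_⟩⟩
  · left
    simp
    have := mul_le_mul_of_nonneg_left h3.le h0
    have := mul_le_mul_of_nonneg_left h4.le (sub_nonneg.2 h1)
    rcases h0.lt_or_eq with h | rfl
    · have := mul_lt_mul_of_pos_left h3 h; linarith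
    · linarith
  · right; simp; nlinarith
  · left
    simp
    have := mul_le_mul_of_nonneg_left h4.le h0
    have := mul_le_mul_of_nonneg_left h3.le (sub_nonneg.2 h1)
    rcases h0.lt_or_eq with h | rfl
    · have := mul_lt_mul_of_pos_left h4 h; linarith
    · linarith
  · right; simp; nlinarith

/-- Exchanging the two outer names of the vertices of a triangle of branch points precomposes
the standard pair of loops with a Dehn twist. -/
lemma triangle {Pr : ℂ × ℂ → Prop} {P Q R : ℂ} (h1 : Q.im < R.im) (h2 : R.im < P.im)
    (h3 : P.re < R.re) (h4 : Q.re < R.re)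
    (hPr : ∀ v : ℂ × ℂ, v.2 ^ 2 = (v.1 - P) * (v.1 - Q) * (v.1 - R) → Pr v)
    (hA : Adm P Q R) (hA' : Adm Q P R) (hP : ∀ i (t : ℝ), Pr (jl P Q R i t))
    (hP' : ∀ i (t : ℝ), Pr (jl Q P R i t)) :
    (jw hA' hP').Homotopic ((jw hA hP).comp (wmap tw₀)) := by
  let tP : Tri P Q R := ⟨P, Or.inl rfl, Or.inr (by linarith), Or.inr h3⟩
  let tQ : Tri P Q R := ⟨Q, Or.inr (by linarith), Or.inl rfl, Or.inr h4⟩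
  let tR : Tri P Q R := ⟨R, Or.inr h2, Or.inr h1, Or.inl rfl⟩
  have zP : qs P Q R tP = 0 := by simp [qs, csqrt_zero, tP]
  have zQ : qs P Q R tQ = 0 := by simp [qs, csqrt_zero, tQ]
  have zR : qs P Q R tR = 0 := by simp [qs, csqrt_zero, tR]
  have p1 : (1 : ℝ) ^ 2 = 1 := by norm_num
  have m1 : (-1 : ℝ) ^ 2 = 1 := by norm_num
  have p1' : (-(-1) : ℝ) ^ 2 = 1 := by norm_num
  have hsq : ∀ κ : ℝ, 0 ≤ κ → κ ≤ 1 →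
      (Real.sqrt (κ * (1 - κ)) : ℂ) = Real.sqrt κ * Real.sqrt (1 - κ) := by
    intro κ h _; rw [Real.sqrt_mul h]; push_cast; rfl
  have sPQ : P - Q ∈ Complex.slitPlane := Or.inr (by simp; linarith)
  have sQP : Q - P ∈ Complex.slitPlane := Or.inr (by simp; linarith)
  have sRQ : R - Q ∈ Complex.slitPlane := Or.inr (by simp; linarith)
  have sRP : R - P ∈ Complex.slitPlane := Or.inl (by simp; linarith)
  have hPQ : csqrt (Q - P) * csqrt (P - Q) = -Complex.I * (P - Q) := by
    have := csqrt_neg (z := P - Q) (by simp; linarith)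
    rw [neg_sub] at this
    rw [this, mul_assoc, csqrt_mul_self]
  -- the four loops, split at the midpoint
  have eA : jp hA hP 0 = (sp hPr m1 tQ tP zQ zP).trans (sp hPr p1 tP tQ zP zQ) := by
    refine Path.ext (funext fun t => Subtype.ext ((jp_split hPr hA hP 0 m1 p1' tQ tP zQ zP rfl
      (fun κ => (Q - P) * csqrt (R - (Q + κ * (P - Q)))) ?_ ?_ t).trans ?_))
    · intro t; simp only [jl, if_true]; exact Prod.ext rfl (by ring)
    · intro κ k0 k1
      have e1 : Q + κ * (P - Q) - P = ((1 - κ : ℝ) : ℂ) * (Q - P) := by push_cast; ring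
      have e2 : Q + κ * (P - Q) - Q = κ * (P - Q) := by ring
      simp only [qs]
      rw [hsq κ k0 k1, e1, e2, csqrt_real_mul (by linarith) sQP, csqrt_real_mul k0 sPQ]
      push_cast
      linear_combination (Complex.I * Real.sqrt κ * Real.sqrt (1 - κ) *
        csqrt (R - (Q + κ * (P - Q)))) * hPQ - (P - Q) * Real.sqrt κ * Real.sqrt (1 - κ) *
        csqrt (R - (Q + κ * (P - Q))) * Complex.I_mul_I
    · simp only [neg_neg]
  have eA' : jp hA' hP' 0 = (sp hPr p1 tP tQ zP zQ).trans (sp hPr m1 tQ tP zQ zP) := by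
    refine Path.ext (funext fun t => Subtype.ext (jp_split hPr hA' hP' 0 p1 m1 tP tQ zP zQ rfl
      (fun κ => (P - Q) * csqrt (R - (P + κ * (Q - P)))) ?_ ?_ t))
    · intro t; simp only [jl, if_true]; exact Prod.ext rfl (by ring)
    · intro κ k0 k1
      have e1 : P + κ * (Q - P) - P = κ * (Q - P) := by ring
      have e2 : P + κ * (Q - P) - Q = ((1 - κ : ℝ) : ℂ) * (P - Q) := by push_cast; ring
      simp only [qs]
      rw [hsq κ k0 k1, e1, e2, csqrt_real_mul (by linarith) sPQ, csqrt_real_mul k0 sQP]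
      push_cast
      linear_combination (Complex.I * Real.sqrt κ * Real.sqrt (1 - κ) *
        csqrt (R - (P + κ * (Q - P)))) * hPQ - (P - Q) * Real.sqrt κ * Real.sqrt (1 - κ) *
        csqrt (R - (P + κ * (Q - P))) * Complex.I_mul_I
  have eB : jp hA hP 1 = (sp hPr p1 tQ tR zQ zR).trans (sp hPr m1 tR tQ zR zQ) := by
    refine Path.ext (funext fun t => Subtype.ext (jp_split hPr hA hP 1 p1 m1 tQ tR zQ zR rfl
      (fun κ => Complex.I * (R - Q) * csqrt (Q + κ * (R - Q) - P)) ?_ ?_ t))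
    · intro t; simp only [jl, one_ne_zero, if_false]; refine Prod.ext rfl ?_
      ring
    · intro κ k0 k1
      have e1 : R - (Q + κ * (R - Q)) = ((1 - κ : ℝ) : ℂ) * (R - Q) := by push_cast; ring
      have e2 : Q + κ * (R - Q) - Q = κ * (R - Q) := by ring
      simp only [qs]
      rw [hsq κ k0 k1, e1, e2, csqrt_real_mul k0 sRQ, csqrt_real_mul (by linarith) sRQ]
      push_cast
      linear_combination (Complex.I * Real.sqrt κ * Real.sqrt (1 - κ) *
        csqrt (Q + κ * (R - Q) - P)) * csqrt_mul_self (R - Q)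
  have eB' : jp hA' hP' 1 = (sp hPr p1 tP tR zP zR).trans (sp hPr m1 tR tP zR zP) := by
    refine Path.ext (funext fun t => Subtype.ext (jp_split hPr hA' hP' 1 p1 m1 tP tR zP zR rfl
      (fun κ => Complex.I * (R - P) * csqrt (P + κ * (R - P) - Q)) ?_ ?_ t))
    · intro t; simp only [jl, one_ne_zero, if_false]; refine Prod.ext rfl ?_
      ring
    · intro κ k0 k1
      have e1 : R - (P + κ * (R - P)) = ((1 - κ : ℝ) : ℂ) * (R - P) := by push_cast; ring
      have e2 : P + κ * (R - P) - P = κ * (R - P) := by ring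
      simp only [qs]
      rw [hsq κ k0 k1, e1, e2, csqrt_real_mul k0 sRP, csqrt_real_mul (by linarith) sRP]
      push_cast
      linear_combination (Complex.I * Real.sqrt κ * Real.sqrt (1 - κ) *
        csqrt (P + κ * (R - P) - Q)) * csqrt_mul_self (R - P)
  have e0 : (jw hA hP).comp (wmap tw₀) =
      wmap (![jp hA hP 0, (jp hA hP 0).trans (jp hA hP 1)] : Fin 2 → Path _ _) := by
    rw [comp_wmap]
    congr 1
    funext i
    fin_cases i
    · rfl
    · exact Path.map_trans _ _ _
  rw [e0]
  refine wmap_homotopic_of_conj (sp hPr m1 tQ tP zQ zP) fun i => ?_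
  have s1 := sp_trans hPr p1 tP tQ tR zP zQ zR
  have s2 := sp_trans hPr m1 tR tP tQ zR zP zQ
  have s3 := sp_inv hPr m1 tP tQ zP zQ
  rw [s3] at s2
  fin_cases i
  · change ((_ : Path _ _).trans (jp hA' hP' 0) |>.trans _).Homotopic (jp hA hP 0)
    rw [eA, eA']
    refine Path.Homotopic.Quotient.eq.1 ?_
    simp [Path.Homotopic.Quotient.trans_assoc]
  · change ((_ : Path _ _).trans (jp hA' hP' 1) |>.trans _).Homotopic
      ((jp hA hP 0).trans (jp hA hP 1))
    rw [eA, eB, eB']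
    refine Path.Homotopic.Quotient.eq.1 ?_
    simp only [Path.Homotopic.Quotient.mk_trans, Path.Homotopic.Quotient.mk_symm, ← s1, ← s2,
      Path.Homotopic.Quotient.trans_assoc]

/-! ### The symmetry `(x, y) ↦ (-x, i y)` -/

lemma Adm.neg {a b c : ℂ} (h : Adm a b c) : Adm (-c) (-b) (-a) := by
  constructor
  · intro κ h0 h1
    convert h.2 κ h0 h1 using 1
    ring
  · intro κ h0 h1
    convert h.1 κ h0 h1 using 1
    ring

lemma jl_neg_zero (a b c : ℂ) (t : ℝ) : jl a b c 0 t =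
    (-(jl (-c) (-b) (-a) 1 t).1, -Complex.I * (jl (-c) (-b) (-a) 1 t).2) := by
  have e : -b + (kap t : ℂ) * (-a - -b) - -c = c - (b + kap t * (a - b)) := by ring
  simp only [jl, one_ne_zero, if_true, if_false, e]
  refine Prod.ext (by ring) ?_
  simp only
  linear_combination (b - a) * eta t * csqrt (c - (b + kap t * (a - b))) * Complex.I_mul_I

lemma jl_neg_one (a b c : ℂ) (t : ℝ) : jl a b c 1 t =
    (-(jl (-c) (-b) (-a) 0 (1 - t)).1, -Complex.I * (jl (-c) (-b) (-a) 0 (1 - t)).2) := by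
  have e : -a - (-b + (kap t : ℂ) * (-c - -b)) = b + kap t * (c - b) - a := by ring
  simp only [jl, one_ne_zero, if_true, if_false, kap_neg, eta_neg, e]
  refine Prod.ext (by ring) ?_
  push_cast
  ring

/-- The automorphism `x₀ ↦ x₁`, `x₁ ↦ x₀⁻¹` induced by the symmetry. -/
def twS : Fin 2 → Path (Hoc.inX _ _ () : Wd) (Hoc.inX _ _ ()) := ![wl 1, (wl 0).symm]

/-- The symmetry between two subspaces of the plane. -/
def symB {Pr : ℂ × ℂ → Prop} :
    C({v : ℂ × ℂ // Pr (-v.1, -Complex.I * v.2)}, {v // Pr v}) :=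
  ⟨fun v => ⟨(-v.1.1, -Complex.I * v.1.2), v.2⟩, by fun_prop⟩

lemma jw_neg {Pr : ℂ × ℂ → Prop} {a b c : ℂ} (h : Adm a b c)
    (hP : ∀ i (t : ℝ), Pr (jl a b c i t))
    (hP' : ∀ i (t : ℝ), Pr (-(jl (-c) (-b) (-a) i t).1, -Complex.I * (jl (-c) (-b) (-a) i t).2)) :
    jw h hP = symB.comp ((jw (P := fun v => Pr (-v.1, -Complex.I * v.2)) h.neg hP').comp
      (wmap twS)) := by
  refine Wd.ext fun i s => Subtype.ext ?_
  rw [jw_cyl]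
  fin_cases i
  · exact jl_neg_zero a b c s
  · exact jl_neg_one a b c s

lemma tw_symm : ((wmap tw₀).comp ((wmap twS).comp (wmap tw₁))).Homotopic (wmap twS) := by
  have e1 : (wmap twS).comp (wmap tw₁) =
      wmap (![(wl 0).symm.trans (wl 1), (wl 0).symm] : Fin 2 → Path _ _) := by
    rw [comp_wmap]
    congr 1
    funext i
    fin_cases i
    · exact Path.map_trans _ _ _
    · rfl
  rw [e1, comp_wmap]
  refine wmap_homotopic fun i => ?_
  fin_cases i
  · have e : ((wl 0).symm.trans (wl 1)).map (wmap tw₀).continuous =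
        (wl 0).symm.trans ((wl 0).trans (wl 1)) := Path.map_trans _ _ _
    change (((wl 0).symm.trans (wl 1)).map (wmap tw₀).continuous).Homotopic (wl 1)
    rw [e]
    refine Path.Homotopic.Quotient.eq.1 ?_
    simp [← Path.Homotopic.Quotient.trans_assoc]
  · exact Path.Homotopic.refl _

/-- The analogue of `triangle` when the middle root is the leftmost one. -/
lemma triangle' {Pr : ℂ × ℂ → Prop} {p q r : ℂ} (h1 : q.im < r.im) (h2 : r.im < p.im)
    (h3 : r.re < p.re) (h4 : r.re < q.re)
    (hPr : ∀ v : ℂ × ℂ, v.2 ^ 2 = (v.1 - p) * (v.1 - q) * (v.1 - r) → Pr v)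
    (hA : Adm r q p) (hA' : Adm r p q)
    (hP : ∀ i (t : ℝ), Pr (jl r q p i t)) (hP' : ∀ i (t : ℝ), Pr (jl r p q i t)) :
    (jw hA' hP').Homotopic ((jw hA hP).comp (wmap tw₁)) := by
  have hPr' : ∀ v : ℂ × ℂ, v.2 ^ 2 = (v.1 - -q) * (v.1 - -p) * (v.1 - -r) →
      Pr (-v.1, -Complex.I * v.2) := fun v hv => hPr _ (by
    simp only
    rw [mul_pow, hv, neg_sq, Complex.I_sq]; ring)
  have k1 : ∀ i (t : ℝ), Pr (-(jl (-q) (-p) (-r) i t).1,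
      -Complex.I * (jl (-q) (-p) (-r) i t).2) := fun i t => hPr' _ (jl_sq _ _ _ i t)
  have k2 : ∀ i (t : ℝ), Pr (-(jl (-p) (-q) (-r) i t).1,
      -Complex.I * (jl (-p) (-q) (-r) i t).2) := fun i t => hPr' _ (by
    rw [jl_sq]; ring)
  have T := triangle (Pr := fun v => Pr (-v.1, -Complex.I * v.2)) (P := -q) (Q := -p) (R := -r)
    (by simpa) (by simpa) (by simpa) (by simpa) hPr' hA'.neg hA.neg k1 k2
  rw [jw_neg hA' hP' k1, jw_neg hA hP k2]
  have s1 := Homotopic.comp_left tw_symm.symm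
    (symB.comp (jw (P := fun v => Pr (-v.1, -Complex.I * v.2)) hA'.neg k1))
  have s2 := Homotopic.comp_left (Homotopic.comp_right T ((wmap twS).comp (wmap tw₁))) symB
  exact s1.trans s2.symm

/-! ### The position of the roots over the region `Vm` -/

/-- For a parameter with nonzero real part, the root with middle imaginary part lies on one side of
the imaginary axis and the two other roots on the other side; the order of the real parts of these
two changes when the parameter crosses the real axis. -/
lemma root_position {s p q r : ℂ} (h1 : p + q + r = 0) (h2 : p * q + q * r + r * p = -3)
    (h3 : p * q * r = s) (hq : q.im < r.im) (hp : r.im < p.im) (hs : s.re ≠ 0) :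
    0 < (r.re - p.re) * s.re ∧ 0 < (r.re - q.re) * s.re ∧
      (s.im ≠ 0 → 0 < (q.re - p.re) * (s.re * s.im)) := by
  -- the half sum `a + b i` and the half difference `c + d i` of `p` and `q`
  obtain ⟨a, b, c, d, rfl, rfl⟩ : ∃ a b c d : ℝ, p = ⟨a + c, b + d⟩ ∧ q = ⟨a - c, b - d⟩ :=
    ⟨(p.re + q.re) / 2, (p.im + q.im) / 2, (p.re - q.re) / 2, (p.im - q.im) / 2,
      Complex.ext (by ring_nf) (by ring_nf), Complex.ext (by ring_nf) (by ring_nf)⟩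
  obtain rfl : r = ⟨-2 * a, -2 * b⟩ := by
    have e1 := congrArg Complex.re h1
    have e2 := congrArg Complex.im h1
    simp at e1 e2
    exact Complex.ext (by simp; linarith) (by simp; linarith)
  have e1 := congrArg Complex.re h2
  have e2 := congrArg Complex.im h2
  have e3 := congrArg Complex.re h3
  have e4 := congrArg Complex.im h3
  simp [Complex.mul_re, Complex.mul_im] at e1 e2 e3 e4 hq hp ⊢
  have f1 : 3 * (a ^ 2 - b ^ 2) + c ^ 2 - d ^ 2 = 3 := by linear_combination -e1
  have f2 : c * d = -3 * a * b := by linear_combination (-1 / 2) * e2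
  have hd : 0 < d := by linarith
  have hbd : 9 * b ^ 2 < d ^ 2 := by nlinarith
  have g3 : s.re = -2 * a * (a ^ 2 - 9 * b ^ 2 - c ^ 2 + d ^ 2) := by
    rw [← e3]; linear_combination (-4 * b) * f2
  have g4 : s.im = -2 * b * (9 * a ^ 2 - b ^ 2 - c ^ 2 + d ^ 2) := by
    rw [← e4]; linear_combination (4 * a) * f2
  have ha : a ≠ 0 := by
    rintro rfl
    exact hs (by rw [g3]; ring)
  have ha2 : 0 < a ^ 2 := by positivity
  have hc : c ^ 2 < a ^ 2 := by
    have : c ^ 2 * d ^ 2 = 9 * b ^ 2 * a ^ 2 := by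
      rw [← mul_pow, f2]; ring
    by_contra! h
    nlinarith
  have hca : |c| < |a| := sq_lt_sq.1 hc
  have k1 : 0 < a ^ 2 - 9 * b ^ 2 - c ^ 2 + d ^ 2 := by linarith
  have k2 : 0 < 9 * a ^ 2 - b ^ 2 - c ^ 2 + d ^ 2 := by nlinarith [sq_nonneg b]
  have k3 : |c * a| < a ^ 2 := by
    rw [abs_mul, ← sq_abs a]; nlinarith [abs_pos.2 ha]
  obtain ⟨k4, k5⟩ := abs_lt.1 k3
  refine ⟨?_, ?_, fun hb => ?_⟩
  · have : (-(2 * a) - (a + c)) * s.re =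
        (2 * (3 * a ^ 2 + c * a)) * (a ^ 2 - 9 * b ^ 2 - c ^ 2 + d ^ 2) := by rw [g3]; ring
    rw [this]
    exact mul_pos (by linarith) k1
  · have : (-(2 * a) - (a - c)) * s.re =
        (2 * (3 * a ^ 2 - c * a)) * (a ^ 2 - 9 * b ^ 2 - c ^ 2 + d ^ 2) := by rw [g3]; ring
    rw [this]
    exact mul_pos (by linarith) k1
  · have hb0 : b ≠ 0 := by
      rintro rfl
      exact hb (by rw [g4]; ring)
    have : (a - c - (a + c)) * (s.re * s.im) * d = 24 * a ^ 2 * b ^ 2 *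
        ((a ^ 2 - 9 * b ^ 2 - c ^ 2 + d ^ 2) * (9 * a ^ 2 - b ^ 2 - c ^ 2 + d ^ 2)) := by
      rw [g3, g4]
      linear_combination (-8 * a * b * ((a ^ 2 - 9 * b ^ 2 - c ^ 2 + d ^ 2) *
        (9 * a ^ 2 - b ^ 2 - c ^ 2 + d ^ 2))) * f2
    refine pos_of_mul_pos_left ?_ hd.le
    rw [this]
    positivity

/-- The roots over `Vm`, sorted by imaginary parts. -/
def rootV (s : Vm) (i : Fin 3) : ℂ := Complex.I * (TV s).1 i

lemma continuous_rootV (i : Fin 3) : Continuous fun s => rootV s i := by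
  exact continuous_const.mul ((continuous_apply i).comp
    (continuous_subtype_val.comp continuous_TV))

lemma rootV_eq (s : Vm) (x : ℂ) :
    x ^ 3 - 3 * x - s = (x - rootV s 2) * (x - rootV s 0) * (x - rootV s 1) := by
  rw [isRoots_TV s x, Fin.prod_univ_three]
  simp only [rootV]
  ring

lemma rootV_im (s : Vm) : (rootV s 0).im < (rootV s 1).im ∧ (rootV s 1).im < (rootV s 2).im := by
  simpa [rootV] using (TV s).2

lemma vieta {s p q r : ℂ} (h : ∀ x, x ^ 3 - 3 * x - s = (x - p) * (x - q) * (x - r)) :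
    p + q + r = 0 ∧ p * q + q * r + r * p = -3 ∧ p * q * r = s := by
  have h0 := h 0
  have h1 := h 1
  have h2 := h (-1)
  refine ⟨?_, ?_, ?_⟩
  · linear_combination (1 / 2) * h1 + (1 / 2) * h2 - h0
  · linear_combination (-1 / 2) * h1 + (1 / 2) * h2
  · linear_combination h0

lemma rootV_position (s : Vm) :
    0 < ((rootV s 1).re - (rootV s 2).re) * s.1.re ∧
    0 < ((rootV s 1).re - (rootV s 0).re) * s.1.re ∧
      (s.1.im ≠ 0 → 0 < ((rootV s 0).re - (rootV s 2).re) * (s.1.re * s.1.im)) := by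
  obtain ⟨h1, h2, h3⟩ := vieta (rootV_eq s)
  exact root_position h1 h2 h3 (rootV_im s).1 (rootV_im s).2 s.2.1

/-! ### Standard wedges in the fibres -/

/-- The fibres of the pencil. -/
abbrev Fib (s : ℂ) : Type := {v : ℂ × ℂ // Fp v = s}

lemma Fp_eq_of {s a b c : ℂ} (h : ∀ x, x ^ 3 - 3 * x - s = (x - a) * (x - b) * (x - c))
    (v : ℂ × ℂ) (hv : v.2 ^ 2 = (v.1 - a) * (v.1 - b) * (v.1 - c)) : Fp v = s := by
  rw [Fp, hv, ← h]; ring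

/-- The standard wedge in a fibre for an admissible naming of the roots. -/
def jF {s a b c : ℂ} (h : ∀ x, x ^ 3 - 3 * x - s = (x - a) * (x - b) * (x - c))
    (hA : Adm a b c) : C(Wd, Fib s) := jw hA fun i t => Fp_eq_of h _ (jl_sq a b c i t)

/-- The inclusion of the model fibre given by a trivialization. -/
def fibΩ (s : Om) : C(F₀, Fib s.1) := ⟨fun y => ⟨(chartΩ (s, y)).1, Fp_chartΩ _⟩,
  Continuous.subtype_mk (continuous_subtype_val.comp (chartΩ.continuous.comp (by fun_prop))) _⟩

/-- The inclusion of the model fibre given by a trivialization. -/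
def fibV (s : Vm) : C(F₀, Fib s.1) := ⟨fun y => ⟨(chartV (s, y)).1, Fp_chartV _⟩,
  Continuous.subtype_mk (continuous_subtype_val.comp (chartV.continuous.comp (by fun_prop))) _⟩

/-- The projection to the model fibre given by a trivialization. -/
def prΩ : C(Fp ⁻¹' Om, F₀) := ⟨fun v => (chartΩ.symm v).2,
  continuous_snd.comp chartΩ.symm.continuous⟩

/-- The projection to the model fibre given by a trivialization. -/
def prV : C(Fp ⁻¹' Vm, F₀) := ⟨fun v => (chartV.symm v).2,
  continuous_snd.comp chartV.symm.continuous⟩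

/-- The inclusion of a fibre over `s ∈ U` in the preimage of `U`. -/
def inF {U : Set ℂ} (s : U) : C(Fib s.1, Fp ⁻¹' U) :=
  ⟨fun v => ⟨v.1, by rw [Set.mem_preimage, v.2]; exact s.2⟩, by fun_prop⟩

lemma fibΩ_prΩ (s : Om) (v : Fp ⁻¹' Om) (h : Fp v = s) : (fibΩ s (prΩ v)).1 = v.1 := by
  obtain rfl : s = ⟨Fp v, v.2⟩ := Subtype.ext h.symm
  exact congrArg Subtype.val (chartΩ.apply_symm_apply v)

lemma fibV_prV (s : Vm) (v : Fp ⁻¹' Vm) (h : Fp v = s) : (fibV s (prV v)).1 = v.1 := by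
  obtain rfl : s = ⟨Fp v, v.2⟩ := Subtype.ext h.symm
  exact congrArg Subtype.val (chartV.apply_symm_apply v)

/-- Over `Om`, the trivialization identifies `j₀` with the standard wedge of the roots sorted by
their real parts. -/
lemma fibΩ_j₀ (s : Om) {a b c : ℂ} (h : ∀ x, x ^ 3 - 3 * x - s = (x - a) * (x - b) * (x - c))
    (hA : Adm a b c) (hab : a.re < b.re) (hbc : b.re < c.re) :
    (fibΩ s).comp j₀ = jF h hA := by
  have hT : TΩ s = ⟨![a, b, c], hab, hbc⟩ := by
    refine IsRoots.unique (u := 1) (s := s) (by simp) (isRoots_TΩ s) fun x => ?_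
    rw [h, Fin.prod_univ_three]
    simp
  refine Wd.ext fun i t => Subtype.ext ?_
  have := shear_jl (TΩ s) i t
  have e : jl ((TΩ s).1 0) ((TΩ s).1 1) ((TΩ s).1 2) i t = jl a b c i t := by rw [hT]; rfl
  rw [e] at this
  change ((1 : ℂ) * _, (1 : ℂ) * _) = jl a b c i t
  rw [one_mul, one_mul]
  exact this

/-- The transport by the trivialization over `Vm` along a path preserves the standard wedges, as
long as the naming of the roots remains admissible. -/
lemma transport (w : C(I, Vm)) (n : Fin 3 → Fin 3)
    (h : ∀ u x, x ^ 3 - 3 * x - (w u).1 =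
      (x - rootV (w u) (n 0)) * (x - rootV (w u) (n 1)) * (x - rootV (w u) (n 2)))
    (hA : ∀ u, Adm (rootV (w u) (n 0)) (rootV (w u) (n 1)) (rootV (w u) (n 2))) :
    (((fibV (w 1)).comp (prV.comp (inF (w 0)))).comp
      (jF (h 0) (hA 0))).Homotopic (jF (h 1) (hA 1)) := by
  have c0 : ∀ i, Continuous fun u => rootV (w u) i := fun i =>
    (continuous_rootV i).comp w.continuous
  -- the moving wedge
  have hm : ∀ u i (t : ℝ), Fp (jl (rootV (w u) (n 0)) (rootV (w u) (n 1)) (rootV (w u) (n 2)) i t)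
      ∈ Vm := fun u i t => by
    rw [Fp_eq_of (h u) _ (jl_sq _ _ _ i t)]; exact (w u).2
  refine Hoc.homotopic_of
    (fun x => fibV (w 1) (prV ⟨_, hm x.2 0 0⟩))
    (fun x => fibV (w 1) (prV ⟨_, hm x.2 x.1.1 x.1.2⟩)) ?_ ?_ ?_ ?_ ?_ ?_ ?_ ?_
  · refine (fibV (w 1)).continuous.comp (prV.continuous.comp (Continuous.subtype_mk ?_ _))
    exact continuous_jl ((c0 _).comp continuous_snd) ((c0 _).comp continuous_snd)
      ((c0 _).comp continuous_snd) continuous_const (fun x => hA x.2) 0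
  · refine (fibV (w 1)).continuous.comp (prV.continuous.comp (Continuous.subtype_mk ?_ _))
    refine continuous_Wd_prod fun i => ?_
    exact continuous_jl ((c0 _).comp continuous_snd) ((c0 _).comp continuous_snd)
      ((c0 _).comp continuous_snd) (by fun_prop) (fun x => hA x.2) i
  · intro a u
    simp [jl_zero]
  · intro a u
    simp [jl_zero, jl_one]
  · intro x
    refine congrArg (fun y => fibV (w 1) (prV y)) (Subtype.ext ?_)
    exact jl_zero (rootV (w 0) (n 0)) (rootV (w 0) (n 1)) (rootV (w 0) (n 2)) 0
  · intro x
    refine Subtype.ext ((fibV_prV _ _ ?_).trans ?_)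
    · exact Fp_eq_of (h 1) _ (jl_sq _ _ _ _ _)
    · exact jl_zero (rootV (w 1) (n 0)) (rootV (w 1) (n 1)) (rootV (w 1) (n 2)) 0
  · intro x
    rfl
  · intro x
    exact Subtype.ext (fibV_prV _ _ (Fp_eq_of (h 1) _ (jl_sq _ _ _ _ _)))

/-! ### Crossing the two cuts issued from the critical values -/

lemma rootV_adm_pos (s : Vm) (h : 0 < s.1.re) :
    Adm (rootV s 2) (rootV s 0) (rootV s 1) ∧ Adm (rootV s 0) (rootV s 2) (rootV s 1) := by
  obtain ⟨h1, h2, -⟩ := rootV_position s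
  exact adm_tri (rootV_im s).1 (rootV_im s).2 (sub_pos.1 (pos_of_mul_pos_left h1 h.le))
    (sub_pos.1 (pos_of_mul_pos_left h2 h.le))

lemma rootV_re_neg (s : Vm) (h : s.1.re < 0) :
    (rootV s 1).re < (rootV s 2).re ∧ (rootV s 1).re < (rootV s 0).re := by
  obtain ⟨h1, h2, -⟩ := rootV_position s
  constructor <;> nlinarith

lemma rootV_adm_neg (s : Vm) (h : s.1.re < 0) :
    Adm (rootV s 1) (rootV s 0) (rootV s 2) ∧ Adm (rootV s 1) (rootV s 2) (rootV s 0) := by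
  obtain ⟨h1, h2⟩ := rootV_re_neg s h
  obtain ⟨a1, a2⟩ := adm_tri (P := -rootV s 0) (Q := -rootV s 2) (R := -rootV s 1)
    (by simpa using (rootV_im s).2) (by simpa using (rootV_im s).1) (by simpa) (by simpa)
  have b1 := a1.neg
  have b2 := a2.neg
  simp only [neg_neg] at b1 b2
  exact ⟨b2, b1⟩

/-- The monodromy across the cut issued from the critical value `2`. -/
lemma crossing_pos (w : C(I, Vm)) (hre : ∀ u, 0 < (w u).1.re) (h0 : (w 0).1.im < 0)
    (h1 : 0 < (w 1).1.im) (k0 : (w 0).1 ∈ Om) (k1 : (w 1).1 ∈ Om) :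
    ((fibV (w 1)).comp (prV.comp ((inF (w 0)).comp ((fibΩ ⟨_, k0⟩).comp j₀)))).Homotopic
      (((fibΩ ⟨_, k1⟩).comp j₀).comp (wmap tw₀)) := by
  have e : ∀ u x, x ^ 3 - 3 * x - (w u).1 =
      (x - rootV (w u) (![0, 2, 1] 0)) * (x - rootV (w u) (![0, 2, 1] 1)) *
        (x - rootV (w u) (![0, 2, 1] 2)) := fun u x => by
    rw [rootV_eq (w u)]
    change _ = (x - rootV (w u) 0) * (x - rootV (w u) 2) * (x - rootV (w u) 1)
    ring
  have T := transport w ![0, 2, 1] e (fun u => (rootV_adm_pos (w u) (hre u)).2)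
  obtain ⟨a1, a2, a3⟩ := rootV_position (w 0)
  obtain ⟨b1, b2, b3⟩ := rootV_position (w 1)
  replace a1 := sub_pos.1 (pos_of_mul_pos_left a1 (hre 0).le)
  replace b2 := sub_pos.1 (pos_of_mul_pos_left b2 (hre 1).le)
  replace b1 := sub_pos.1 (pos_of_mul_pos_left b1 (hre 1).le)
  replace b3 := sub_pos.1 (pos_of_mul_pos_left (b3 h1.ne') (mul_pos (hre 1) h1).le)
  replace a3 : (rootV (w 0) 0).re < (rootV (w 0) 2).re := by
    have := a3 h0.ne
    have := mul_neg_of_pos_of_neg (hre 0) h0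
    nlinarith
  have f0 := fibΩ_j₀ ⟨_, k0⟩ (e 0) (rootV_adm_pos (w 0) (hre 0)).2 a3 a1
  have f1 := fibΩ_j₀ ⟨_, k1⟩ (rootV_eq (w 1)) (rootV_adm_pos (w 1) (hre 1)).1 b3 b2
  have t := triangle (Pr := fun v => Fp v = (w 1).1) (rootV_im (w 1)).1 (rootV_im (w 1)).2 b1 b2
    (fun v hv => Fp_eq_of (rootV_eq (w 1)) v hv) (rootV_adm_pos (w 1) (hre 1)).1
    (rootV_adm_pos (w 1) (hre 1)).2 (fun i t => Fp_eq_of (rootV_eq (w 1)) _ (jl_sq _ _ _ i t))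
    (fun i t => Fp_eq_of (e 1) _ (jl_sq _ _ _ i t))
  rw [f0, f1]
  exact T.trans t

/-- The monodromy across the cut issued from the critical value `-2`. -/
lemma crossing_neg (w : C(I, Vm)) (hre : ∀ u, (w u).1.re < 0) (h0 : (w 0).1.im < 0)
    (h1 : 0 < (w 1).1.im) (k0 : (w 0).1 ∈ Om) (k1 : (w 1).1 ∈ Om) :
    ((fibV (w 1)).comp (prV.comp ((inF (w 0)).comp ((fibΩ ⟨_, k0⟩).comp j₀)))).Homotopic
      (((fibΩ ⟨_, k1⟩).comp j₀).comp (wmap tw₁)) := by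
  have e : ∀ u x, x ^ 3 - 3 * x - (w u).1 =
      (x - rootV (w u) (![1, 2, 0] 0)) * (x - rootV (w u) (![1, 2, 0] 1)) *
        (x - rootV (w u) (![1, 2, 0] 2)) := fun u x => by
    rw [rootV_eq (w u)]
    change _ = (x - rootV (w u) 1) * (x - rootV (w u) 2) * (x - rootV (w u) 0)
    ring
  have e' : ∀ x, x ^ 3 - 3 * x - (w 1).1 =
      (x - rootV (w 1) 1) * (x - rootV (w 1) 0) * (x - rootV (w 1) 2) := fun x => by
    rw [rootV_eq (w 1)]
    ring
  have T := transport w ![1, 2, 0] e (fun u => (rootV_adm_neg (w u) (hre u)).2)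
  obtain ⟨-, -, a3⟩ := rootV_position (w 0)
  obtain ⟨-, -, b3⟩ := rootV_position (w 1)
  obtain ⟨a1, a2⟩ := rootV_re_neg (w 0) (hre 0)
  obtain ⟨b1, b2⟩ := rootV_re_neg (w 1) (hre 1)
  replace a3 := sub_pos.1 (pos_of_mul_pos_left (a3 h0.ne) (mul_pos_of_neg_of_neg (hre 0) h0).le)
  replace b3 : (rootV (w 1) 0).re < (rootV (w 1) 2).re := by
    have := b3 h1.ne'
    have := mul_neg_of_neg_of_pos (hre 1) h1
    nlinarith
  have f0 := fibΩ_j₀ ⟨_, k0⟩ (e 0) (rootV_adm_neg (w 0) (hre 0)).2 a1 a3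
  have f1 := fibΩ_j₀ ⟨_, k1⟩ e' (rootV_adm_neg (w 1) (hre 1)).1 b2 b3
  have t := triangle' (Pr := fun v => Fp v = (w 1).1) (rootV_im (w 1)).1 (rootV_im (w 1)).2 b1 b2
    (fun v hv => Fp_eq_of (rootV_eq (w 1)) v hv) (rootV_adm_neg (w 1) (hre 1)).1
    (rootV_adm_neg (w 1) (hre 1)).2 (fun i t => Fp_eq_of e' _ (jl_sq _ _ _ i t))
    (fun i t => Fp_eq_of (e 1) _ (jl_sq _ _ _ i t))
  rw [f0, f1]
  exact T.trans t

/-! ### Disjoint sectors issued from the special values -/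

/-- The direction of the `k`-th sector. -/
def sE (k : ℕ) : ℝ := if k = 1 then -1 else 1

/-- The distance of the `k`-th tip to the imaginary axis. -/
def sR (M : ℝ) (k : ℕ) : ℝ := if k < 2 then 2 else M

/-- The slope of the `k`-th sector. -/
def sM (k : ℕ) : ℝ := ((if k < 2 then 0 else k : ℕ) : ℝ)

/-- The tip of the `k`-th sector. -/
def tip (M : ℝ) (k : ℕ) : ℂ := ⟨sE k * sR M k, sM k * (sE k * sR M k)⟩

/-- The coordinate along the axis of a sector. -/
def sx (M : ℝ) (k : ℕ) (z : ℂ) : ℝ := sE k * z.re - sR M k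

/-- The coordinate transverse to the axis of a sector. -/
def sy (k : ℕ) (z : ℂ) : ℝ := z.im - sM k * z.re

/-- The closed sector without its tip. -/
def Sec (M : ℝ) (k : ℕ) : Set ℂ := {z | 0 < sx M k z ∧ |sy k z| ≤ sx M k z / 4}

/-- The complement of the tips and of the open sectors. -/
def Cut (M : ℝ) (r : ℕ) : Set ℂ :=
  {z | ∀ k : Fin r, z ≠ tip M k ∧ sx M k z / 4 ≤ |sy k z|}

/-- The parametrization of a sector. -/
def sc (M : ℝ) (k : ℕ) (t s : ℝ) : ℂ :=
  ⟨sE k * (sR M k + t), sM k * (sE k * (sR M k + t)) + t * (2 * s - 1) / 4⟩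

lemma sE_sq (k : ℕ) : sE k * sE k = 1 := by unfold sE; split_ifs <;> norm_num

lemma sR_ge {M : ℝ} (hM : 2 < M) (k : ℕ) : 2 ≤ sR M k := by
  unfold sR; split_ifs <;> linarith

@[fun_prop] lemma continuous_sx (M : ℝ) (k : ℕ) : Continuous (sx M k) := by
  unfold sx; fun_prop

@[fun_prop] lemma continuous_sy (k : ℕ) : Continuous (sy k) := by
  unfold sy; fun_prop

@[fun_prop] lemma continuous_sc {Z : Type} [TopologicalSpace Z] (M : ℝ) (k : ℕ) {t s : Z → ℝ}
    (ht : Continuous t) (hs : Continuous s) : Continuous fun z => sc M k (t z) (s z) := by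
  have : ∀ z, sc M k (t z) (s z) = Complex.equivRealProdCLM.symm (sE k * (sR M k + t z),
    sM k * (sE k * (sR M k + t z)) + t z * (2 * s z - 1) / 4) := fun z => by
      apply Complex.ext <;> simp [sc]
  simp only [this]
  fun_prop

@[simp] lemma sx_sc (M : ℝ) (k : ℕ) (t s : ℝ) : sx M k (sc M k t s) = t := by
  simp only [sx, sc]
  linear_combination (sR M k + t) * sE_sq k

@[simp] lemma sy_sc (M : ℝ) (k : ℕ) (t s : ℝ) : sy k (sc M k t s) = t * (2 * s - 1) / 4 := by
  simp only [sy, sc]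
  ring

lemma sx_tip (M : ℝ) (k : ℕ) : sx M k (tip M k) = 0 := by
  simp only [sx, tip]
  linear_combination sR M k * sE_sq k

lemma sy_tip (M : ℝ) (k : ℕ) : sy k (tip M k) = 0 := by simp only [sy, tip]; ring

lemma eq_of_sx_sy {M : ℝ} {k : ℕ} {z w : ℂ} (h : sx M k z = sx M k w) (h' : sy k z = sy k w) :
    z = w := by
  have h1 : z.re = w.re := by
    simp only [sx] at h
    have : sE k * (z.re - w.re) = 0 := by linarith
    have hE := sE_sq k
    rcases mul_eq_zero.1 this with h0 | h0
    · rw [h0] at hE; norm_num at hE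
    · linarith
  refine Complex.ext h1 ?_
  simp only [sy, h1] at h'
  linarith

/-- The sectors are pairwise disjoint. -/
lemma sector_disjoint {M : ℝ} (hM : 2 < M) {k j : ℕ} {z : ℂ} (h : |sy k z| ≤ sx M k z / 4)
    (h' : |sy j z| ≤ sx M j z / 4) : k = j := by
  have h0 := abs_nonneg (sy k z)
  have h0' := abs_nonneg (sy j z)
  have r1 := sR_ge hM k
  have r2 := sR_ge hM j
  by_cases hk : k = 1 <;> by_cases hj : j = 1
  · rw [hk, hj]
  · simp only [sx, sE, hk, hj, if_true, if_false] at *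
    linarith
  · simp only [sx, sE, hk, hj, if_true, if_false] at *
    linarith
  · have hm : sM k = sM j := by
      simp only [sx, sE, hk, hj, if_false, sy] at h h' h0 h0'
      obtain ⟨a1, a2⟩ := abs_le.1 h
      obtain ⟨b1, b2⟩ := abs_le.1 h'
      have hz : 0 < z.re := by linarith
      have c1 : (sM k - sM j) * z.re < 1 * z.re := by linarith
      have c2 : (sM j - sM k) * z.re < 1 * z.re := by linarith
      replace c1 := lt_of_mul_lt_mul_right c1 hz.le
      replace c2 := lt_of_mul_lt_mul_right c2 hz.le
      unfold sM at *
      have d1 : ((if k < 2 then 0 else k : ℕ) : ℝ) < ((if j < 2 then 0 else j : ℕ) : ℝ) + 1 := by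
        linarith
      have d2 : ((if j < 2 then 0 else j : ℕ) : ℝ) < ((if k < 2 then 0 else k : ℕ) : ℝ) + 1 := by
        linarith
      norm_cast at d1 d2 ⊢
      omega
    unfold sM at hm
    norm_cast at hm
    split_ifs at hm <;> omega

lemma sc_mem {M : ℝ} {k : ℕ} {t : ℝ} (ht : 0 < t) (s : I) : sc M k t s ∈ Sec M k := by
  have h1 := s.2.1
  have h2 := s.2.2
  refine ⟨by simpa, ?_⟩
  rw [sx_sc, sy_sc, abs_le]
  constructor <;> nlinarith

lemma sec_ne_tip {M : ℝ} (hM : 2 < M) {k : ℕ} {z : ℂ} (hz : z ∈ Sec M k) (j : ℕ) :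
    z ≠ tip M j := by
  rintro rfl
  have : k = j := sector_disjoint hM hz.2 (by rw [sx_tip, sy_tip]; simp)
  subst this
  have := hz.1
  rw [sx_tip] at this
  exact lt_irrefl _ this

lemma sec_subset_Vm {M : ℝ} {k : ℕ} (hk : k < 2) : Sec M k ⊆ Vm := by
  rintro z ⟨h1, h2⟩
  have : 2 < sE k * z.re := by simp only [sx, sR, hk, if_true] at h1; linarith
  have h3 : 2 < |z.re| := by
    unfold sE at this
    split_ifs at this
    · exact lt_abs.2 (Or.inr (by linarith))
    · exact lt_abs.2 (Or.inl (by linarith))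
  refine ⟨fun h => ?_, fun h => ?_⟩
  · rw [h] at h3; norm_num at h3
  · linarith [h.2]

lemma sec_subset_Om {M : ℝ} (hM : 2 < M) {k : ℕ} (hk : ¬ k < 2) : Sec M k ⊆ Om := by
  rintro z ⟨h1, h2⟩ ⟨h3, -⟩
  have hk1 : k ≠ 1 := by omega
  have hk2 : (2 : ℝ) ≤ k := by exact_mod_cast (not_lt.1 hk)
  simp only [sx, sy, sR, sE, sM, hk, hk1, if_false, h3] at h1 h2
  obtain ⟨a1, a2⟩ := abs_le.1 h2
  nlinarith

lemma Cut_subset_Om {M : ℝ} {r : ℕ} (hr : 2 ≤ r) : Cut M r ⊆ Om := by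
  rintro z hz ⟨h1, h2⟩
  obtain ⟨a1, a2⟩ := hz ⟨0, by omega⟩
  obtain ⟨b1, b2⟩ := hz ⟨1, by omega⟩
  simp [sx, sy, sR, sE, sM, h1] at a2 b2
  rcases le_abs.1 h2 with h | h
  · exact a1 (Complex.ext (by simp [tip, sE, sR]; linarith) (by simp [tip, sM, h1]))
  · exact b1 (Complex.ext (by simp [tip, sE, sR]; linarith) (by simp [tip, sM, h1]))

/-- The complement of the sectors is star-shaped. -/
lemma Cut_star {M : ℝ} (hM : 2 < M) {r : ℕ} {z : ℂ} (hz : z ∈ Cut M r) {u : ℝ} (h0 : 0 ≤ u)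
    (h1 : u ≤ 1) : u * z ∈ Cut M r := by
  intro k
  obtain ⟨a1, a2⟩ := hz k
  have hR := sR_ge hM k
  have e1 : sx M k (u * z) = u * sx M k z - (1 - u) * sR M k := by
    simp only [sx, Complex.re_ofReal_mul]; ring
  have e2 : sy k (u * z) = u * sy k z := by
    simp only [sy, Complex.re_ofReal_mul, Complex.im_ofReal_mul]; ring
  have e3 : 0 ≤ (1 - u) * sR M k := mul_nonneg (by linarith) (by linarith)
  constructor
  · intro h
    have f1 := sx_tip M k
    have f2 := sy_tip M k
    rw [← h] at f1 f2
    rw [e1] at f1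
    rw [e2] at f2
    rcases mul_eq_zero.1 f2 with h2 | h2
    · subst h2
      linarith
    · rw [h2, abs_zero] at a2
      have : u * sx M k z ≤ 0 := mul_nonpos_of_nonneg_of_nonpos h0 (by linarith)
      have h3 : (1 - u) * sR M k = 0 := by linarith
      rcases mul_eq_zero.1 h3 with h4 | h4
      · obtain rfl : u = 1 := by linarith
        exact a1 (by simpa using h)
      · linarith
  · rw [e1, e2, abs_mul, abs_of_nonneg h0]
    nlinarith

lemma zero_mem_Cut {M : ℝ} (hM : 2 < M) (r : ℕ) : (0 : ℂ) ∈ Cut M r := by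
  intro k
  have hR := sR_ge hM k
  constructor
  · intro h
    have f1 := sx_tip M k
    rw [← h] at f1
    simp [sx] at f1
    linarith
  · simp [sx, sy]
    linarith

lemma sc_mem_Cut_iff {M : ℝ} (hM : 2 < M) {r : ℕ} (k : Fin r) {t : ℝ} (ht : 0 < t) (s : I) :
    sc M k t s ∈ Cut M r ↔ s = 0 ∨ s = 1 := by
  have h1 := s.2.1
  have h2 := s.2.2
  constructor
  · intro h
    have := (h k).2
    rw [sx_sc, sy_sc] at this
    rcases le_abs.1 this with h | h
    · right; ext; simp only [Set.Icc.coe_one]; nlinarith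
    · left; ext; simp only [Set.Icc.coe_zero]; nlinarith
  · intro hs j
    refine ⟨sec_ne_tip hM (sc_mem ht s) j, ?_⟩
    by_contra! hc
    have := sector_disjoint hM (sc_mem (M := M) (k := k) ht s).2 hc.le
    rw [← this, sx_sc, sy_sc] at hc
    obtain ⟨c1, c2⟩ := abs_lt.1 hc
    rcases hs with rfl | rfl
    · simp at c1 c2; linarith
    · simp at c1 c2; linarith

lemma mem_Cut_or_Sec {M : ℝ} {r : ℕ} {z : ℂ} (hz : ∀ k : Fin r, z ≠ tip M k) :
    z ∈ Cut M r ∨ ∃ k : Fin r, z ∈ Sec M k := by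
  by_contra! hc
  apply hc.1
  intro k
  refine ⟨hz k, ?_⟩
  by_contra! h
  exact hc.2 k ⟨by have := abs_nonneg (sy k z); linarith, h.le⟩

lemma exists_sc_eq {M : ℝ} {k : ℕ} {z : ℂ} (hz : z ∈ Sec M k) :
    ∃ s : I, sc M k (sx M k z) s = z := by
  obtain ⟨h1, h2⟩ := hz
  obtain ⟨a1, a2⟩ := abs_le.1 h2
  have h3 : 4 * sy k z / sx M k z * sx M k z = 4 * sy k z := div_mul_cancel₀ _ h1.ne'
  refine ⟨⟨(4 * sy k z / sx M k z + 1) / 2, ?_, ?_⟩, ?_⟩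
  · have : -1 ≤ 4 * sy k z / sx M k z := by rw [le_div_iff₀ h1]; linarith
    linarith
  · have : 4 * sy k z / sx M k z ≤ 1 := by rw [div_le_iff₀ h1]; linarith
    linarith
  · refine eq_of_sx_sy (M := M) (k := k) (by simp) ?_
    rw [sy_sc]
    linear_combination h3 / 4

/-! ### Decomposition of the complement along the sectors -/

/-- A trivialization of the pencil over a set of parameters. -/
structure Triv where
  U : Set ℂ
  Φ : U × F₀ ≃ₜ (Fp ⁻¹' U)
  hΦ : ∀ p, Fp (Φ p) = p.1

/-- The trivialization used over the `k`-th sector. -/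
def triv (k : ℕ) : Triv := if k < 2 then ⟨Vm, chartV, Fp_chartV⟩ else ⟨Om, chartΩ, Fp_chartΩ⟩

lemma triv_lt {k : ℕ} (h : k < 2) : triv k = ⟨Vm, chartV, Fp_chartV⟩ := if_pos h

lemma triv_ge {k : ℕ} (h : ¬ k < 2) : triv k = ⟨Om, chartΩ, Fp_chartΩ⟩ := if_neg h

lemma sec_subset_triv {M : ℝ} (hM : 2 < M) (k : ℕ) : Sec M k ⊆ (triv k).U := by
  by_cases h : k < 2
  · rw [triv_lt h]; exact sec_subset_Vm h
  · rw [triv_ge h]; exact sec_subset_Om hM h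

/-- The complement of the fibres over the tips. -/
abbrev Xs (M : ℝ) (r : ℕ) : Type := Xc (Set.range fun k : Fin r => tip M k)

/-- The part of the complement away from the open sectors. -/
def Us (M : ℝ) (r : ℕ) : Set (Xs M r) := {v | Fp v.1 ∈ Cut M r}

lemma isClosed_Us (M : ℝ) (r : ℕ) : IsClosed (Us M r) := by
  have : Us M r = ⋂ k : Fin r, {v | sx M k (Fp v.1) / 4 ≤ |sy k (Fp v.1)|} := by
    ext v
    simp only [Us, Cut, Set.mem_iInter]
    exact forall_congr' fun k => and_iff_right fun h => v.2 ⟨k, h.symm⟩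
  rw [this]
  exact isClosed_iInter fun k => isClosed_le (by fun_prop) (by fun_prop)

/-- The part of the complement over a closed sector. -/
def Cs (M : ℝ) (r k : ℕ) : Set (Xs M r) := {v | Fp v.1 ∈ Sec M k}

lemma isClosed_Cs {M : ℝ} {r : ℕ} (k : Fin r) : IsClosed (Cs M r k) := by
  have : Cs M r k = {v | |sy k (Fp v.1)| ≤ sx M k (Fp v.1) / 4} := by
    ext v
    refine ⟨fun h => h.2, fun h => ⟨?_, h⟩⟩
    have h' : |sy k (Fp v.1)| ≤ sx M k (Fp v.1) / 4 := h
    have h0 := abs_nonneg (sy k (Fp v.1))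
    refine lt_of_le_of_ne (by linarith) fun h1 => v.2 ⟨k, ?_⟩
    rw [← h1] at h'
    refine eq_of_sx_sy (M := M) (k := k) ((sx_tip M k).trans h1) ((sy_tip M k).trans ?_)
    exact (abs_eq_zero.1 (le_antisymm (by linarith) h0)).symm
  rw [this]
  exact isClosed_le (by fun_prop) (by fun_prop)

/-- The transverse parameter in a sector. -/
def ss (M : ℝ) (k : ℕ) (z : ℂ) : I := clampI ((4 * sy k z / sx M k z + 1) / 2)

lemma sc_ss {M : ℝ} {k : ℕ} {z : ℂ} (hz : z ∈ Sec M k) : sc M k (sx M k z) (ss M k z) = z := by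
  obtain ⟨s, hs⟩ := exists_sc_eq hz
  have h1 : sy k z = sx M k z * (2 * s - 1) / 4 := by
    conv_lhs => rw [← hs]
    rw [sy_sc]
  have : (4 * sy k z / sx M k z + 1) / 2 = s := by
    have := hz.1.ne'
    rw [h1]; field_simp; ring
  rw [ss, this, clampI_coe, hs]

lemma ss_sc {M : ℝ} {k : ℕ} {t : ℝ} (ht : 0 < t) (s : I) : ss M k (sc M k t s) = s := by
  rw [ss, sx_sc, sy_sc]
  have : (4 * (t * (2 * (s : ℝ) - 1) / 4) / t + 1) / 2 = s := by
    field_simp; ring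
  rw [this, clampI_coe]

lemma continuous_ss_Cs (M : ℝ) (r k : ℕ) :
    Continuous fun v : Cs M r k => ss M k (Fp v.1.1) := by
  refine continuous_clampI.comp ?_
  have : ∀ v : Cs M r k, sx M k (Fp v.1.1) ≠ 0 := fun v => v.2.1.ne'
  fun_prop (disch := exact this _)

/-- The cylinder over a sector. -/
def homeoCs {M : ℝ} (hM : 2 < M) (r k : ℕ) :
    (Set.Ioi (0 : ℝ) × F₀) × I ≃ₜ Cs M r k where
  toFun p := ⟨⟨((triv k).Φ (⟨sc M k p.1.1 p.2, sec_subset_triv hM k (sc_mem p.1.1.2 p.2)⟩, p.1.2)).1,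
    by
      rintro ⟨j, hj⟩
      rw [(triv k).hΦ] at hj
      exact sec_ne_tip hM (sc_mem p.1.1.2 p.2) j hj.symm⟩,
    by
      change Fp _ ∈ Sec M k
      rw [(triv k).hΦ]
      exact sc_mem p.1.1.2 p.2⟩
  invFun v := ((⟨sx M k (Fp v.1.1), v.2.1⟩,
    ((triv k).Φ.symm ⟨v.1.1, sec_subset_triv hM k v.2⟩).2), ss M k (Fp v.1.1))
  left_inv := by
    rintro ⟨⟨⟨t, ht⟩, y⟩, s⟩
    have e := (triv k).hΦ (⟨sc M k t s, sec_subset_triv hM k (sc_mem ht s)⟩, y)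
    refine Prod.ext (Prod.ext (Subtype.ext ?_) ?_) ?_
    · simp only
      rw [e, sx_sc]
    · simp
    · simp only
      rw [e]
      exact ss_sc ht s
  right_inv := by
    rintro ⟨v, hv⟩
    refine Subtype.ext (Subtype.ext ?_)
    have e : (⟨sc M k (sx M k (Fp v.1)) (ss M k (Fp v.1)),
        sec_subset_triv hM k (by rw [sc_ss hv]; exact hv)⟩ : (triv k).U) =
        ((triv k).Φ.symm ⟨v.1, sec_subset_triv hM k hv⟩).1 := by
      apply Subtype.ext
      have := (triv k).hΦ ((triv k).Φ.symm ⟨v.1, sec_subset_triv hM k hv⟩)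
      rw [Homeomorph.apply_symm_apply] at this
      exact (sc_ss hv).trans this
    simp only
    rw [e, Prod.mk.eta, Homeomorph.apply_symm_apply]
  continuous_toFun := by
    refine Continuous.subtype_mk (Continuous.subtype_mk ?_ _) _
    refine continuous_subtype_val.comp ((triv k).Φ.continuous.comp ?_)
    exact (Continuous.subtype_mk (by fun_prop) _).prodMk (by fun_prop)
  continuous_invFun := by
    refine Continuous.prodMk (Continuous.prodMk (Continuous.subtype_mk (by fun_prop) _) ?_)
      (continuous_ss_Cs M r k)
    exact continuous_snd.comp ((triv k).Φ.symm.continuous.comp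
      (Continuous.subtype_mk (by fun_prop) _))

lemma isClosedEmbedding_homeoCs {M : ℝ} (hM : 2 < M) {r : ℕ} (k : Fin r) :
    Topology.IsClosedEmbedding fun p => (homeoCs hM r k p).1 :=
  (isClosed_Cs k).isClosedEmbedding_subtypeVal.comp (homeoCs hM r k).isClosedEmbedding

/-- The base of the cylinders. -/
abbrev As (r : ℕ) : Type := Fin r × (Set.Ioi (0 : ℝ) × F₀)

/-- The union of the cylinders over the sectors. -/
def es {M : ℝ} (hM : 2 < M) (r : ℕ) (p : As r × I) : Xs M r := (homeoCs hM r p.1.1 (p.1.2, p.2)).1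

lemma Fp_es {M : ℝ} (hM : 2 < M) {r : ℕ} (p : As r × I) :
    Fp (es hM r p).1 = sc M p.1.1 p.1.2.1 p.2 := (triv p.1.1).hΦ _

lemma isClosedEmbedding_es {M : ℝ} (hM : 2 < M) (r : ℕ) :
    Topology.IsClosedEmbedding (es hM r) := by
  refine Topology.IsClosedEmbedding.of_continuous_injective_isClosedMap ?_ ?_ ?_
  · refine continuous_Wd_prod fun k => ?_
    exact (isClosedEmbedding_homeoCs hM k).continuous
  · rintro ⟨⟨k, a⟩, s⟩ ⟨⟨j, b⟩, t⟩ h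
    have h1 : es hM r ((k, a), s) ∈ Cs M r k := (homeoCs hM r k (a, s)).2
    have h2 : es hM r ((j, b), t) ∈ Cs M r j := (homeoCs hM r j (b, t)).2
    rw [← h] at h2
    obtain rfl : k = j := Fin.ext (sector_disjoint hM h1.2 h2.2)
    have := (isClosedEmbedding_homeoCs hM k).injective h
    obtain ⟨h3, h4⟩ := Prod.ext_iff.1 this
    exact Prod.ext (Prod.ext rfl h3) h4
  · intro C hC
    have : es hM r '' C = ⋃ k : Fin r, (fun p => (homeoCs hM r k p).1) ''
        ((fun p : (Set.Ioi (0 : ℝ) × F₀) × I => ((k, p.1), p.2)) ⁻¹' C) := by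
      ext v
      simp only [Set.mem_iUnion, Set.mem_image, Set.mem_preimage]
      constructor
      · rintro ⟨⟨⟨k, a⟩, s⟩, h, rfl⟩
        exact ⟨k, (a, s), h, rfl⟩
      · rintro ⟨k, p, h, rfl⟩
        exact ⟨((k, p.1), p.2), h, rfl⟩
    rw [this]
    exact isClosed_iUnion_of_finite fun k =>
      (isClosedEmbedding_homeoCs hM k).isClosedMap _ (hC.preimage (by fun_prop))

lemma es_mem_Us_iff {M : ℝ} (hM : 2 < M) {r : ℕ} (a : As r) (s : I) :
    es hM r (a, s) ∈ Us M r ↔ s = 0 ∨ s = 1 := by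
  have : es hM r (a, s) ∈ Us M r ↔ sc M a.1 a.2.1 s ∈ Cut M r := by
    rw [← Fp_es hM (a, s)]; rfl
  rw [this]
  exact sc_mem_Cut_iff hM a.1 a.2.1.2 s

/-- The end inclusions of the cylinders over the sectors. -/
def endS {M : ℝ} (hM : 2 < M) (r : ℕ) (s : I) (hs : s = 0 ∨ s = 1) : C(As r, Us M r) :=
  ⟨fun a => ⟨es hM r (a, s), (es_mem_Us_iff hM a s).2 hs⟩, by
    have := (isClosedEmbedding_es hM r).continuous
    fun_prop⟩

/-- The complement is the homotopy coequalizer of the end inclusions of the cylinders. -/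
lemma exists_isHE_Xs {M : ℝ} (hM : 2 < M) (r : ℕ) :
    ∃ m : C(Hoc (endS hM r 0 (Or.inl rfl)) (endS hM r 1 (Or.inr rfl)), Xs M r), IsHE m := by
  refine isHE_of_cylinder (Us M r) (isClosed_Us M r) (es hM r) (isClosedEmbedding_es hM r)
    (es_mem_Us_iff hM) fun v => ?_
  rcases mem_Cut_or_Sec (M := M) (r := r) (z := Fp v.1) (fun k h => v.2 ⟨k, h.symm⟩) with h | ⟨k, h⟩
  · exact Or.inl h
  · refine Or.inr ⟨((k, ((homeoCs hM r k).symm ⟨v, h⟩).1), ((homeoCs hM r k).symm ⟨v, h⟩).2), ?_⟩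
    change (homeoCs hM r k _).1 = v
    rw [Prod.mk.eta, Homeomorph.apply_symm_apply]

/-! ### The complement as a homotopy coequalizer of maps of wedges -/

section dfam

variable {ι Y Z : Type} [TopologicalSpace ι] [DiscreteTopology ι] [TopologicalSpace Y]
  [TopologicalSpace Z]

/-- The map on `ι × Y` given by a family of maps. -/
def dfam (m : ι → C(Y, Z)) : C(ι × Y, Z) :=
  ⟨fun p => m p.1 p.2, continuous_prod_of_discrete_left.2 fun k => (m k).continuous⟩

lemma dfam_homotopic {m n : ι → C(Y, Z)} (h : ∀ k, (m k).Homotopic (n k)) :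
    (dfam m).Homotopic (dfam n) := by
  choose P h0 h1 using fun k => Homotopic.exists_fun (h k)
  refine homotopic_of_fun (fun p => P p.2.1 (p.2.2, p.1)) ?_ (fun x => h0 _ _) (fun x => h1 _ _)
  have : Continuous fun x : (ι × Y) × I => P x.1.1 (x.1.2, x.2) :=
    continuous_Wd_prod fun k => (P k).continuous
  exact this.comp continuous_swap

/-- The fibrewise version of a family of maps. -/
def dmap (m : ι → C(Y, Z)) : C(ι × Y, ι × Z) := ⟨fun p => (p.1, dfam m p), by fun_prop⟩

lemma dmap_isHE {m : ι → C(Y, Z)} (h : ∀ k, IsHE (m k)) : IsHE (dmap m) := by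
  choose n h1 h2 using h
  refine ⟨dmap n, ?_, ?_⟩
  · have : (dfam fun k => (m k).comp (n k)).Homotopic (dfam fun _ => ContinuousMap.id Z) :=
      dfam_homotopic h1
    exact (ContinuousMap.Homotopic.refl (⟨Prod.fst, continuous_fst⟩ : C(ι × Z, ι))).prodMk this
  · have : (dfam fun k => (n k).comp (m k)).Homotopic (dfam fun _ => ContinuousMap.id Y) :=
      dfam_homotopic h2
    exact (ContinuousMap.Homotopic.refl (⟨Prod.fst, continuous_fst⟩ : C(ι × Y, ι))).prodMk this

end dfam

/-- The trivialization over the complement of the real half-lines `|σ| ≥ 2`. -/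
def trivΩ : Triv := ⟨Om, chartΩ, Fp_chartΩ⟩

namespace Triv

/-- The transition between two trivializations. -/
def change (T T' : Triv) (s : ℂ) (h : s ∈ T.U) (h' : s ∈ T'.U) : C(F₀, F₀) where
  toFun y := (T'.Φ.symm ⟨(T.Φ (⟨s, h⟩, y)).1, by
    rw [Set.mem_preimage, T.hΦ]; exact h'⟩).2
  continuous_toFun := continuous_snd.comp (T'.Φ.symm.continuous.comp
    (Continuous.subtype_mk (continuous_subtype_val.comp (T.Φ.continuous.comp (by fun_prop))) _))

lemma apply_symm_snd (T : Triv) (v : Fp ⁻¹' T.U) {s : ℂ} (h : s ∈ T.U) (hs : Fp v = s) :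
    T.Φ (⟨s, h⟩, (T.Φ.symm v).2) = v := by
  obtain ⟨w, rfl⟩ := T.Φ.surjective v
  have : (⟨s, h⟩ : T.U) = w.1 := Subtype.ext (hs.symm.trans (T.hΦ w))
  rw [Homeomorph.symm_apply_apply, this]

lemma change_change (T T' T'' : Triv) (s : ℂ) (h : s ∈ T.U) (h' : s ∈ T'.U) (h'' : s ∈ T''.U)
    (y : F₀) : change T' T'' s h' h'' (change T T' s h h' y) = change T T'' s h h'' y := by
  have hm : (T.Φ (⟨s, h⟩, y)).1 ∈ Fp ⁻¹' T'.U := by rw [Set.mem_preimage, T.hΦ]; exact h'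
  have e := T'.apply_symm_snd ⟨(T.Φ (⟨s, h⟩, y)).1, hm⟩ h' (T.hΦ _)
  simp only [change, ContinuousMap.coe_mk, e]

lemma change_self (T : Triv) (s : ℂ) (h : s ∈ T.U) (y : F₀) : change T T s h h y = y := by
  change (T.Φ.symm (T.Φ (⟨s, h⟩, y))).2 = y
  rw [Homeomorph.symm_apply_apply]

lemma change_isHE (T T' : Triv) (s : ℂ) (h : s ∈ T.U) (h' : s ∈ T'.U) :
    IsHE (change T T' s h h') := by
  refine ⟨change T' T s h' h, ?_, ?_⟩
  · have : (change T T' s h h').comp (change T' T s h' h) = ContinuousMap.id _ := by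
      ext1 y
      exact (change_change _ _ _ _ _ _ _ _).trans (change_self _ _ _ _)
    rw [this]
  · have : (change T' T s h' h).comp (change T T' s h h') = ContinuousMap.id _ := by
      ext1 y
      exact (change_change _ _ _ _ _ _ _ _).trans (change_self _ _ _ _)
    rw [this]

end Triv

section assembly

variable {M : ℝ} (hM : 2 < M) {r : ℕ} (hr : 2 ≤ r)

/-- The projection of the cut complement to the model fibre. -/
def prU (M : ℝ) (hr : 2 ≤ r) : C(Us M r, F₀) :=
  ⟨fun v => prΩ ⟨v.1.1, Cut_subset_Om hr v.2⟩, prΩ.continuous.comp (by fun_prop)⟩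

lemma Cut_ne_tip {z : ℂ} (hz : z ∈ Cut M r) : z ∉ Set.range fun k : Fin r => tip M k := by
  rintro ⟨k, hk⟩
  exact (hz k).1 hk.symm

include hM in
lemma isHE_prU : IsHE (prU (r := r) M hr) := by
  have h0 := zero_mem_Cut hM r
  let s (v : Us M r) (u : I) : Om := ⟨(u : ℝ) * Fp v.1.1, Cut_subset_Om hr (Cut_star hM v.2 u.2.1 u.2.2)⟩
  have hs (p : Om × F₀) (hp : p.1.1 ∈ Cut M r) : Fp (chartΩ p).1 ∈ Cut M r := by
    rw [Fp_chartΩ]; exact hp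
  let mk (p : Om × F₀) (hp : p.1.1 ∈ Cut M r) : Us M r :=
    ⟨⟨(chartΩ p).1, Cut_ne_tip (hs p hp)⟩, hs p hp⟩
  refine ⟨⟨fun y => mk (⟨0, Cut_subset_Om hr h0⟩, y) h0, ?_⟩, ?_, ?_⟩
  · refine Continuous.subtype_mk (Continuous.subtype_mk ?_ _) _
    exact continuous_subtype_val.comp (chartΩ.continuous.comp (by fun_prop))
  · have : (prU M hr).comp ⟨fun y => mk (⟨0, Cut_subset_Om hr h0⟩, y) h0, by
        refine Continuous.subtype_mk (Continuous.subtype_mk ?_ _) _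
        exact continuous_subtype_val.comp (chartΩ.continuous.comp (by fun_prop))⟩ =
        ContinuousMap.id _ := by
      ext1 y
      change (chartΩ.symm (chartΩ _)).2 = y
      rw [Homeomorph.symm_apply_apply]
    rw [this]
  · refine homotopic_of_fun (fun p => mk (s p.2 p.1, prU M hr p.2)
      (Cut_star hM p.2.2 p.1.2.1 p.1.2.2)) ?_ ?_ ?_
    · refine Continuous.subtype_mk (Continuous.subtype_mk ?_ _) _
      refine continuous_subtype_val.comp (chartΩ.continuous.comp ?_)
      exact (Continuous.subtype_mk (by fun_prop) _).prodMk (by fun_prop)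
    · intro v
      refine Subtype.ext (Subtype.ext ?_)
      have : s v 0 = ⟨0, Cut_subset_Om hr h0⟩ := Subtype.ext (by simp [s])
      simp only [mk, this]
      rfl
    · intro v
      refine Subtype.ext (Subtype.ext ?_)
      have : s v 1 = ⟨Fp v.1.1, Cut_subset_Om hr v.2⟩ := Subtype.ext (by simp [s])
      simp only [mk, this]
      exact congrArg Subtype.val
        (trivΩ.apply_symm_snd ⟨v.1.1, Cut_subset_Om hr v.2⟩ (Cut_subset_Om hr v.2) rfl)

include hM in
lemma sc_zero_mem_Om (hr : 2 ≤ r) (k : Fin r) : sc M k 1 ((0 : I) : ℝ) ∈ trivΩ.U :=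
  Cut_subset_Om hr ((sc_mem_Cut_iff hM k one_pos 0).2 (Or.inl rfl))

include hM in
lemma sc_one_mem_Om (hr : 2 ≤ r) (k : Fin r) : sc M k 1 ((1 : I) : ℝ) ∈ trivΩ.U :=
  Cut_subset_Om hr ((sc_mem_Cut_iff hM k one_pos 1).2 (Or.inr rfl))

include hM in
lemma sc_mem_triv (k : ℕ) (s : I) : sc M k 1 s ∈ (triv k).U :=
  sec_subset_triv hM k (sc_mem one_pos s)

/-- The standard wedge in the base of the `k`-th cylinder. -/
def baseW (k : Fin r) : C(Wd, Set.Ioi (0 : ℝ) × F₀) :=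
  (⟨fun y => (⟨1, Set.mem_Ioi.2 one_pos⟩, y), by fun_prop⟩ : C(F₀, Set.Ioi (0 : ℝ) × F₀)).comp
    ((trivΩ.change (triv k) _ (sc_zero_mem_Om hM hr k) (sc_mem_triv hM k 0)).comp j₀)

lemma baseW_isHE (k : Fin r) : IsHE (baseW hM hr k) := by
  refine IsHE.comp ?_ ((Triv.change_isHE _ _ _ _ _).comp isHE_j₀)
  refine ⟨⟨Prod.snd, continuous_snd⟩, ?_, ContinuousMap.Homotopic.refl _⟩
  refine homotopic_of_fun (fun p => (⟨(1 - p.1) * 1 + p.1 * p.2.1, ?_⟩, p.2.2)) ?_ ?_ ?_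
  · have h0 : (0 : ℝ) < p.2.1.1 := p.2.1.2
    have h1 := p.1.2.1
    have h2 := p.1.2.2
    rw [Set.mem_Ioi]
    by_cases h : (p.1 : ℝ) = 1
    · rw [h]; linarith
    · have : (p.1 : ℝ) < 1 := lt_of_le_of_ne h2 h
      nlinarith
  · exact (Continuous.subtype_mk (by fun_prop) _).prodMk (by fun_prop)
  · intro x; simp
  · intro x; simp

lemma prU_end (k : Fin r) (s : I) (hs : s = 0 ∨ s = 1) (y : F₀)
    (h : sc M k 1 (s : ℝ) ∈ trivΩ.U) :
    prU M hr (endS hM r s hs (k, (⟨1, Set.mem_Ioi.2 one_pos⟩, y))) =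
      (triv k).change trivΩ _ (sc_mem_triv hM k s) h y := rfl

/-- The loops onto which the standard generators are sent by the monodromy. -/
def twist (k : ℕ) : Fin 2 → Path (Hoc.inX _ _ () : Wd) (Hoc.inX _ _ ()) :=
  if k = 0 then tw₀ else if k = 1 then tw₁ else wl

lemma monodromy_homotopic (k : Fin r) :
    (((triv k).change trivΩ _ (sc_mem_triv hM k 1) (sc_one_mem_Om hM hr k)).comp
      ((trivΩ.change (triv k) _ (sc_zero_mem_Om hM hr k) (sc_mem_triv hM k 0)).comp j₀)).Homotopic
      (j₀.comp (wmap (twist k))) := by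
  by_cases hk : (k : ℕ) < 2
  · have key : ∀ T : Triv, T = ⟨Vm, chartV, Fp_chartV⟩ → ∀ (a0 : sc M k 1 ((0 : I) : ℝ) ∈ T.U)
        (a1 : sc M k 1 ((1 : I) : ℝ) ∈ T.U),
        ((T.change trivΩ _ a1 (sc_one_mem_Om hM hr k)).comp
          ((trivΩ.change T _ (sc_zero_mem_Om hM hr k) a0).comp j₀)).Homotopic
            (j₀.comp (wmap (twist k))) := by
      rintro _ rfl a0 a1
      let w : C(I, Vm) := ⟨fun u => ⟨sc M k 1 u, sec_subset_Vm hk (sc_mem one_pos u)⟩,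
        Continuous.subtype_mk (by fun_prop) _⟩
      have fin : ∀ τ : C(Wd, Wd),
          ((fibV (w 1)).comp (prV.comp ((inF (w 0)).comp
            ((fibΩ ⟨_, sc_zero_mem_Om hM hr k⟩).comp j₀)))).Homotopic
          (((fibΩ ⟨(w 1).1, sc_one_mem_Om hM hr k⟩).comp j₀).comp τ) →
          (((⟨Vm, chartV, Fp_chartV⟩ : Triv).change trivΩ _ a1 (sc_one_mem_Om hM hr k)).comp
          ((trivΩ.change ⟨Vm, chartV, Fp_chartV⟩ _ (sc_zero_mem_Om hM hr k) a0).comp j₀)).Homotopic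
            (j₀.comp τ) := by
        intro τ h
        have h2 := Homotopic.comp_left h
          (prΩ.comp (inF ⟨(w 1).1, sc_one_mem_Om hM hr k⟩))
        convert h2 using 1
        · rfl
        · ext1 x
          exact (trivΩ.change_self _ (sc_one_mem_Om hM hr k) (j₀ (τ x))).symm
      have hk' : (k : ℕ) = 0 ∨ (k : ℕ) = 1 := by omega
      rcases hk' with h | h
      · have e : twist k = tw₀ := by simp [twist, h]
        rw [e]
        refine fin _ (crossing_pos w (fun u => ?_) ?_ ?_ (sc_zero_mem_Om hM hr k)
          (sc_one_mem_Om hM hr k))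
        all_goals simp [w, sc, sE, sR, sM, h]
        all_goals try norm_num
      · have e : twist k = tw₁ := by simp [twist, h]
        rw [e]
        refine fin _ (crossing_neg w (fun u => ?_) ?_ ?_ (sc_zero_mem_Om hM hr k)
          (sc_one_mem_Om hM hr k))
        all_goals simp [w, sc, sE, sR, sM, h]
        all_goals try norm_num
    exact key _ (triv_lt hk) _ _
  · have key : ∀ T : Triv, T = trivΩ → ∀ (a0 : sc M k 1 ((0 : I) : ℝ) ∈ T.U)
        (a1 : sc M k 1 ((1 : I) : ℝ) ∈ T.U),
        ((T.change trivΩ _ a1 (sc_one_mem_Om hM hr k)).comp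
          ((trivΩ.change T _ (sc_zero_mem_Om hM hr k) a0).comp j₀)) = j₀ := by
      rintro _ rfl a0 a1
      ext1 x
      exact (Triv.change_self _ _ _ _).trans (Triv.change_self _ _ _ _)
    rw [key _ (triv_ge hk)]
    have e : twist k = wl := by
      rw [twist, if_neg (by omega), if_neg (by omega)]
    rw [e, wmap_wl, ContinuousMap.comp_id]

/-- The monodromies. -/
def mono (r : ℕ) : C(Fin r × Wd, Wd) := dfam fun k => wmap (twist k)

/-- The homotopy coequalizer of the monodromies: the homotopy model of the complement. -/
abbrev Qm (r : ℕ) : Type := Hoc (ContinuousMap.snd : C(Fin r × Wd, Wd)) (mono r)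

include hM hr in
/-- The complement of the fibres over the tips is homotopy equivalent to the homotopy coequalizer
of the monodromies. -/
theorem Xs_equiv_Qm : Nonempty (ContinuousMap.HomotopyEquiv (Xs M r) (Qm r)) := by
  obtain ⟨m, hm⟩ := exists_isHE_Xs hM r
  obtain ⟨ρ, h1, h2⟩ := isHE_j₀
  have hρ : IsHE ρ := ⟨j₀, h2, h1⟩
  let P : C(Us M r, Wd) := ρ.comp (prU M hr)
  have hP : IsHE P := hρ.comp (isHE_prU hM hr)
  let e : C(Fin r × Wd, As r) := dmap (baseW hM hr)
  have he : IsHE e := dmap_isHE (baseW_isHE hM hr)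
  have a0 : ((P.comp (endS hM r 0 (Or.inl rfl))).comp e).Homotopic
      (ContinuousMap.snd : C(Fin r × Wd, Wd)) := by
    refine dfam_homotopic (m := fun k => ρ.comp ((prU M hr).comp
      ((endS hM r 0 (Or.inl rfl)).comp ⟨fun x => e (k, x), by fun_prop⟩)))
      (n := fun _ => ContinuousMap.id _) fun k => ?_
    refine ContinuousMap.Homotopic.trans ?_ h2
    refine Homotopic.comp_left ?_ ρ
    convert ContinuousMap.Homotopic.refl j₀
    ext1 x
    refine (prU_end hM hr k 0 (Or.inl rfl) _ (sc_zero_mem_Om hM hr k)).trans ?_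
    exact (Triv.change_change _ _ _ _ _ _ _ _).trans (Triv.change_self _ _ _ _)
  have a1 : ((P.comp (endS hM r 1 (Or.inr rfl))).comp e).Homotopic (mono r) := by
    refine dfam_homotopic (m := fun k => ρ.comp ((prU M hr).comp
      ((endS hM r 1 (Or.inr rfl)).comp ⟨fun x => e (k, x), by fun_prop⟩)))
      (n := fun k => wmap (twist k)) fun k => ?_
    refine ContinuousMap.Homotopic.trans ?_ (Homotopic.comp_right h2 (wmap (twist k)))
    exact Homotopic.comp_left (monodromy_homotopic hM hr k) ρ
  obtain ⟨n, hn, -⟩ := Hoc.exists_isHE_of_homotopic a0 a1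
  obtain ⟨E₁⟩ := hm.nonempty_homotopyEquiv
  obtain ⟨E₂⟩ := (Hoc.isHE_post (endS hM r 0 (Or.inl rfl)) (endS hM r 1 (Or.inr rfl)) P
    hP).nonempty_homotopyEquiv
  obtain ⟨E₃⟩ := (Hoc.isHE_pre (P.comp (endS hM r 0 (Or.inl rfl)))
    (P.comp (endS hM r 1 (Or.inr rfl))) e he).nonempty_homotopyEquiv
  obtain ⟨E₄⟩ := hn.nonempty_homotopyEquiv
  exact ⟨E₁.symm.trans (E₂.trans (E₃.symm.trans E₄.symm))⟩

end assembly

/-! ### Normalization of the atypical values -/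

/-- The complement of the fibres of `x³ + x² - y²` over the points `lam k`. -/
abbrev Cp {r : ℕ} (lam : Fin r → ℂ) : Type :=
  ↥((fun v : ℂ × ℂ => v.1 ^ 3 + v.1 ^ 2 - v.2 ^ 2) ⁻¹' (Set.range lam))ᶜ

/-- The affine change of coordinates bringing the pencil to the form `w³ - 3w - Y²`. -/
def affineHomeo : ℂ × ℂ ≃ₜ ℂ × ℂ where
  toFun v := (3 * v.1 + 1, (Real.sqrt 27 : ℝ) * v.2)
  invFun v := ((v.1 - 1) / 3, v.2 / (Real.sqrt 27 : ℝ))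
  left_inv v := by
    have : ((Real.sqrt 27 : ℝ) : ℂ) ≠ 0 := by
      rw [Complex.ofReal_ne_zero]; positivity
    refine Prod.ext ?_ ?_ <;> simp only <;> field_simp
    ring
  right_inv v := by
    have : ((Real.sqrt 27 : ℝ) : ℂ) ≠ 0 := by
      rw [Complex.ofReal_ne_zero]; positivity
    refine Prod.ext ?_ ?_ <;> simp only <;> field_simp
    ring
  continuous_toFun := by fun_prop
  continuous_invFun := by fun_prop

lemma Fp_affineHomeo (v : ℂ × ℂ) :
    Fp (affineHomeo v) = 27 * (v.1 ^ 3 + v.1 ^ 2 - v.2 ^ 2) - 2 := by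
  have : ((Real.sqrt 27 : ℝ) : ℂ) ^ 2 = 27 := by
    rw [← Complex.ofReal_pow, Real.sq_sqrt (by norm_num)]; norm_num
  change (3 * v.1 + 1) ^ 3 - 3 * (3 * v.1 + 1) - ((Real.sqrt 27 : ℝ) * v.2) ^ 2 = _
  linear_combination (-v.2 ^ 2) * this

lemma Cp_homeo {r : ℕ} (lam : Fin r → ℂ) :
    Nonempty (Cp lam ≃ₜ Xc (Set.range fun k => 27 * lam k - 2)) := by
  refine ⟨affineHomeo.subtype fun v => not_congr ?_⟩
  rw [Fp_affineHomeo]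
  constructor
  · rintro ⟨k, e⟩; exact ⟨k, by simp only; rw [e]⟩
  · rintro ⟨k, e⟩
    refine ⟨k, ?_⟩
    simp only at e ⊢
    linear_combination e / 27

lemma tip_injective {M : ℝ} (hM : 2 < M) (r : ℕ) : Function.Injective fun k : Fin r => tip M k := by
  intro k j h
  simp only at h
  refine Fin.ext (sector_disjoint hM (z := tip M k) ?_ ?_)
  · rw [sx_tip, sy_tip]; simp
  · rw [h, sx_tip, sy_tip]; simp

/-- The complement is homotopy equivalent to the homotopy coequalizer of the monodromies. -/
theorem Cp_equiv_Qm {r : ℕ} (hr : 2 ≤ r) (h0 : 0 < r) (h1 : 1 < r) (lam : Fin r → ℂ)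
    (hinj : Function.Injective lam) (hlam0 : lam ⟨0, h0⟩ = 4 / 27) (hlam1 : lam ⟨1, h1⟩ = 0) :
    Nonempty (ContinuousMap.HomotopyEquiv (Cp lam) (Qm r)) := by
  obtain ⟨e⟩ := Cp_homeo lam
  set l : Fin r → ℂ := fun k => 27 * lam k - 2 with hl
  have hli : l.Injective := fun j k h => hinj (by simp only [hl] at h; linear_combination h / 27)
  obtain ⟨M, hM, hM'⟩ : ∃ M : ℝ, 2 < M ∧ ∀ k, ‖l k‖ < M := by
    refine ⟨3 + ∑ k, ‖l k‖, ?_, fun k => ?_⟩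
    · have := Finset.sum_nonneg fun k (_ : k ∈ Finset.univ) => norm_nonneg (l k)
      linarith
    · have := Finset.single_le_sum (fun k _ => norm_nonneg (l k)) (Finset.mem_univ k)
      linarith
  have l0 : l ⟨0, h0⟩ = 2 := by simp only [hl, hlam0]; norm_num
  have l1 : l ⟨1, h1⟩ = -2 := by simp only [hl, hlam1]; norm_num
  have t0 : tip M 0 = 2 := Complex.ext (by simp [tip, sE, sR]) (by simp [tip, sM])
  have t1 : tip M 1 = -2 := Complex.ext (by simp [tip, sE, sR]) (by simp [tip, sM])
  obtain ⟨e'⟩ := (mv_of_disjoint l (fun k : Fin r => tip M k) hli (tip_injective hM r) l0 l1 t0 t1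
    (fun j k hj0 hj1 h => by
      by_cases h0 : (k : ℕ) = 0
      · rw [h0, t0, ← l0] at h; exact hj0 (hli h)
      by_cases h1 : (k : ℕ) = 1
      · rw [h1, t1, ← l1] at h; exact hj1 (hli h)
      have h2 : ¬ (k : ℕ) < 2 := by omega
      have h3 := (Complex.re_le_norm (l j)).trans_lt (hM' j)
      rw [h] at h3
      simp [tip, sE, sR, h1, h2] at h3)).homeo
  obtain ⟨E⟩ := Xs_equiv_Qm hM hr
  exact ⟨(e.trans e').toHomotopyEquiv.trans E⟩

/-! ### Attaching two-cells -/

section cells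

variable {W ρ Z Z' : Type} [TopologicalSpace W] [TopologicalSpace Z] [TopologicalSpace Z']

/-- The 2-cells are parametrized as cones over loops: `c j (t, s)` is the point at height `s` of
the cone over the point of the boundary loop with parameter `t`. -/
structure Compat (φ : ρ → I → W) (w : C(W, Z)) (c : ρ → C(I × I, Z)) : Prop where
  bdry : ∀ j t, c j (t, 0) = w (φ j t)
  side : ∀ j s, c j (0, s) = c j (1, s)
  tip : ∀ j t t', c j (t, 1) = c j (t', 1)

/-- `Z` is obtained from `W` by attaching 2-cells along the loops `φ j`: universal property. -/
structure IsCell (φ : ρ → I → W) (w : C(W, Z)) (c : ρ → C(I × I, Z)) : Prop where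
  compat : Compat φ w c
  cover : ∀ z, (∃ x, w x = z) ∨ ∃ j p, c j p = z
  desc : ∀ (Y : Type) [TopologicalSpace Y] (w' : C(W, Y)) (c' : ρ → C(I × I, Y)),
    Compat φ w' c' → ∃ m : C(Z, Y), (∀ x, m (w x) = w' x) ∧ ∀ j p, m (c j p) = c' j p

/-- Two parameters giving the same point of a cone over a circle. -/
def ConeRel (p p' : I × I) : Prop :=
  p.2 = p'.2 ∧ (p.2 = 1 ∨ p.1 = p'.1 ∨ (p.1 = 0 ∧ p'.1 = 1) ∨ (p.1 = 1 ∧ p'.1 = 0))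

lemma Compat.eq_of_coneRel {φ : ρ → I → W} {w : C(W, Z)} {c : ρ → C(I × I, Z)}
    (h : Compat φ w c) (j : ρ) {p p' : I × I} (hp : ConeRel p p') : c j p = c j p' := by
  obtain ⟨t, s⟩ := p
  obtain ⟨t', s'⟩ := p'
  obtain ⟨h1, h2⟩ := hp
  simp only at h1 h2
  subst h1
  rcases h2 with rfl | rfl | ⟨rfl, rfl⟩ | ⟨rfl, rfl⟩
  · exact h.tip j _ _
  · rfl
  · exact h.side j _
  · exact (h.side j _).symm

lemma IsCell.homotopyEquiv {φ : ρ → I → W} {w : C(W, Z)} {c : ρ → C(I × I, Z)}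
    (h : IsCell φ w c) {w' : C(W, Z')} {c' : ρ → C(I × I, Z')} (h' : IsCell φ w' c') :
    Nonempty (ContinuousMap.HomotopyEquiv Z Z') := by
  obtain ⟨m, m1, m2⟩ := h.desc Z' w' c' h'.compat
  obtain ⟨n, n1, n2⟩ := h'.desc Z w c h.compat
  have e1 : n.comp m = ContinuousMap.id Z := by
    ext z
    rcases h.cover z with ⟨x, rfl⟩ | ⟨j, p, rfl⟩
    · simp [m1, n1]
    · simp [m2, n2]
  have e2 : m.comp n = ContinuousMap.id Z' := by
    ext z
    rcases h'.cover z with ⟨x, rfl⟩ | ⟨j, p, rfl⟩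
    · simp [m1, n1]
    · simp [m2, n2]
  exact ⟨⟨m, n, by rw [e1], by rw [e2]⟩⟩

/-- Descending a map along a surjection of a compact space onto a Hausdorff space. -/
lemma exists_desc_of_surjective {P D : Type} [TopologicalSpace P] [CompactSpace P]
    [TopologicalSpace D] [T2Space D] (K : C(P, D)) (hK : Function.Surjective K) (c : C(P, Z))
    (h : ∀ p p', K p = K p' → c p = c p') : ∃ m : C(D, Z), ∀ p, m (K p) = c p := by
  have hq : Topology.IsQuotientMap K :=
    (Topology.IsQuotientMap.of_surjective_continuous hK K.continuous)
  choose g hg using hK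
  have e : ∀ p, c (g (K p)) = c p := fun p => h _ _ (hg _)
  refine ⟨⟨fun d => c (g d), ?_⟩, e⟩
  rw [hq.continuous_iff]
  exact c.continuous.congr fun p => (e p).symm

end cells

/-! ### The presentation complex -/

/-- Polar coordinates on the disk. -/
def polar : C(I × I, Metric.closedBall (0 : ℂ) 1) where
  toFun p := ⟨((1 - p.2 : ℝ) : ℂ) * Complex.exp ((2 * Real.pi * p.1 : ℝ) * Complex.I), by
    rw [mem_closedBall_zero_iff, norm_mul, Complex.norm_exp_ofReal_mul_I, Complex.norm_real,
      Real.norm_eq_abs, abs_of_nonneg (by linarith [p.2.2.2])]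
    linarith [p.2.2.1]⟩
  continuous_toFun := by fun_prop

lemma norm_polar (p : I × I) : ‖(polar p : ℂ)‖ = 1 - p.2 := by
  change ‖((1 - p.2 : ℝ) : ℂ) * Complex.exp ((2 * Real.pi * p.1 : ℝ) * Complex.I)‖ = _
  rw [norm_mul, Complex.norm_exp_ofReal_mul_I, Complex.norm_real,
      Real.norm_eq_abs, abs_of_nonneg (by linarith [p.2.2.2]), mul_one]

lemma polar_coneRel {p p' : I × I} (h : polar p = polar p') : ConeRel p p' := by
  have hn := congrArg (fun z : Metric.closedBall (0 : ℂ) 1 => ‖(z : ℂ)‖) h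
  simp only [norm_polar] at hn
  have hs : p.2 = p'.2 := Subtype.ext (by linarith)
  refine ⟨hs, ?_⟩
  by_cases h1 : p.2 = 1
  · exact Or.inl h1
  right
  have hv : ((1 - p.2 : ℝ) : ℂ) * Complex.exp ((2 * Real.pi * p.1 : ℝ) * Complex.I) =
    ((1 - p'.2 : ℝ) : ℂ) * Complex.exp ((2 * Real.pi * p'.1 : ℝ) * Complex.I) :=
    congrArg Subtype.val h
  rw [← hs] at hv
  have h2 : ((1 - p.2 : ℝ) : ℂ) ≠ 0 := by
    rw [Complex.ofReal_ne_zero]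
    intro h3
    exact h1 (Subtype.ext (by rw [Set.Icc.coe_one]; linarith))
  obtain ⟨n, hn⟩ := Complex.exp_eq_exp_iff_exists_int.1 (mul_left_cancel₀ h2 hv)
  have hr : (p.1 : ℝ) = p'.1 + n := by
    have h3 : ((2 * Real.pi * p.1 : ℝ) : ℂ) * Complex.I =
      ((2 * Real.pi * (p'.1 + n) : ℝ) : ℂ) * Complex.I := by
      rw [hn]; push_cast; ring
    have h4 := Complex.ofReal_injective (mul_right_cancel₀ Complex.I_ne_zero h3)
    exact mul_left_cancel₀ (by positivity) h4
  have a1 := p.1.2.1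
  have a2 := p.1.2.2
  have b1 := p'.1.2.1
  have b2 := p'.1.2.2
  have c1 : (n : ℝ) ≤ 1 := by linarith
  have c2 : (-1 : ℝ) ≤ n := by linarith
  have d1 : n ≤ 1 := by exact_mod_cast c1
  have d2 : -1 ≤ n := by exact_mod_cast c2
  have : n = -1 ∨ n = 0 ∨ n = 1 := by omega
  rcases this with rfl | rfl | rfl <;> push_cast at hr
  · exact Or.inr (Or.inl ⟨Subtype.ext (by rw [Set.Icc.coe_zero]; linarith),
      Subtype.ext (by rw [Set.Icc.coe_one]; linarith)⟩)
  · exact Or.inl (Subtype.ext (by linarith))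
  · exact Or.inr (Or.inr ⟨Subtype.ext (by rw [Set.Icc.coe_one]; linarith),
      Subtype.ext (by rw [Set.Icc.coe_zero]; linarith)⟩)

/-- The height of a point of the disk in the cone structure. -/
def coneHeight (z : Metric.closedBall (0 : ℂ) 1) : I :=
  ⟨1 - ‖(z : ℂ)‖, by linarith [mem_closedBall_zero_iff.1 z.2], by linarith [norm_nonneg (z : ℂ)]⟩

lemma polar_discAngle (z : Metric.closedBall (0 : ℂ) 1) : polar (discAngle z, coneHeight z) = z := by
  refine Subtype.ext ?_
  change ((1 - (1 - ‖(z : ℂ)‖) : ℝ) : ℂ) * Complex.exp ((2 * Real.pi *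
    Int.fract (Complex.arg z / (2 * Real.pi)) : ℝ) * Complex.I) = z
  have : ((2 * Real.pi * Int.fract (Complex.arg z / (2 * Real.pi)) : ℝ) : ℂ) * Complex.I =
      Complex.arg z * Complex.I - (⌊Complex.arg z / (2 * Real.pi)⌋ : ℤ) *
        (2 * Real.pi * Complex.I) := by
    rw [Int.fract]
    push_cast
    have : (Real.pi : ℂ) ≠ 0 := by exact_mod_cast Real.pi_ne_zero
    field_simp
  rw [this, Complex.exp_sub, Complex.exp_int_mul_two_pi_mul_I, div_one, sub_sub_cancel,
    Complex.norm_mul_exp_arg_mul_I]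

lemma polar_surjective : Function.Surjective polar := fun z => ⟨_, polar_discAngle z⟩

section presentation

variable {α ρ : Type} [DecidableEq α] (rel : ρ → FreeGroup α)

/-- The inclusion of the 1-skeleton. -/
def pcW : C(WedgeGraph α, PresentationComplex rel) :=
  ⟨fun x => Quot.mk _ (Sum.inl x), continuous_quot_mk.comp continuous_inl⟩

/-- The 2-cells in polar coordinates. -/
def pcC (j : ρ) : C(I × I, PresentationComplex rel) :=
  ⟨fun p => Quot.mk _ (Sum.inr ⟨j, polar p⟩),
    continuous_quot_mk.comp (continuous_inr.comp (continuous_sigmaMk.comp polar.continuous))⟩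

lemma pcC_congr (j : ρ) {p p' : I × I} (h : polar p = polar p') : pcC rel j p = pcC rel j p' :=
  congrArg (fun z => (Quot.mk _ (Sum.inr ⟨j, z⟩) : PresentationComplex rel)) h

lemma isCell_presentationComplex :
    IsCell (fun j t => wordPath (rel j) t) (pcW rel) (pcC rel) := by
  refine ⟨⟨fun j t => ?_, fun j s => ?_, fun j t t' => ?_⟩, fun z => ?_, fun Y _ w' c' h => ?_⟩
  · have hn : ‖(polar (t, 0) : ℂ)‖ = 1 := by rw [norm_polar]; simp
    have e : (pcC rel j (t, 0)) = pcW rel (wordPath (rel j) (discAngle (polar (t, 0)))) :=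
      Quot.sound ⟨j, _, hn, rfl, rfl⟩
    rw [e]
    obtain ⟨-, h⟩ := polar_coneRel (polar_discAngle (polar (t, 0)))
    rcases h with h | h | ⟨h, rfl⟩ | ⟨h, rfl⟩
    · have : (1 : ℝ) - ‖(polar (t, 0) : ℂ)‖ = 1 := congrArg Subtype.val h
      rw [hn] at this; norm_num at this
    · have h' : discAngle _ = t := h
      rw [h']
    · have h' : discAngle _ = 0 := h
      rw [h']; simp
    · have h' : discAngle _ = 1 := h
      rw [h']; simp
  · refine pcC_congr rel j (Subtype.ext ?_)
    change _ * Complex.exp ((2 * Real.pi * 0 : ℝ) * Complex.I) =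
      _ * Complex.exp ((2 * Real.pi * 1 : ℝ) * Complex.I)
    simp
  · refine pcC_congr rel j (Subtype.ext ?_)
    simp [polar]
  · induction z using Quot.ind with
    | mk x =>
      rcases x with x | ⟨j, z⟩
      · exact Or.inl ⟨x, rfl⟩
      · obtain ⟨p, rfl⟩ := polar_surjective z
        exact Or.inr ⟨j, p, rfl⟩
  · choose D hD using fun j => exists_desc_of_surjective polar polar_surjective (c' j)
      fun p p' hp => h.eq_of_coneRel j (polar_coneRel hp)
    refine ⟨⟨Quot.lift (Sum.elim w' fun x => D x.1 x.2) ?_, ?_⟩, fun x => rfl, fun j p => hD j p⟩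
    · rintro _ _ ⟨j, z, hz, rfl, rfl⟩
      have := hD j (discAngle z, coneHeight z)
      rw [polar_discAngle] at this
      have e : coneHeight z = 0 := Subtype.ext (by simp [coneHeight, hz])
      rw [e, h.bdry] at this
      exact this
    · refine continuous_quot_lift _ (continuous_sum_dom.2 ⟨w'.continuous, ?_⟩)
      exact continuous_sigma fun j => (D j).continuous

end presentation

/-! ### Homotopy invariance of cell attachments -/

/-- The circle. -/
abbrev S1 : Type := Hoc (fun _ : Unit => ()) (fun _ => ())

section circle

variable {W : Type} [TopologicalSpace W] {z : W}

/-- The map of the circle given by a loop. -/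
def lpm (p : Path z z) : C(S1, W) :=
  Hoc.desc (fun _ => z) (fun q => p q.2) continuous_const (by fun_prop) (by simp) (by simp)

lemma lpm_homotopic {p q : Path z z} (h : p.Homotopic q) : (lpm p).Homotopic (lpm q) := by
  have F : p.Homotopy q := h.some
  refine Hoc.homotopic_of (fun _ => z) (fun x => F (x.2, x.1.2)) continuous_const (by fun_prop)
    ?_ ?_ ?_ ?_ ?_ ?_
  all_goals simp [lpm]

end circle

section cel

variable {W ρ : Type} [TopologicalSpace W] [TopologicalSpace ρ] [DiscreteTopology ρ] {z : W}

/-- The attaching maps of the cells. -/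
def celF (φ : ρ → Path z z) : C(ρ × S1, W ⊕ ρ) :=
  dfam fun j => (⟨Sum.inl, continuous_inl⟩ : C(W, W ⊕ ρ)).comp (lpm (φ j))

/-- The maps contracting the boundary circles of the cells to their centres. -/
def celG (W ρ : Type) [TopologicalSpace W] [TopologicalSpace ρ] : C(ρ × S1, W ⊕ ρ) :=
  ⟨fun p => Sum.inr p.1, by fun_prop⟩

/-- The space obtained from `W` by attaching cones along loops. -/
abbrev Cel (φ : ρ → Path z z) : Type := Hoc (celF φ) (celG W ρ)

lemma isCell_Cel (φ : ρ → Path z z) : IsCell (fun j t => φ j t)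
    (⟨fun x => Hoc.inX _ _ (Sum.inl x), by fun_prop⟩ : C(W, Cel φ))
    (fun j => (⟨fun p => Hoc.cyl _ _ ((j, Hoc.cyl _ _ ((), p.1)), p.2), by fun_prop⟩ :
      C(I × I, Cel φ))) := by
  refine ⟨⟨fun j t => ?_, fun j s => ?_, fun j t t' => ?_⟩, fun x => ?_, fun Y _ w' c' h => ?_⟩
  · exact Hoc.cyl_zero _ _ _
  · simp
  · exact (Hoc.cyl_one _ _ _).trans (Hoc.cyl_one (celF φ) (celG W ρ)
      (j, Hoc.cyl _ _ ((), t'))).symm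
  · induction x using Hoc.ind with
    | hX x =>
      rcases x with x | j
      · exact Or.inl ⟨x, rfl⟩
      · exact Or.inr ⟨j, (0, 1), Hoc.cyl_one _ _ _⟩
    | hA a s =>
      obtain ⟨j, y⟩ := a
      induction y using Hoc.ind with
      | hX x => exact Or.inr ⟨j, (0, s), by simp⟩
      | hA a t => exact Or.inr ⟨j, (t, s), rfl⟩
  · let D (j : ρ) : C(S1, C(I, Y)) := Hoc.desc (fun _ => (c' j).curry 0) (fun q => (c' j).curry q.2)
      continuous_const (by fun_prop) (fun _ => rfl)
      (fun _ => by ext s; exact (h.side j s).symm)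
    have hD (j : ρ) : Continuous fun x : S1 × I => D j x.1 x.2 := by fun_prop
    refine ⟨Hoc.desc (Sum.elim w' fun j => c' j (0, 1)) (fun x => D x.1.1 x.1.2 x.2)
      (w'.continuous.sumElim continuous_of_discreteTopology) (continuous_Wd_prod hD) ?_ ?_,
      fun x => rfl, fun j p => rfl⟩
    · rintro ⟨j, y⟩
      induction y using Hoc.ind with
      | hX x =>
        refine (h.bdry j 0).trans ?_
        rw [(φ j).source]
        rfl
      | hA a t => exact h.bdry j t
    · rintro ⟨j, y⟩
      induction y using Hoc.ind with
      | hX x => rfl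
      | hA a t => exact h.tip j t 0

lemma Cel_equiv {φ ψ : ρ → Path z z} (h : ∀ j, (φ j).Homotopic (ψ j)) :
    Nonempty (ContinuousMap.HomotopyEquiv (Cel φ) (Cel ψ)) := by
  have : (celF ψ).Homotopic (celF φ) := dfam_homotopic fun j =>
    Homotopic.comp_left (lpm_homotopic (h j).symm) _
  obtain ⟨m, hm, -⟩ := Hoc.exists_isHE_of_homotopic this (ContinuousMap.Homotopic.refl (celG W ρ))
  exact hm.nonempty_homotopyEquiv

/-- Spaces obtained by attaching cells along homotopic loops are homotopy equivalent. -/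
theorem IsCell.homotopyEquiv_of_homotopic {Z Z' : Type} [TopologicalSpace Z] [TopologicalSpace Z']
    {φ ψ : ρ → Path z z} (hφ : ∀ j, (φ j).Homotopic (ψ j)) {w : C(W, Z)} {c : ρ → C(I × I, Z)}
    (h : IsCell (fun j t => φ j t) w c) {w' : C(W, Z')} {c' : ρ → C(I × I, Z')}
    (h' : IsCell (fun j t => ψ j t) w' c') : Nonempty (ContinuousMap.HomotopyEquiv Z Z') := by
  obtain ⟨e₁⟩ := h.homotopyEquiv (isCell_Cel φ)
  obtain ⟨e₂⟩ := Cel_equiv hφ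
  obtain ⟨e₃⟩ := (isCell_Cel ψ).homotopyEquiv h'
  exact ⟨e₁.trans (e₂.trans e₃)⟩

end cel

/-! ### Words in a wedge of circles -/

section words

variable {α : Type}

/-- The map out of a wedge of circles given by a family of loops. -/
def WedgeGraph.desc {Z : Type} [TopologicalSpace Z] {z : Z} (p : α → Path z z) :
    C(WedgeGraph α, Z) where
  toFun := Quot.lift (Sum.elim (fun x => p x.1 x.2) fun _ => z) (by
    rintro _ _ (a | a) <;> simp)
  continuous_toFun := continuous_quot_lift _
    ((continuous_sigma fun a => (p a).continuous).sumElim continuous_const)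

@[simp] lemma WedgeGraph.desc_loop {Z : Type} [TopologicalSpace Z] {z : Z} (p : α → Path z z)
    (a : α) (t : I) : WedgeGraph.desc p (WedgeGraph.loop a t) = p a t := rfl

lemma WedgeGraph.loop_surj (x : WedgeGraph α) :
    x = WedgeGraph.pt α ∨ ∃ a t, x = WedgeGraph.loop a t := by
  induction x using Quot.ind with
  | mk x =>
    rcases x with ⟨a, t⟩ | _
    · exact Or.inr ⟨a, t, rfl⟩
    · exact Or.inl rfl

variable [DecidableEq α] {X : Type} [TopologicalSpace X] {x : X}

/-- The group of homotopy classes of loops with the product in the order of concatenation. -/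
abbrev Lg (X : Type) [TopologicalSpace X] (x : X) : Type := (FundamentalGroup X x)ᵐᵒᵖ

/-- The class of a loop. -/
def Lg.mk (p : Path x x) : Lg X x := MulOpposite.op (FundamentalGroup.fromPath (Path.Homotopic.Quotient.mk p))

@[simp] lemma Lg.mk_trans (p q : Path x x) : Lg.mk (p.trans q) = Lg.mk p * Lg.mk q := rfl

@[simp] lemma Lg.mk_symm (p : Path x x) : Lg.mk p.symm = (Lg.mk p)⁻¹ := rfl

@[simp] lemma Lg.mk_refl : Lg.mk (Path.refl x) = 1 := rfl

lemma Lg.mk_eq {p q : Path x x} : Lg.mk p = Lg.mk q ↔ p.Homotopic q := by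
  rw [Lg.mk, Lg.mk, MulOpposite.op_inj]
  exact Path.Homotopic.Quotient.eq

lemma Lg.ind {P : Lg X x → Prop} (h : ∀ p, P (Lg.mk p)) (g : Lg X x) : P g := by
  induction g using MulOpposite.rec' with
  | _ g =>
    induction g using Path.Homotopic.Quotient.ind with
    | _ p => exact h p

/-- The induced homomorphism. -/
def Lg.map {Y : Type} [TopologicalSpace Y] (f : C(X, Y)) (x : X) : Lg X x →* Lg Y (f x) :=
  (FundamentalGroup.map f x).op

@[simp] lemma Lg.map_mk {Y : Type} [TopologicalSpace Y] (f : C(X, Y)) (p : Path x x) :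
    Lg.map f x (Lg.mk p) = Lg.mk (p.map f.continuous) := rfl

/-- The class of the loop spelled by a word, as a homomorphism. -/
def wordHom (α : Type) : FreeGroup α →* Lg (WedgeGraph α) (WedgeGraph.pt α) :=
  FreeGroup.lift fun a => Lg.mk (WedgeGraph.loop a)

lemma mk_wordPath (u : FreeGroup α) : Lg.mk (wordPath u) = wordHom α u := by
  have key : ∀ (L : List (α × Bool)) (p : Path (WedgeGraph.pt α) (WedgeGraph.pt α)),
      Lg.mk (L.foldl (fun p x => p.trans (if x.2 then WedgeGraph.loop x.1
        else (WedgeGraph.loop x.1).symm)) p) = Lg.mk p * wordHom α (FreeGroup.mk L) := by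
    intro L
    induction L with
    | nil => intro p; rw [← FreeGroup.one_eq_mk]; simp
    | cons x L ih =>
      intro p
      rw [List.foldl_cons, ih, Lg.mk_trans, mul_assoc]
      congr 1
      rcases x with ⟨a, b⟩
      cases b <;> simp [wordHom]
  rw [wordPath, key, FreeGroup.mk_toWord, Lg.mk_refl, one_mul]

end words

/-! ### The square as a cone over its boundary -/

/-- The boundary of the unit square, traversed from `(0, 1)` along the left, lower, right and upper
sides, at the times `0, 1/8, 1/4, 1/2, 1` of a fourfold concatenation bracketed to the left. -/
def bsq (t : I) : I × I :=
  (clampI (min (8 * t - 1) (2 - 2 * t)), clampI (max (1 - 8 * t) (4 * t - 1)))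

lemma bsq_cases (t : I) :
    ((t : ℝ) ≤ 1 / 8 ∧ ((bsq t).1 : ℝ) = 0 ∧ ((bsq t).2 : ℝ) = 1 - 8 * t) ∨
    (1 / 8 ≤ (t : ℝ) ∧ (t : ℝ) ≤ 1 / 4 ∧ ((bsq t).1 : ℝ) = 8 * t - 1 ∧ ((bsq t).2 : ℝ) = 0) ∨
    (1 / 4 ≤ (t : ℝ) ∧ (t : ℝ) ≤ 1 / 2 ∧ ((bsq t).1 : ℝ) = 1 ∧ ((bsq t).2 : ℝ) = 4 * t - 1) ∨
    (1 / 2 ≤ (t : ℝ) ∧ ((bsq t).1 : ℝ) = 2 - 2 * t ∧ ((bsq t).2 : ℝ) = 1) := by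
  have h0 := t.2.1
  have h1 := t.2.2
  simp only [bsq, clampI_val']
  rcases le_total (t : ℝ) (1 / 8) with h | h
  · left
    refine ⟨h, ?_, ?_⟩
    · rw [min_eq_left (by linarith : 8 * (t : ℝ) - 1 ≤ 2 - 2 * t), min_eq_right (by linarith),
        max_eq_left (by linarith)]
    · rw [max_eq_left (by linarith : 4 * (t : ℝ) - 1 ≤ 1 - 8 * t), min_eq_right (by linarith),
        max_eq_right (by linarith)]
  right
  rcases le_total (t : ℝ) (1 / 4) with h' | h'
  · left
    refine ⟨h, h', ?_, ?_⟩
    · rw [min_eq_left (by linarith : 8 * (t : ℝ) - 1 ≤ 2 - 2 * t), min_eq_right (by linarith),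
        max_eq_right (by linarith)]
    · refine max_eq_left ((min_le_right _ _).trans (max_le (by linarith) (by linarith)))
  right
  rcases le_total (t : ℝ) (1 / 2) with h2 | h2
  · left
    refine ⟨h', h2, ?_, ?_⟩
    · rw [min_eq_left (le_min (by linarith) (by linarith)), max_eq_right zero_le_one]
    · rw [max_eq_right (by linarith : 1 - 8 * (t : ℝ) ≤ 4 * t - 1), min_eq_right (by linarith),
        max_eq_right (by linarith)]
  · right
    refine ⟨h2, ?_, ?_⟩
    · rw [min_eq_right (by linarith : 2 - 2 * (t : ℝ) ≤ 8 * t - 1), min_eq_right (by linarith),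
        max_eq_right (by linarith)]
    · rw [max_eq_right (by linarith : 1 - 8 * (t : ℝ) ≤ 4 * t - 1), min_eq_left (by linarith),
        max_eq_right (by linarith)]

lemma bsq_inj {t t' : I} (h : bsq t = bsq t') :
    t = t' ∨ (t = 0 ∧ t' = 1) ∨ (t = 1 ∧ t' = 0) := by
  have e1 : ((bsq t).1 : ℝ) = (bsq t').1 := by rw [h]
  have e2 : ((bsq t).2 : ℝ) = (bsq t').2 := by rw [h]
  have key : (t : ℝ) = t' ∨ ((t : ℝ) = 0 ∧ (t' : ℝ) = 1) ∨ ((t : ℝ) = 1 ∧ (t' : ℝ) = 0) := by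
    have a0 := t.2.1
    have a1 := t.2.2
    have b0 := t'.2.1
    have b1 := t'.2.2
    rcases bsq_cases t with h | h | h | h <;> rcases bsq_cases t' with h' | h' | h' | h' <;>
      first
      | (left; linarith)
      | (right; left; constructor <;> linarith)
      | (right; right; constructor <;> linarith)
  rcases key with h | ⟨h, h'⟩ | ⟨h, h'⟩
  · exact Or.inl (Subtype.ext h)
  · exact Or.inr (Or.inl ⟨Subtype.ext h, Subtype.ext h'⟩)
  · exact Or.inr (Or.inr ⟨Subtype.ext h, Subtype.ext h'⟩)

lemma bsq_bdry (t : I) : |((bsq t).1 : ℝ) - 1 / 2| ⊔ |((bsq t).2 : ℝ) - 1 / 2| = 1 / 2 := by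
  have a := (bsq t).1.2
  have b := (bsq t).2.2
  have ha : |((bsq t).1 : ℝ) - 1 / 2| ≤ 1 / 2 := abs_le.2 ⟨by linarith [a.1], by linarith [a.2]⟩
  have hb : |((bsq t).2 : ℝ) - 1 / 2| ≤ 1 / 2 := abs_le.2 ⟨by linarith [b.1], by linarith [b.2]⟩
  refine le_antisymm (max_le ha hb) ?_
  rcases bsq_cases t with h | h | h | h
  · exact le_max_of_le_left (by rw [h.2.1]; norm_num)
  · exact le_max_of_le_right (by rw [h.2.2.2]; norm_num)
  · exact le_max_of_le_left (by rw [h.2.2.1]; norm_num)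
  · exact le_max_of_le_right (by rw [h.2.2]; norm_num)

/-- The time at which `bsq` passes through a boundary point. -/
lemma bsq_left (y : I) : bsq (clampI ((1 - y) / 8)) = (0, y) := by
  have h0 := y.2.1
  have h1 := y.2.2
  have ht : (clampI ((1 - y) / 8) : ℝ) = (1 - y) / 8 := clampI_val (by linarith) (by linarith)
  refine Prod.ext (Subtype.ext ?_) (Subtype.ext ?_) <;>
    simp only [Set.Icc.coe_zero] <;>
    rcases bsq_cases (clampI ((1 - y) / 8)) with h | h | h | h <;> linarith

lemma bsq_lower (x : I) : bsq (clampI ((1 + x) / 8)) = (x, 0) := by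
  have h0 := x.2.1
  have h1 := x.2.2
  have ht : (clampI ((1 + x) / 8) : ℝ) = (1 + x) / 8 := clampI_val (by linarith) (by linarith)
  refine Prod.ext (Subtype.ext ?_) (Subtype.ext ?_) <;>
    simp only [Set.Icc.coe_zero] <;>
    rcases bsq_cases (clampI ((1 + x) / 8)) with h | h | h | h <;> linarith

lemma bsq_right (y : I) : bsq (clampI ((1 + y) / 4)) = (1, y) := by
  have h0 := y.2.1
  have h1 := y.2.2
  have ht : (clampI ((1 + y) / 4) : ℝ) = (1 + y) / 4 := clampI_val (by linarith) (by linarith)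
  refine Prod.ext (Subtype.ext ?_) (Subtype.ext ?_) <;>
    simp only [Set.Icc.coe_one] <;>
    rcases bsq_cases (clampI ((1 + y) / 4)) with h | h | h | h <;> linarith

lemma bsq_upper (x : I) : bsq (clampI (1 - x / 2)) = (x, 1) := by
  have h0 := x.2.1
  have h1 := x.2.2
  have ht : (clampI (1 - x / 2) : ℝ) = 1 - x / 2 := clampI_val (by linarith) (by linarith)
  refine Prod.ext (Subtype.ext ?_) (Subtype.ext ?_) <;>
    simp only [Set.Icc.coe_one] <;>
    rcases bsq_cases (clampI (1 - x / 2)) with h | h | h | h <;> linarith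

lemma csq_mem (x s : I) : 1 / 2 + (1 - (s : ℝ)) * (x - 1 / 2) ∈ I := by
  have h0 := x.2.1
  have h1 := x.2.2
  have h2 := s.2.1
  have h3 := s.2.2
  constructor <;> nlinarith

/-- The square as the cone with its centre as the tip over its boundary. -/
def csq : C(I × I, I × I) where
  toFun p := (⟨_, csq_mem (bsq p.1).1 p.2⟩, ⟨_, csq_mem (bsq p.1).2 p.2⟩)
  continuous_toFun := by
    unfold bsq
    exact (Continuous.subtype_mk (by fun_prop) _).prodMk (Continuous.subtype_mk (by fun_prop) _)

lemma csq_fst (p : I × I) :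
    ((csq p).1 : ℝ) = 1 / 2 + (1 - (p.2 : ℝ)) * ((bsq p.1).1 - 1 / 2) := rfl

lemma csq_snd (p : I × I) :
    ((csq p).2 : ℝ) = 1 / 2 + (1 - (p.2 : ℝ)) * ((bsq p.1).2 - 1 / 2) := rfl

lemma csq_zero (t : I) : csq (t, 0) = bsq t :=
  Prod.ext (Subtype.ext (by simp [csq_fst])) (Subtype.ext (by simp [csq_snd]))

lemma csq_coneRel {p p' : I × I} (h : csq p = csq p') : ConeRel p p' := by
  have e1 : ((csq p).1 : ℝ) - 1 / 2 = (csq p').1 - 1 / 2 := by rw [h]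
  have e2 : ((csq p).2 : ℝ) - 1 / 2 = (csq p').2 - 1 / 2 := by rw [h]
  simp only [csq_fst, csq_snd, add_sub_cancel_left] at e1 e2
  have hn (p : I × I) : |(1 - (p.2 : ℝ)) * ((bsq p.1).1 - 1 / 2)| ⊔
      |(1 - (p.2 : ℝ)) * ((bsq p.1).2 - 1 / 2)| = (1 - p.2) / 2 := by
    have h : 0 ≤ 1 - (p.2 : ℝ) := by linarith [p.2.2.2]
    rw [abs_mul, abs_mul, abs_of_nonneg h, ← mul_max_of_nonneg _ _ h, bsq_bdry]
    ring
  have hs : (p.2 : ℝ) = p'.2 := by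
    have h1 := hn p
    rw [e1, e2, hn p'] at h1
    linarith
  refine ⟨Subtype.ext hs, ?_⟩
  by_cases h1 : p.2 = 1
  · exact Or.inl h1
  have h2 : 1 - (p.2 : ℝ) ≠ 0 := fun h3 => h1 (Subtype.ext (by rw [Set.Icc.coe_one]; linarith))
  rw [← hs] at e1 e2
  have f1 := mul_left_cancel₀ h2 e1
  have f2 := mul_left_cancel₀ h2 e2
  exact Or.inr (bsq_inj (Prod.ext (Subtype.ext (by linarith)) (Subtype.ext (by linarith))))

lemma csq_surjective : Function.Surjective csq := by
  rintro ⟨x, y⟩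
  have hx0 := x.2.1
  have hx1 := x.2.2
  have hy0 := y.2.1
  have hy1 := y.2.2
  -- A point with `bsq t = q` and `m * (q - c) = (x, y) - c`, with `0 < m ≤ 1`.
  have fin (m : ℝ) (t : I) (h0 : 0 ≤ m) (h1 : m ≤ 1) (hx : (x : ℝ) - 1 / 2 = m * ((bsq t).1 - 1 / 2))
      (hy : (y : ℝ) - 1 / 2 = m * ((bsq t).2 - 1 / 2)) : ∃ p, csq p = (x, y) := by
    refine ⟨(t, ⟨1 - m, by linarith, by linarith⟩), Prod.ext (Subtype.ext ?_) (Subtype.ext ?_)⟩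
    · rw [csq_fst]; simp only; linarith
    · rw [csq_snd]; simp only; linarith
  have half (a m : ℝ) (hm : 0 < m) (h1 : -(m / 2) ≤ a) (h2 : a ≤ m / 2) :
      ∃ q : I, a = m * (q - 1 / 2) := by
    refine ⟨⟨a / m + 1 / 2, ?_, ?_⟩, ?_⟩
    · have := (le_div_iff₀ hm).2 (by linarith : -(1 / 2) * m ≤ a)
      linarith
    · have := (div_le_iff₀ hm).2 (by linarith : a ≤ 1 / 2 * m)
      linarith
    · simp only; field_simp; ring
  rcases le_total |(x : ℝ) - 1 / 2| |(y : ℝ) - 1 / 2| with h | h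
  · rcases eq_or_ne (y : ℝ) (1 / 2) with h2 | h2
    · have h3 : (x : ℝ) - 1 / 2 = 0 := by rw [h2] at h; simpa using h
      exact fin 0 0 le_rfl zero_le_one (by linarith) (by linarith)
    rcases lt_or_gt_of_ne h2 with h2 | h2
    · rw [abs_of_neg (by linarith : (y : ℝ) - 1 / 2 < 0), abs_le] at h
      obtain ⟨q, hq⟩ := half (x - 1 / 2) (1 - 2 * y) (by linarith) (by linarith) (by linarith)
      refine fin (1 - 2 * y) _ (by linarith) (by linarith) (by rw [bsq_lower q]; exact hq) ?_
      rw [bsq_lower q]; simp; ring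
    · rw [abs_of_pos (by linarith : 0 < (y : ℝ) - 1 / 2), abs_le] at h
      obtain ⟨q, hq⟩ := half (x - 1 / 2) (2 * y - 1) (by linarith) (by linarith) (by linarith)
      refine fin (2 * y - 1) _ (by linarith) (by linarith) (by rw [bsq_upper q]; exact hq) ?_
      rw [bsq_upper q]; simp; ring
  · rcases eq_or_ne (x : ℝ) (1 / 2) with h2 | h2
    · have h3 : (y : ℝ) - 1 / 2 = 0 := by rw [h2] at h; simpa using h
      exact fin 0 0 le_rfl zero_le_one (by linarith) (by linarith)
    rcases lt_or_gt_of_ne h2 with h2 | h2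
    · rw [abs_of_neg (by linarith : (x : ℝ) - 1 / 2 < 0), abs_le] at h
      obtain ⟨q, hq⟩ := half (y - 1 / 2) (1 - 2 * x) (by linarith) (by linarith) (by linarith)
      refine fin (1 - 2 * x) _ (by linarith) (by linarith) ?_ (by rw [bsq_left q]; exact hq)
      rw [bsq_left q]; simp; ring
    · rw [abs_of_pos (by linarith : 0 < (x : ℝ) - 1 / 2), abs_le] at h
      obtain ⟨q, hq⟩ := half (y - 1 / 2) (2 * x - 1) (by linarith) (by linarith) (by linarith)
      refine fin (2 * x - 1) _ (by linarith) (by linarith) ?_ (by rw [bsq_right q]; exact hq)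
      rw [bsq_right q]; simp; ring

section four

variable {X : Type} [TopologicalSpace X] {x : X} (a b c d : Path x x)

lemma four_left (y : I) : (((a.trans b).trans c).trans d) (clampI ((1 - y) / 8)) = a (σ y) := by
  have h0 := y.2.1
  have h1 := y.2.2
  have ht : (clampI ((1 - y) / 8) : ℝ) = (1 - y) / 8 := clampI_val (by linarith) (by linarith)
  simp only [Path.trans_apply]
  rw [dif_pos (by linarith), dif_pos (by linarith), dif_pos (by linarith)]
  congr 1
  refine Subtype.ext ?_
  rw [coe_symm_eq]; simp only [ht]; ring

lemma four_lower (y : I) : (((a.trans b).trans c).trans d) (clampI ((1 + y) / 8)) = b y := by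
  have h0 := y.2.1
  have h1 := y.2.2
  have ht : (clampI ((1 + y) / 8) : ℝ) = (1 + y) / 8 := clampI_val (by linarith) (by linarith)
  rcases h0.eq_or_lt with h | h
  · have h' : y = 0 := Subtype.ext h.symm
    have e := four_left a b c d 0
    rw [symm_zero, a.target] at e
    rw [h', b.source]
    refine Eq.trans ?_ e
    rw [Set.Icc.coe_zero, add_zero, sub_zero]
  · simp only [Path.trans_apply]
    rw [dif_pos (by linarith), dif_pos (by linarith), dif_neg (by linarith)]
    congr 1
    refine Subtype.ext ?_
    simp only [ht]; ring

lemma four_right (y : I) : (((a.trans b).trans c).trans d) (clampI ((1 + y) / 4)) = c y := by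
  have h0 := y.2.1
  have h1 := y.2.2
  have ht : (clampI ((1 + y) / 4) : ℝ) = (1 + y) / 4 := clampI_val (by linarith) (by linarith)
  rcases h0.eq_or_lt with h | h
  · have h' : y = 0 := Subtype.ext h.symm
    have e := four_lower a b c d 1
    rw [b.target] at e
    rw [h', c.source]
    refine Eq.trans ?_ e
    rw [Set.Icc.coe_zero, Set.Icc.coe_one]
    norm_num
  · simp only [Path.trans_apply]
    rw [dif_pos (by linarith), dif_neg (by linarith)]
    congr 1
    refine Subtype.ext ?_
    simp only [ht]; ring

lemma four_upper (y : I) : (((a.trans b).trans c).trans d) (clampI (1 - y / 2)) = d (σ y) := by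
  have h0 := y.2.1
  have h1 := y.2.2
  have ht : (clampI (1 - y / 2) : ℝ) = 1 - y / 2 := clampI_val (by linarith) (by linarith)
  rcases h1.eq_or_lt with h | h
  · have h' : y = 1 := Subtype.ext h
    have e := four_right a b c d 1
    rw [c.target] at e
    rw [h', symm_one, d.source]
    refine Eq.trans ?_ e
    rw [Set.Icc.coe_one]
    norm_num
  · rw [Path.trans_apply, dif_neg (by linarith)]
    congr 1
    refine Subtype.ext ?_
    rw [coe_symm_eq]; simp only [ht]; ring

/-- A fourfold concatenation runs through its four parts as `bsq` runs through the four sides. -/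
lemma bsq_path {Z : Type} (w : X → Z)
    (m : I × I → Z) (hl : ∀ y, m (0, y) = w (a (σ y))) (hb : ∀ y, m (y, 0) = w (b y))
    (hr : ∀ y, m (1, y) = w (c y)) (hu : ∀ y, m (y, 1) = w (d (σ y))) (t : I) :
    m (bsq t) = w ((((a.trans b).trans c).trans d) t) := by
  have h0 := t.2.1
  have h1 := t.2.2
  rcases bsq_cases t with ⟨h, e1, e2⟩ | ⟨h, h', e1, e2⟩ | ⟨h, h', e1, e2⟩ | ⟨h, e1, e2⟩
  · have e : t = clampI ((1 - (bsq t).2) / 8) := by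
      refine (clampI_coe t).symm.trans (congrArg clampI ?_)
      rw [e2]; ring
    rw [e, bsq_left, hl, four_left]
  · have e : t = clampI ((1 + (bsq t).1) / 8) := by
      refine (clampI_coe t).symm.trans (congrArg clampI ?_)
      rw [e1]; ring
    rw [e, bsq_lower, hb, four_lower]
  · have e : t = clampI ((1 + (bsq t).2) / 4) := by
      refine (clampI_coe t).symm.trans (congrArg clampI ?_)
      rw [e2]; ring
    rw [e, bsq_right, hr, four_right]
  · have e : t = clampI (1 - (bsq t).1 / 2) := by
      refine (clampI_coe t).symm.trans (congrArg clampI ?_)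
      rw [e1]; ring
    rw [e, bsq_upper, hu, four_upper]

end four

/-! ### The homotopy coequalizer as a presentation complex -/

section

variable (r : ℕ)

/-- The wedge carrying the generators `γ_k` and `x_i`. -/
abbrev Wg : Type := WedgeGraph (Fin r ⊕ Fin 2)

/-- The inclusion of the wedge of the circles `x_i`. -/
def xinc : C(Wd, Wg r) := wmap fun i => WedgeGraph.loop (Sum.inr i)

/-- The monodromy images of the loops `x_i`, in the wedge of all generators. -/
def twistW (k : Fin r) (i : Fin 2) : Path (WedgeGraph.pt (Fin r ⊕ Fin 2)) (WedgeGraph.pt _) :=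
  (twist k i).map (xinc r).continuous

/-- The boundary loops of the squares `γ_k × x_i`. -/
def sqPath (j : Fin r × Fin 2) : Path (WedgeGraph.pt (Fin r ⊕ Fin 2)) (WedgeGraph.pt _) :=
  (((WedgeGraph.loop (Sum.inl j.1)).symm.trans (WedgeGraph.loop (Sum.inr j.2))).trans
    (WedgeGraph.loop (Sum.inl j.1))).trans (twistW r j.1 j.2).symm

/-- The base point of the homotopy coequalizer. -/
def ptQ : Qm r := Hoc.inX _ _ (Hoc.inX _ _ ())

/-- The loop along the cylinder over the base point. -/
def gQ (k : Fin r) : Path (ptQ r) (ptQ r) where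
  toFun s := Hoc.cyl _ _ ((k, Hoc.inX _ _ ()), s)
  continuous_toFun := by fun_prop
  source' := Hoc.cyl_zero _ _ _
  target' := Hoc.cyl_one _ _ _

/-- The generators of the fundamental group of the fibre, in the homotopy coequalizer. -/
def xQ (i : Fin 2) : Path (ptQ r) (ptQ r) :=
  (wl i).map (Hoc.continuous_inX (ContinuousMap.snd : C(Fin r × Wd, Wd)) (mono r))

/-- The 1-skeleton of the homotopy coequalizer. -/
def qW : C(Wg r, Qm r) := WedgeGraph.desc (Sum.elim (gQ r) (xQ r))

/-- The 2-cells of the homotopy coequalizer. -/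
def qC (j : Fin r × Fin 2) : C(I × I, Qm r) :=
  (⟨fun q => Hoc.cyl _ _ ((j.1, Hoc.cyl _ _ (j.2, q.1)), q.2), by fun_prop⟩ :
    C(I × I, Qm r)).comp csq

lemma qW_xinc (y : Wd) : qW r (xinc r y) = Hoc.inX _ _ y := by
  induction y using Hoc.ind with
  | hX x => rfl
  | hA i t => rfl

lemma isCell_Qm : IsCell (fun j t => sqPath r j t) (qW r) (qC r) := by
  refine ⟨⟨fun j t => ?_, fun j s => ?_, fun j t t' => ?_⟩, fun x => ?_, fun Y _ w' c' h => ?_⟩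
  · obtain ⟨k, i⟩ := j
    change Hoc.cyl _ _ ((k, Hoc.cyl _ _ (i, (csq (t, 0)).1)), (csq (t, 0)).2) = _
    rw [csq_zero]
    refine bsq_path _ _ _ _ (qW r) (fun q => Hoc.cyl _ _ ((k, Hoc.cyl _ _ (i, q.1)), q.2))
      (fun y => ?_) (fun y => ?_) (fun y => ?_) (fun y => ?_) t
    · simp only [Hoc.cyl_zero, Path.symm_apply, Function.comp_apply, symm_symm]
      rfl
    · rw [Hoc.cyl_zero]
      rfl
    · simp only [Hoc.cyl_one]
      rfl
    · rw [Hoc.cyl_one, Path.symm_apply, Function.comp_apply, symm_symm]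
      exact (qW_xinc r (twist k i y)).symm
  · have e : csq (0, s) = csq (1, s) := by
      have : bsq 0 = bsq 1 := by
        refine Prod.ext (Subtype.ext ?_) (Subtype.ext ?_) <;>
          simp only [bsq, clampI_val'] <;> norm_num
      exact Prod.ext (Subtype.ext (by simp [csq_fst, this])) (Subtype.ext (by simp [csq_snd, this]))
    simp only [qC, ContinuousMap.comp_apply, e]
  · have e : csq (t, 1) = csq (t', 1) :=
      Prod.ext (Subtype.ext (by simp [csq_fst])) (Subtype.ext (by simp [csq_snd]))
    simp only [qC, ContinuousMap.comp_apply, e]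
  · induction x using Hoc.ind with
    | hX y => exact Or.inl ⟨_, qW_xinc r y⟩
    | hA a s =>
      obtain ⟨k, y⟩ := a
      induction y using Hoc.ind with
      | hX x => exact Or.inl ⟨WedgeGraph.loop (Sum.inl k) s, rfl⟩
      | hA i t =>
        obtain ⟨p, hp⟩ := csq_surjective (t, s)
        refine Or.inr ⟨(k, i), p, ?_⟩
        simp only [qC, ContinuousMap.comp_apply, hp]
        rfl
  · choose D hD using fun j => exists_desc_of_surjective csq csq_surjective (c' j)
      fun p p' hp => h.eq_of_coneRel j (csq_coneRel hp)
    have hb (j : Fin r × Fin 2) (t : I) : D j (bsq t) = w' (sqPath r j t) := by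
      rw [← csq_zero, hD, h.bdry]
    -- Reading off the boundary values of `D j` on the four sides.
    have sides (j : Fin r × Fin 2) (t : I) : D j (0, t) = w' (WedgeGraph.loop (Sum.inl j.1) t) ∧
        D j (1, t) = w' (WedgeGraph.loop (Sum.inl j.1) t) ∧
        D j (t, 0) = w' (WedgeGraph.loop (Sum.inr j.2) t) ∧ D j (t, 1) = w' (twistW r j.1 j.2 t) := by
      refine ⟨?_, ?_, ?_, ?_⟩
      · rw [← bsq_left, hb, sqPath, four_left, Path.symm_apply, Function.comp_apply, symm_symm]
      · rw [← bsq_right, hb, sqPath, four_right]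
      · rw [← bsq_lower, hb, sqPath, four_lower]
      · rw [← bsq_upper, hb, sqPath, four_upper, Path.symm_apply, Function.comp_apply, symm_symm]
    let z (k : Fin r) : C(I, Y) := ⟨fun s => w' (WedgeGraph.loop (Sum.inl k) s), by fun_prop⟩
    let p (k : Fin r) (i : Fin 2) : Path (z k) (z k) :=
      { toFun := fun u => (D (k, i)).curry u
        continuous_toFun := by fun_prop
        source' := by ext s; exact (sides (k, i) s).1
        target' := by ext s; exact (sides (k, i) s).2.1 }
    have hp (k : Fin r) : Continuous fun x : Wd × I => wmap (p k) x.1 x.2 := by fun_prop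
    refine ⟨Hoc.desc (fun y => w' (xinc r y)) (fun x => wmap (p x.1.1) x.1.2 x.2) (by fun_prop)
      (continuous_Wd_prod hp) ?_ ?_, fun x => ?_, fun j q => ?_⟩
    · rintro ⟨k, y⟩
      induction y using Hoc.ind with
      | hX x =>
        change w' (WedgeGraph.loop (Sum.inl k) 0) = w' (WedgeGraph.pt _)
        rw [Path.source]
      | hA i t => exact (sides (k, i) t).2.2.1
    · rintro ⟨k, y⟩
      induction y using Hoc.ind with
      | hX x =>
        change w' (WedgeGraph.loop (Sum.inl k) 1) = w' (WedgeGraph.pt _)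
        rw [Path.target]
      | hA i t => exact (sides (k, i) t).2.2.2
    · rcases WedgeGraph.loop_surj x with rfl | ⟨k | i, t, rfl⟩
      · rfl
      · rfl
      · rfl
    · exact hD j q

end

section

variable (r : ℕ)

lemma wl_map_xinc (i : Fin 2) :
    (wl i).map (xinc r).continuous = (WedgeGraph.loop (Sum.inr i) : Path _ _) :=
  Path.ext (funext fun _ => rfl)

/-- The words spelled by the monodromy images of the generators. -/
def twistWord (k : Fin r) (i : Fin 2) : FreeGroup (Fin r ⊕ Fin 2) :=
  if (k : ℕ) = 0 then (if (i : ℕ) = 0 then xGen r 0 else xGen r 0 * xGen r 1)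
  else if (k : ℕ) = 1 then (if (i : ℕ) = 0 then xGen r 1 * xGen r 0 else xGen r 1)
  else xGen r i

lemma wordHom_xGen (i : Fin 2) :
    wordHom (Fin r ⊕ Fin 2) (xGen r i) = Lg.mk (WedgeGraph.loop (Sum.inr i)) := by
  simp [wordHom, xGen]

lemma mk_twistW (k : Fin r) (i : Fin 2) :
    Lg.mk (twistW r k i) = wordHom _ (twistWord r k i) := by
  have h (i : Fin 2) : Lg.mk ((wl i).map (xinc r).continuous) = wordHom _ (xGen r i) := by
    rw [wl_map_xinc]; exact (wordHom_xGen r i).symm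
  by_cases h0 : (k : ℕ) = 0
  · have e : twist k = tw₀ := by simp [twist, h0]
    rw [twistW, e, twistWord, if_pos h0]
    fin_cases i
    · exact h 0
    · have e : ((wl 0).trans (wl 1)).map (xinc r).continuous =
          ((wl 0).map (xinc r).continuous).trans ((wl 1).map (xinc r).continuous) :=
        Path.map_trans _ _ _
      refine (congrArg Lg.mk e).trans ?_
      refine Eq.trans ?_ (map_mul (wordHom _) (xGen r 0) (xGen r 1)).symm
      rw [← h, ← h]
      rfl
  by_cases h1 : (k : ℕ) = 1
  · have e : twist k = tw₁ := by simp [twist, h1]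
    rw [twistW, e, twistWord, if_neg h0, if_pos h1]
    fin_cases i
    · have e : ((wl 1).trans (wl 0)).map (xinc r).continuous =
          ((wl 1).map (xinc r).continuous).trans ((wl 0).map (xinc r).continuous) :=
        Path.map_trans _ _ _
      refine (congrArg Lg.mk e).trans ?_
      refine Eq.trans ?_ (map_mul (wordHom _) (xGen r 1) (xGen r 0)).symm
      rw [← h, ← h]
      rfl
    · exact h 1
  · have e : twist k = wl := by simp [twist, h0, h1]
    rw [twistW, e, twistWord, if_neg h0, if_neg h1]
    exact h i

lemma mk_sqPath (j : Fin r × Fin 2) :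
    Lg.mk (sqPath r j) = wordHom _ (cubicRelator r j) := by
  have e : cubicRelator r j = (gammaGen r j.1)⁻¹ * xGen r j.2 * gammaGen r j.1 *
    (twistWord r j.1 j.2)⁻¹ := rfl
  rw [e, map_mul, map_mul, map_mul, map_inv, map_inv, ← mk_twistW, wordHom_xGen]
  simp [sqPath, wordHom, gammaGen]

/-- The homotopy coequalizer of the monodromies is equivalent to the presentation complex: both are
obtained from the same wedge by attaching 2-cells along homotopic loops. -/
theorem Qm_equiv_presentationComplex :
    Nonempty (ContinuousMap.HomotopyEquiv (Qm r) (PresentationComplex (cubicRelator r))) :=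
  IsCell.homotopyEquiv_of_homotopic (φ := sqPath r) (ψ := fun j => wordPath (cubicRelator r j))
    (fun j => Lg.mk_eq.1 (by rw [mk_sqPath, mk_wordPath])) (isCell_Qm r)
    (isCell_presentationComplex (cubicRelator r))

end

/-! ### A classifying space of a discrete group -/

section BG

open MeasureTheory

variable (G : Type) [Group G]

/-- Milgram's model of the total space of the universal `G`-bundle: `G`-valued functions on
`[0,1)`, two functions being close if they differ on a set of small outer measure. -/
def EG : Type := Set.Ico (0 : ℝ) 1 → G

instance : PseudoEMetricSpace (EG G) where
  edist f g := volume (Subtype.val '' {t | f t ≠ g t})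
  edist_self f := by simp
  edist_comm f g := by
    refine congrArg (fun S => volume (Subtype.val '' S)) (Set.ext fun t => ?_)
    simp only [Set.mem_ofPred_eq, ne_comm]
  edist_triangle f g h := by
    refine (measure_mono ?_).trans (measure_union_le _ _)
    rintro _ ⟨t, h1, rfl⟩
    by_cases e : f t = g t
    · exact Or.inr ⟨t, fun e' => h1 (e.trans e'), rfl⟩
    · exact Or.inl ⟨t, e, rfl⟩

lemma EG.edist_def (f g : EG G) :
    edist f g = volume (Subtype.val '' {t | f t ≠ g t}) := rfl

instance : MulAction G (EG G) where
  smul h f := fun t => h * f t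
  one_smul _ := funext fun _ => one_mul _
  mul_smul _ _ _ := funext fun _ => mul_assoc _ _ _

variable {G}

lemma EG.smul_apply (h : G) (f : EG G) (t : Set.Ico (0 : ℝ) 1) : (h • f) t = h * f t := rfl

lemma EG.edist_smul (h : G) (f g : EG G) : edist (h • f) (h • g) = edist f g := by
  simp [EG.edist_def, EG.smul_apply]

/-- Distinct points of an orbit differ everywhere. -/
lemma EG.edist_smul_self {h : G} (hh : h ≠ 1) (f : EG G) : edist f (h • f) = 1 := by
  have e : {t | f t ≠ (h • f) t} = Set.univ := by
    refine Set.eq_univ_of_forall fun t => ?_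
    simpa [EG.smul_apply] using hh
  rw [EG.edist_def, e, Set.image_univ, Subtype.range_coe, Real.volume_Ico]
  simp

/-- The constant functions. -/
def EG.const (h : G) : EG G := fun _ => h

lemma EG.smul_const (h h' : G) : h • EG.const h' = EG.const (h * h') := rfl

variable (G) in
/-- The quotient of `EG G` by the action of `G`. -/
abbrev BG : Type := MulAction.orbitRel.Quotient G (EG G)

variable (G) in
/-- The projection to the classifying space. -/
def prB : EG G → BG G := Quotient.mk _

variable (G) in
lemma isQuotientCoveringMap_prB : IsQuotientCoveringMap (prB G) G where
  toIsQuotientMap := isQuotientMap_quotient_mk'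
  continuous_const_smul h := by
    have : Isometry fun x : EG G => h • x := EG.edist_smul h
    exact this.continuous
  apply_eq_iff_mem_orbit := Quotient.eq
  disjoint e := by
    refine ⟨Metric.eball e 2⁻¹, Metric.eball_mem_nhds e (by simp), fun h => ?_⟩
    rintro ⟨_, ⟨x, hx, rfl⟩, hx'⟩
    by_contra hh
    have h1 := EG.edist_smul_self hh x
    have h2 : edist x (h • x) < 2⁻¹ + 2⁻¹ := by
      refine (edist_triangle_right _ _ e).trans_lt (ENNReal.add_lt_add hx hx')
    rw [h1, ENNReal.inv_two_add_inv_two] at h2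
    exact lt_irrefl _ h2

/-- The function equal to `f` before `s` and to `g` from `s` on: a contraction of `EG G`. -/
def splice (f g : EG G) (s : ℝ) : EG G := fun t => if (t : ℝ) < s then f t else g t

lemma edist_splice_le (f f' g : EG G) (s s' : ℝ) :
    edist (splice f g s) (splice f' g s') ≤ edist f f' + edist s s' := by
  have h : edist s s' = volume (Set.uIcc s s') := by
    rw [Set.uIcc, Real.volume_Icc, edist_dist, Real.dist_eq, max_sub_min_eq_abs', abs_sub_comm]
  rw [h]
  refine (measure_mono ?_).trans (measure_union_le _ _)
  rintro _ ⟨t, h1, rfl⟩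
  by_cases e : f t = f' t
  · refine Or.inr (Set.mem_uIcc.2 ?_)
    simp only [splice, Set.mem_ofPred_eq] at h1
    split_ifs at h1 with a b b
    · exact absurd e h1
    · exact Or.inr ⟨not_lt.1 b, a.le⟩
    · exact Or.inl ⟨not_lt.1 a, b.le⟩
    · exact absurd rfl h1
  · exact Or.inl ⟨t, e, rfl⟩

lemma continuous_splice (g : EG G) :
    Continuous fun x : EG G × ℝ => splice x.1 g x.2 := by
  have : LipschitzWith 2 fun x : EG G × ℝ => splice x.1 g x.2 := by
    intro x y
    refine (edist_splice_le _ _ _ _ _).trans ?_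
    rw [Prod.edist_eq]
    push_cast
    rw [two_mul]
    exact add_le_add (le_max_left _ _) (le_max_right _ _)
  exact this.continuous

lemma splice_self (f : EG G) (s : ℝ) : splice f f s = f := funext fun t => by simp [splice]

lemma splice_one (f g : EG G) : splice f g 1 = f := funext fun t => if_pos t.2.2

lemma splice_zero (f g : EG G) : splice f g 0 = g := funext fun t => if_neg (not_lt.2 t.2.1)

/-- The path in `EG G` from `1` to `h`. -/
def EG.path (h : G) : Path (EG.const (1 : G)) (EG.const h) where
  toFun s := splice (EG.const h) (EG.const 1) s
  continuous_toFun := (continuous_splice _).comp (continuous_const.prodMk continuous_subtype_val)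
  source' := splice_zero _ _
  target' := splice_one _ _

/-- The base point of the classifying space. -/
def ptB : BG G := prB G (EG.const 1)

lemma prB_const (h : G) : prB G (EG.const h) = ptB := by
  rw [← mul_one h, ← EG.smul_const]
  exact (isQuotientCoveringMap_prB G).map_smul h

/-- The monodromy of the universal bundle, as a homomorphism from the fundamental group of the
base. -/
def monoB : Lg (BG G) ptB →* G :=
  (MulEquiv.opOp G).symm.toMonoidHom.comp
    ((isQuotientCoveringMap_prB G).fundamentalGroupToMulOpposite
      (⟨EG.const 1, rfl⟩ : prB G ⁻¹' {ptB})).op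

lemma monoB_mk {h : G} (p : Path (ptB : BG G) ptB) (L : Path (EG.const (1 : G)) (EG.const h))
    (hL : ∀ t, prB G (L t) = p t) : monoB (Lg.mk p) = h := by
  have key : (isQuotientCoveringMap_prB G).fundamentalGroupToMulOpposite
      (⟨EG.const 1, rfl⟩ : prB G ⁻¹' {ptB})
      (FundamentalGroup.fromPath (Path.Homotopic.Quotient.mk p)) = MulOpposite.op h := by
    rw [IsQuotientCoveringMap.fundamentalGroupToMulOpposite_apply_eq_Iff]
    have := (isQuotientCoveringMap_prB G).isCoveringMap.monodromy_eq_of_map_eq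
      (γ := Path.Homotopic.Quotient.mk p) (ex := ⟨EG.const 1, rfl⟩)
      (ey := ⟨EG.const h, prB_const h⟩) (Path.Homotopic.Quotient.mk L)
      (congrArg Path.Homotopic.Quotient.mk (Path.ext (funext hL)))
    refine Eq.trans ?_ (congrArg Subtype.val this).symm
    change h • EG.const 1 = EG.const h
    rw [EG.smul_const, mul_one]
  exact congrArg MulOpposite.unop key

lemma exists_liftB (p : Path (ptB : BG G) ptB) (hp : monoB (Lg.mk p) = 1) :
    ∃ L : Path (EG.const (1 : G)) (EG.const 1), ∀ t, prB G (L t) = p t := by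
  obtain ⟨L, hL, h0⟩ := (isQuotientCoveringMap_prB G).isCoveringMap.exists_path_lifts p
    (EG.const 1) p.source
  obtain ⟨h, hh⟩ := (isQuotientCoveringMap_prB G).apply_eq_iff_mem_orbit.1
    (show prB G (L 1) = prB G (EG.const 1) from (congrFun hL 1).trans p.target)
  have h1 : L 1 = EG.const h := by
    rw [← hh]
    change h • EG.const 1 = EG.const h
    rw [EG.smul_const, mul_one]
  have : (1 : G) = h := hp.symm.trans
    (monoB_mk p ⟨L, h0, h1⟩ fun t => congrFun hL t)
  subst this
  exact ⟨⟨L, h0, h1⟩, fun t => congrFun hL t⟩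

end BG

/-! ### The presented group maps isomorphically onto its image in the fundamental group -/

section presented

variable {α ρ Z : Type} [TopologicalSpace Z]
  {φ : ρ → Path (WedgeGraph.pt α) (WedgeGraph.pt α)} {w : C(WedgeGraph α, Z)}
  {c : ρ → C(I × I, Z)} {rel : ρ → FreeGroup α}

lemma simplyConnected_sq : SimplyConnectedSpace (I × I) :=
  have : ContractibleSpace I := (convex_Icc (0 : ℝ) 1).contractibleSpace ⟨0, by simp⟩
  inferInstance

/-- The boundary of a 2-cell is null-homotopic: in the square, the bottom side is homotopic to the
concatenation of the other three sides, and a cell is constant on the top side and takes the same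
values on the lateral ones. -/
lemma Compat.mk_eq_one (h : Compat (fun j t => φ j t) w c) (j : ρ) :
    Lg.map w _ (Lg.mk (φ j)) = 1 := by
  let b : Path ((0, 0) : I × I) (1, 0) := ⟨⟨fun t => (t, 0), by fun_prop⟩, rfl, rfl⟩
  let l : Path ((0, 0) : I × I) (0, 1) := ⟨⟨fun t => (0, t), by fun_prop⟩, rfl, rfl⟩
  let u : Path ((0, 1) : I × I) (1, 1) := ⟨⟨fun t => (t, 1), by fun_prop⟩, rfl, rfl⟩
  let e : Path ((1, 0) : I × I) (1, 1) := ⟨⟨fun t => (1, t), by fun_prop⟩, rfl, rfl⟩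
  have := simplyConnected_sq
  have hb : b.Homotopic ((l.trans u).trans e.symm) := SimplyConnectedSpace.paths_homotopic _ _
  have h0 : c j (0, 0) = w (WedgeGraph.pt α) := (h.bdry j 0).trans (congrArg w (φ j).source)
  have h1 : c j (1, 0) = w (WedgeGraph.pt α) := (h.bdry j 1).trans (congrArg w (φ j).target)
  let l' : Path (w (WedgeGraph.pt α)) (c j (0, 1)) := (l.map (c j).continuous).cast h0.symm rfl
  have e1 : (φ j).map w.continuous = (b.map (c j).continuous).cast h0.symm h1.symm :=
    Path.ext (funext fun t => (h.bdry j t).symm)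
  have e2 : (((l.trans u).trans e.symm).map (c j).continuous).cast h0.symm h1.symm =
      (l'.trans (Path.refl _)).trans l'.symm := by
    rw [Path.map_trans, Path.map_trans]
    refine Path.ext (funext fun t => ?_)
    simp only [Path.cast_coe, Path.trans_apply]
    split_ifs
    · rfl
    · exact h.tip j _ _
    · exact (h.side j _).symm
  rw [Lg.map_mk, ← Lg.mk_refl, Lg.mk_eq, e1]
  have hb' := hb.map (c j)
  have : (((b.map (c j).continuous).cast h0.symm h1.symm)).Homotopic
      ((((l.trans u).trans e.symm).map (c j).continuous).cast h0.symm h1.symm) := by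
    obtain ⟨F⟩ := hb'
    exact ⟨F.cast rfl rfl⟩
  rw [e2] at this
  refine this.trans ?_
  have k1 : (l'.trans (Path.refl _)).Homotopic l' := ⟨Path.Homotopy.transRefl l'⟩
  exact (k1.hcomp (Path.Homotopic.refl _)).trans ⟨(Path.Homotopy.reflTransSymm l').symm⟩

variable (hrel : ∀ j, Lg.mk (φ j) = wordHom α (rel j))

/-- The tautological homomorphism from the presented group to the fundamental group. -/
def presHom (h : Compat (fun j t => φ j t) w c) (hrel : ∀ j, Lg.mk (φ j) = wordHom α (rel j)) :
    PresentedGroup (Set.range rel) →* Lg Z (w (WedgeGraph.pt α)) :=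
  PresentedGroup.toGroup (f := fun a => Lg.map w _ (Lg.mk (WedgeGraph.loop a))) (by
    rintro _ ⟨j, rfl⟩
    have e : FreeGroup.lift (fun a => Lg.map w _ (Lg.mk (WedgeGraph.loop a))) =
        (Lg.map w (WedgeGraph.pt α)).comp (wordHom α) := by
      ext a; simp [wordHom]
    rw [e, MonoidHom.comp_apply, ← hrel]
    exact h.mk_eq_one j)

lemma presHom_of (h : Compat (fun j t => φ j t) w c) (a : α) :
    presHom h hrel (PresentedGroup.of a) = Lg.map w _ (Lg.mk (WedgeGraph.loop a)) :=
  PresentedGroup.toGroup.of _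

lemma presHom_mk (h : Compat (fun j t => φ j t) w c) (v : FreeGroup α) :
    presHom h hrel (PresentedGroup.mk _ v) = Lg.map w _ (wordHom α v) := by
  have : (presHom h hrel).comp (PresentedGroup.mk _) =
      (Lg.map w (WedgeGraph.pt α)).comp (wordHom α) := by
    ext a
    refine (presHom_of hrel h a).trans ?_
    simp [wordHom]
  exact DFunLike.congr_fun this v

lemma Lg.map_eq_one_of_comp {X Y : Type} [TopologicalSpace X] [TopologicalSpace Y] {f : C(X, Z)}
    {f' : C(X, Y)} {m : C(Z, Y)} (hm : m.comp f = f') {x : X} {g : Lg X x}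
    (hg : Lg.map f x g = 1) : Lg.map f' x g = 1 := by
  subst hm
  induction g using Lg.ind with
  | h p => exact (congrArg (Lg.map m (f x)) hg).trans (map_one _)

/-- There is a map from `Z` to the classifying space of the presented group which induces the
identity on generators: over a 2-cell it is given by contracting, in the total space of the
universal bundle, the lift of the boundary loop. -/
theorem presHom_injective (h : IsCell (fun j t => φ j t) w c) :
    Function.Injective (presHom h.compat hrel) := by
  let G := PresentedGroup (Set.range rel)
  let p (a : α) : Path (ptB : BG G) ptB :=
    ((EG.path (PresentedGroup.of a : G)).map (isQuotientCoveringMap_prB G).continuous).cast rfl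
      (prB_const _).symm
  let w' : C(WedgeGraph α, BG G) := WedgeGraph.desc p
  have hp (a : α) : monoB (Lg.mk (p a)) = PresentedGroup.of a :=
    monoB_mk _ (EG.path _) fun t => rfl
  have hw' (u : FreeGroup α) :
      monoB (Lg.map w' (WedgeGraph.pt α) (wordHom α u)) = PresentedGroup.mk _ u := by
    have : ((monoB (G := G)).comp (Lg.map w' (WedgeGraph.pt α))).comp (wordHom α) =
        PresentedGroup.mk _ := by
      ext a
      have : (WedgeGraph.loop a).map w'.continuous = p a :=
        Path.ext (funext fun t => WedgeGraph.desc_loop p a t)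
      simp only [MonoidHom.comp_apply, wordHom, FreeGroup.lift_apply_of]
      exact (congrArg (fun q => monoB (Lg.mk q)) this).trans (hp a)
    exact DFunLike.congr_fun this u
  have hL (j : ρ) : ∃ L : Path (EG.const (1 : G)) (EG.const 1), ∀ t, prB G (L t) = w' (φ j t) := by
    refine exists_liftB ((φ j).map w'.continuous) ?_
    refine (congrArg (fun g => monoB (Lg.map w' (WedgeGraph.pt α) g)) (hrel j)).trans ?_
    refine (hw' (rel j)).trans ?_
    exact PresentedGroup.one_of_mem ⟨j, rfl⟩
  choose L hL using hL
  have hprB := (isQuotientCoveringMap_prB G).continuous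
  let c' (j : ρ) : C(I × I, BG G) :=
    ⟨fun q => prB G (splice (L j q.1) (EG.const 1) (1 - q.2)), by
      refine hprB.comp ((continuous_splice _).comp (.prodMk ?_ ?_))
      · exact (L j).continuous.comp continuous_fst
      · fun_prop⟩
  obtain ⟨m, m1, m2⟩ := h.desc (BG G) w' c' ⟨fun j t => by
      change prB G (splice _ _ (1 - 0)) = _
      rw [sub_zero, splice_one, hL], fun j s => by
      change prB G (splice (L j 0) _ _) = prB G (splice (L j 1) _ _)
      rw [(L j).source, (L j).target], fun j t t' => by
      change prB G (splice _ _ (1 - 1)) = prB G (splice _ _ (1 - 1))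
      rw [sub_self, splice_zero, splice_zero]⟩
  have hm : (m.comp w) = w' := ContinuousMap.ext m1
  refine (injective_iff_map_eq_one _).2 fun u hu => ?_
  obtain ⟨v, rfl⟩ := PresentedGroup.mk_surjective _ u
  rw [presHom_mk] at hu
  rw [← hw' v]
  exact (congrArg monoB (Lg.map_eq_one_of_comp hm hu)).trans (map_one _)

end presented

/-! ### Generators of the fundamental group of a homotopy coequalizer -/

section cosets

variable {Z : Type} [TopologicalSpace Z] {z₀ : Z} {H : Subgroup (Lg Z z₀)}

/-- Two paths from the base point have the same end point and represent the same coset of `H`. -/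
def HRel (H : Subgroup (Lg Z z₀)) {z z' : Z} (p : Path z₀ z) (q : Path z₀ z') : Prop :=
  ∃ e : z = z', Lg.mk (p.trans (q.cast rfl e).symm) ∈ H

lemma HRel.of_homotopic {z : Z} {p q : Path z₀ z} (h : p.Homotopic q) : HRel H p q := by
  refine ⟨rfl, ?_⟩
  have : Lg.mk (p.trans q.symm) = Lg.mk (Path.refl z₀) := by
    rw [Lg.mk_eq, ← Path.Homotopic.Quotient.eq, Path.Homotopic.Quotient.mk_trans, Path.Homotopic.Quotient.mk_symm, Path.Homotopic.Quotient.eq.2 h,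
      Path.Homotopic.Quotient.trans_symm, Path.Homotopic.Quotient.mk_refl]
  exact this ▸ H.one_mem

lemma HRel.of_apply {z z' : Z} {p : Path z₀ z} {q : Path z₀ z'} (h : ∀ t, p t = q t) :
    HRel H p q := by
  obtain rfl : z = z' := p.target.symm.trans ((h 1).trans q.target)
  obtain rfl : p = q := Path.ext (funext h)
  exact .of_homotopic (.refl p)

lemma HRel.refl {z : Z} (p : Path z₀ z) : HRel H p p := .of_homotopic (.refl p)

lemma HRel.symm {z z' : Z} {p : Path z₀ z} {q : Path z₀ z'} (h : HRel H p q) : HRel H q p := by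
  obtain ⟨rfl, h⟩ := h
  refine ⟨rfl, ?_⟩
  have : Lg.mk (q.trans p.symm) = (Lg.mk (p.trans q.symm))⁻¹ := by
    rw [← Lg.mk_symm, Path.trans_symm, Path.symm_symm]
  exact this ▸ H.inv_mem h

lemma HRel.trans {z z' z'' : Z} {p : Path z₀ z} {q : Path z₀ z'} {s : Path z₀ z''}
    (h : HRel H p q) (h' : HRel H q s) : HRel H p s := by
  obtain ⟨rfl, h⟩ := h
  obtain ⟨rfl, h'⟩ := h'
  refine ⟨rfl, ?_⟩
  have : Lg.mk (p.trans s.symm) = Lg.mk (p.trans q.symm) * Lg.mk (q.trans s.symm) := by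
    rw [← Lg.mk_trans, Lg.mk_eq, ← Path.Homotopic.Quotient.eq]
    simp only [Path.Homotopic.Quotient.mk_trans, Path.Homotopic.Quotient.mk_symm]
    rw [Path.Homotopic.Quotient.trans_assoc, ← Path.Homotopic.Quotient.trans_assoc (Path.Homotopic.Quotient.symm _), Path.Homotopic.Quotient.symm_trans,
      Path.Homotopic.Quotient.refl_trans]
  exact this ▸ H.mul_mem h h'

lemma HRel.trans_right {z z' : Z} {p q : Path z₀ z} (h : HRel H p q) (s : Path z z') :
    HRel H (p.trans s) (q.trans s) := by
  obtain ⟨_, h⟩ := h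
  refine ⟨rfl, ?_⟩
  have : Lg.mk ((p.trans s).trans (q.trans s).symm) = Lg.mk (p.trans q.symm) := by
    rw [Lg.mk_eq, ← Path.Homotopic.Quotient.eq, Path.trans_symm]
    simp only [Path.Homotopic.Quotient.mk_trans, Path.Homotopic.Quotient.mk_symm]
    rw [Path.Homotopic.Quotient.trans_assoc, ← Path.Homotopic.Quotient.trans_assoc (Path.Homotopic.Quotient.mk s), Path.Homotopic.Quotient.trans_symm,
      Path.Homotopic.Quotient.refl_trans]
  exact this ▸ h

lemma HRel.cast_left {z z' z'' : Z} {p : Path z₀ z} {q : Path z₀ z'} (e : z'' = z)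
    (h : HRel H p q) : HRel H (p.cast rfl e) q := by
  subst e; exact h

lemma HRel.mem_of_refl {p : Path z₀ z₀} (h : HRel H p (Path.refl z₀)) : Lg.mk p ∈ H := by
  obtain ⟨_, h⟩ := h
  have : Lg.mk (p.trans (Path.refl z₀).symm) = Lg.mk p := by
    rw [Path.refl_symm, Lg.mk_trans, Lg.mk_refl, mul_one]
  exact this ▸ h

end cosets

/-- The two ways around a square are homotopic. -/
lemma homotopic_of_sq {Z : Type} [TopologicalSpace Z] (M : C(I × I, Z)) {x₀₀ x₀₁ x₁₀ x₁₁ : Z}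
    (l : Path x₀₀ x₀₁) (u : Path x₀₁ x₁₁) (b : Path x₀₀ x₁₀) (e : Path x₁₀ x₁₁)
    (hl : ∀ t, l t = M (0, t)) (hu : ∀ t, u t = M (t, 1)) (hb : ∀ t, b t = M (t, 0))
    (he : ∀ t, e t = M (1, t)) : (l.trans u).Homotopic (b.trans e) := by
  obtain rfl : M (0, 0) = x₀₀ := (hl 0).symm.trans l.source
  obtain rfl : M (0, 1) = x₀₁ := (hl 1).symm.trans l.target
  obtain rfl : M (1, 0) = x₁₀ := (he 0).symm.trans e.source
  obtain rfl : M (1, 1) = x₁₁ := (he 1).symm.trans e.target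
  let b' : Path ((0, 0) : I × I) (1, 0) := ⟨⟨fun t => (t, 0), by fun_prop⟩, rfl, rfl⟩
  let l' : Path ((0, 0) : I × I) (0, 1) := ⟨⟨fun t => (0, t), by fun_prop⟩, rfl, rfl⟩
  let u' : Path ((0, 1) : I × I) (1, 1) := ⟨⟨fun t => (t, 1), by fun_prop⟩, rfl, rfl⟩
  let e' : Path ((1, 0) : I × I) (1, 1) := ⟨⟨fun t => (1, t), by fun_prop⟩, rfl, rfl⟩
  have := simplyConnected_sq
  have h : (l'.trans u').Homotopic (b'.trans e') := SimplyConnectedSpace.paths_homotopic _ _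
  obtain rfl : l = l'.map M.continuous := Path.ext (funext hl)
  obtain rfl : u = u'.map M.continuous := Path.ext (funext hu)
  obtain rfl : b = b'.map M.continuous := Path.ext (funext hb)
  obtain rfl : e = e'.map M.continuous := Path.ext (funext he)
  rw [← Path.map_trans, ← Path.map_trans]
  exact h.map M

section generate

variable {A X : Type} [TopologicalSpace A] [TopologicalSpace X] {f g : C(A, X)}

/-- The generator of a cylinder, as a path. -/
def vpath (f g : C(A, X)) (a : A) : Path (Hoc.inX f g (f a)) (Hoc.inX f g (g a)) where
  toFun s := Hoc.cyl f g (a, s)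
  source' := Hoc.cyl_zero _ _ _
  target' := Hoc.cyl_one _ _ _

/-- An initial piece of a generator of a cylinder. -/
def vpart (f g : C(A, X)) (a : A) (s : I) : Path (Hoc.inX f g (f a)) (Hoc.cyl f g (a, s)) where
  toFun v := Hoc.cyl f g (a, s * v)
  source' := by simp
  target' := by simp

variable [PathConnectedSpace X] {x₀ : X}

/-- Points of `X ⊕ A × I`, and chosen paths from the base point to their images. -/
def teth (f g : C(A, X)) (x₀ : X) : (c : X ⊕ A × I) → Path (Hoc.inX f g x₀) (Quot.mk _ c)
  | .inl x => (PathConnectedSpace.somePath x₀ x).map (Hoc.continuous_inX f g)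
  | .inr p => ((PathConnectedSpace.somePath x₀ (f p.1)).map (Hoc.continuous_inX f g)).trans
      (vpart f g p.1 p.2)

variable {H : Subgroup (Lg (Hoc f g) (Hoc.inX f g x₀))}

/-- The coset of a path in `X` depends only on its end point. -/
lemma HRel.of_inX (hX : ∀ q : Path x₀ x₀, Lg.mk (q.map (Hoc.continuous_inX f g)) ∈ H) {x : X}
    (p q : Path x₀ x) :
    HRel H (p.map (Hoc.continuous_inX f g)) (q.map (Hoc.continuous_inX f g)) := by
  refine ⟨rfl, ?_⟩
  have := hX (p.trans q.symm)
  rwa [Path.map_trans] at this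

/-- If the cosets of the generators of the cylinders are trivial, so that the cosets of the chosen
paths agree under the gluing relation, then they agree for all points with the same image. -/
lemma HRel.of_mk_eq (hX : ∀ q : Path x₀ x₀, Lg.mk (q.map (Hoc.continuous_inX f g)) ∈ H)
    (hv : ∀ a, ∃ (p : Path x₀ (f a)) (q : Path x₀ (g a)),
      HRel H ((p.map (Hoc.continuous_inX f g)).trans (vpath f g a))
        (q.map (Hoc.continuous_inX f g)))
    {c c' : X ⊕ A × I} (e : Quot.mk (HocRel f g) c = Quot.mk (HocRel f g) c') :
    HRel H (teth f g x₀ c) (teth f g x₀ c') := by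
  have key := Quot.eqvGen_exact e
  clear e
  induction key with
  | rel _ _ h =>
    rcases h with a | a
    · refine HRel.trans (q := ((PathConnectedSpace.somePath x₀ (f a)).map
        (Hoc.continuous_inX f g)).trans (Path.refl _)) (.of_apply fun t => ?_)
        (.of_homotopic ⟨Path.Homotopy.transRefl _⟩)
      refine (Path.trans_apply _ _ t).trans (Eq.trans ?_ (Path.trans_apply _ _ t).symm)
      split_ifs
      · rfl
      · change Hoc.cyl f g (a, 0 * _) = Hoc.inX f g (f a)
        simp
    · obtain ⟨p, q, h⟩ := hv a
      refine HRel.trans (q := ((PathConnectedSpace.somePath x₀ (f a)).map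
        (Hoc.continuous_inX f g)).trans (vpath f g a)) (.of_apply fun t => ?_)
        (((HRel.of_inX hX _ p).trans_right _).trans (h.trans (HRel.of_inX hX _ _)))
      refine (Path.trans_apply _ _ t).trans (Eq.trans ?_ (Path.trans_apply _ _ t).symm)
      split_ifs
      · rfl
      · change Hoc.cyl f g (a, 1 * _) = Hoc.cyl f g (a, _)
        rw [one_mul]
  | refl c => exact .refl _
  | symm _ _ _ ih => exact ih.symm
  | trans _ _ _ _ _ ih ih' => exact ih.trans ih'

/-- Composing with the path `s` does not lead out of the cosets of the chosen paths. -/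
def Keeps (H : Subgroup (Lg (Hoc f g) (Hoc.inX f g x₀))) {z z' : Hoc f g} (s : Path z z') : Prop :=
  ∀ p : Path (Hoc.inX f g x₀) z, (∃ c, HRel H p (teth f g x₀ c)) →
    ∃ c, HRel H (p.trans s) (teth f g x₀ c)

lemma Keeps.of_inX (hX : ∀ q : Path x₀ x₀, Lg.mk (q.map (Hoc.continuous_inX f g)) ∈ H)
    (ht : ∀ {c c' : X ⊕ A × I}, Quot.mk (HocRel f g) c = Quot.mk (HocRel f g) c' →
      HRel H (teth f g x₀ c) (teth f g x₀ c')) {z z' : Hoc f g} (s : Path z z') (q : C(I, X))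
    (h : ∀ t, s t = Hoc.inX f g (q t)) : Keeps H s := by
  obtain rfl : Hoc.inX f g (q 0) = z := (h 0).symm.trans s.source
  obtain rfl : Hoc.inX f g (q 1) = z' := (h 1).symm.trans s.target
  let q' : Path (q 0) (q 1) := ⟨q, rfl, rfl⟩
  obtain rfl : s = q'.map (Hoc.continuous_inX f g) := Path.ext (funext h)
  rintro p ⟨c, hc⟩
  have hc' : HRel H p (teth f g x₀ (.inl (q 0))) := hc.trans (ht hc.1.symm)
  refine ⟨.inl (q 1), (hc'.trans_right _).trans ?_⟩
  have := HRel.of_inX hX ((PathConnectedSpace.somePath x₀ (q 0)).trans q')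
    (PathConnectedSpace.somePath x₀ (q 1))
  rwa [Path.map_trans] at this

lemma Keeps.of_cyl (hX : ∀ q : Path x₀ x₀, Lg.mk (q.map (Hoc.continuous_inX f g)) ∈ H)
    (ht : ∀ {c c' : X ⊕ A × I}, Quot.mk (HocRel f g) c = Quot.mk (HocRel f g) c' →
      HRel H (teth f g x₀ c) (teth f g x₀ c')) {z z' : Hoc f g} (s : Path z z') (q : C(I, A × I))
    (h : ∀ t, s t = Hoc.cyl f g (q t)) : Keeps H s := by
  obtain rfl : Hoc.cyl f g (q 0) = z := (h 0).symm.trans s.source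
  obtain rfl : Hoc.cyl f g (q 1) = z' := (h 1).symm.trans s.target
  rintro p ⟨c, hc⟩
  have hc' : HRel H p (teth f g x₀ (.inr (q 0))) := hc.trans (ht hc.1.symm)
  refine ⟨.inr (q 1), (hc'.trans_right _).trans ?_⟩
  let F : Path (f (q 0).1) (f (q 1).1) := ⟨⟨fun t => f (q t).1, by fun_prop⟩, rfl, rfl⟩
  have hsq : ((vpart f g (q 0).1 (q 0).2).trans s).Homotopic
      ((F.map (Hoc.continuous_inX f g)).trans (vpart f g (q 1).1 (q 1).2)) := by
    refine homotopic_of_sq ⟨fun x => Hoc.cyl f g ((q x.1).1, (q x.1).2 * x.2), by fun_prop⟩ _ _ _ _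
      (fun t => rfl) (fun t => ?_) (fun t => ?_) (fun t => rfl)
    · simp [h]
    · simp [F]
  have h1 := HRel.of_homotopic (H := H) ((Path.Homotopic.refl ((PathConnectedSpace.somePath x₀
    (f (q 0).1)).map (Hoc.continuous_inX f g))).hcomp hsq)
  have h2 := HRel.of_inX hX ((PathConnectedSpace.somePath x₀ (f (q 0).1)).trans F)
    (PathConnectedSpace.somePath x₀ (f (q 1).1))
  rw [Path.map_trans] at h2
  refine ((HRel.of_homotopic (Path.Homotopic.trans_assoc _ _ _)).trans h1).trans
    ((HRel.of_homotopic (Path.Homotopic.trans_assoc _ _ _)).symm.trans (h2.trans_right _))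

end generate

section generate

variable {A X : Type} [TopologicalSpace A] [TopologicalSpace X] {f g : C(A, X)}

/-- The homotopy, starting at the identity, which stretches the middle third of each cylinder over
the whole cylinder. -/
def stretch (f g : C(A, X)) : C(Hoc f g, C(I, Hoc f g)) :=
  Hoc.desc (fun x => ContinuousMap.const I (Hoc.inX f g x))
    (fun p => ⟨fun u => Hoc.cyl f g (p.1, clampI ((1 - (u : ℝ)) * p.2 + u * (3 * p.2 - 1))),
      by fun_prop⟩)
    (ContinuousMap.continuous_of_continuous_uncurry _ (by unfold Function.uncurry; fun_prop))
    (ContinuousMap.continuous_of_continuous_uncurry _ (by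
      have : Continuous fun x : (A × I) × I =>
        Hoc.cyl f g (x.1.1, clampI ((1 - (x.2 : ℝ)) * x.1.2 + x.2 * (3 * x.1.2 - 1))) := by fun_prop
      exact this))
    (fun a => by
      ext u
      have h := clampI_nonpos (t := (1 - (u : ℝ)) * (0 : I) + u * (3 * (0 : I) - 1))
        (by simp [u.2.1])
      change Hoc.cyl f g (a, clampI _) = Hoc.inX f g (f a)
      rw [h, Hoc.cyl_zero])
    (fun a => by
      ext u
      have h := clampI_one_le (t := (1 - (u : ℝ)) * (1 : I) + u * (3 * (1 : I) - 1))
        (by simp; linarith [u.2.1])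
      change Hoc.cyl f g (a, clampI _) = Hoc.inX f g (g a)
      rw [h, Hoc.cyl_one])

lemma stretch_inX (x : X) (u : I) : stretch f g (Hoc.inX f g x) u = Hoc.inX f g x := rfl

lemma stretch_cyl (p : A × I) (u : I) : stretch f g (Hoc.cyl f g p) u =
    Hoc.cyl f g (p.1, clampI ((1 - (u : ℝ)) * p.2 + u * (3 * p.2 - 1))) := rfl

lemma stretch_zero (z : Hoc f g) : stretch f g z 0 = z := by
  induction z using Hoc.ind with
  | hX x => rfl
  | hA a s => rw [stretch_cyl]; simp [clampI_coe]

/-- The distance to the middle of a cylinder, which is `1` on `X`. -/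
def mid (f g : C(A, X)) : C(Hoc f g, ℝ) :=
  Hoc.desc (fun _ => 1) (fun p => |2 * (p.2 : ℝ) - 1|) (by fun_prop) (by fun_prop)
    (fun a => by simp) (fun a => by norm_num)

lemma mid_inX (x : X) : mid f g (Hoc.inX f g x) = 1 := rfl

lemma mid_cyl (p : A × I) : mid f g (Hoc.cyl f g p) = |2 * (p.2 : ℝ) - 1| := rfl

/-- Near `X` the end of the stretching takes values in `X`. -/
lemma exists_near : ∃ m : Hoc f g → X, ContinuousOn m {z | 1 / 3 < mid f g z} ∧
    ∀ z, 1 / 3 < mid f g z → stretch f g z 1 = Hoc.inX f g (m z) := by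
  classical
  refine ⟨Hoc.descFun id (fun p => if (p.2 : ℝ) < 1 / 2 then f p.1 else g p.1) (fun a => by simp)
    (fun a => by norm_num), ?_, fun z hz => ?_⟩
  · refine (Topology.IsQuotientMap.continuousOn_isOpen_iff
      (f := (Quot.mk (HocRel f g) : _ → Hoc f g)) isQuotientMap_quot_mk
      (isOpen_lt continuous_const (mid f g).continuous)).2 ?_
    refine continuousOn_of_forall_continuousAt fun c hc => ?_
    rcases c with x | ⟨a, s⟩
    · rw [← Topology.IsOpenEmbedding.inl.continuousAt_iff]
      exact continuousAt_id
    · rw [← Topology.IsOpenEmbedding.inr.continuousAt_iff]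
      have hc : 1 / 3 < |2 * (s : ℝ) - 1| := hc
      rcases lt_or_ge (s : ℝ) (1 / 2) with h | h
      · have : ContinuousAt (fun p : A × I => f p.1) (a, s) := by fun_prop
        refine this.congr ?_
        have := (isOpen_lt (f := fun p : A × I => (p.2 : ℝ)) (g := fun _ => 1 / 2) (by fun_prop)
          (by fun_prop)).mem_nhds (x := (a, s)) h
        filter_upwards [this] with p hp
        exact (if_pos hp).symm
      · have h : 1 / 2 < (s : ℝ) := by
          rcases h.lt_or_eq with h | h
          · exact h
          · rw [← h] at hc; norm_num at hc
        have : ContinuousAt (fun p : A × I => g p.1) (a, s) := by fun_prop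
        refine this.congr ?_
        have := (isOpen_lt (f := fun _ => 1 / 2) (g := fun p : A × I => (p.2 : ℝ)) (by fun_prop)
          (by fun_prop)).mem_nhds (x := (a, s)) h
        filter_upwards [this] with p hp
        exact (if_neg (not_lt.2 (le_of_lt hp))).symm
  · induction z using Hoc.ind with
    | hX x => rfl
    | hA a s =>
      rw [mid_cyl] at hz
      rw [stretch_cyl]
      change _ = Hoc.inX f g (if (s : ℝ) < 1 / 2 then f a else g a)
      simp only at hz ⊢
      split_ifs with h
      · rw [abs_of_neg (by linarith)] at hz
        rw [clampI_nonpos (by simp; linarith), Hoc.cyl_zero]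
      · rw [abs_of_nonneg (by linarith)] at hz
        rw [clampI_one_le (by simp; linarith), Hoc.cyl_one]

/-- Away from `X` the homotopy coequalizer is a cylinder. -/
lemma exists_far [Nonempty A] : ∃ m : Hoc f g → A × I, ContinuousOn m {z | mid f g z < 1} ∧
    ∀ z, mid f g z < 1 → stretch f g z 1 = Hoc.cyl f g (m z) := by
  classical
  obtain ⟨a₀⟩ := ‹Nonempty A›
  refine ⟨Hoc.descFun (fun _ => (a₀, 0)) (fun p => if (p.2 : ℝ) = 0 ∨ (p.2 : ℝ) = 1 then (a₀, 0) else
    (p.1, clampI (3 * p.2 - 1))) (fun a => by simp) (fun a => by simp), ?_, fun z hz => ?_⟩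
  · refine (Topology.IsQuotientMap.continuousOn_isOpen_iff
      (f := (Quot.mk (HocRel f g) : _ → Hoc f g)) isQuotientMap_quot_mk
      (isOpen_lt (mid f g).continuous continuous_const)).2 ?_
    refine continuousOn_of_forall_continuousAt fun c hc => ?_
    rcases c with x | ⟨a, s⟩
    · exact absurd hc (lt_irrefl (1 : ℝ))
    · rw [← Topology.IsOpenEmbedding.inr.continuousAt_iff]
      have hc : |2 * (s : ℝ) - 1| < 1 := hc
      have : ContinuousAt (fun p : A × I => (p.1, clampI (3 * (p.2 : ℝ) - 1))) (a, s) := by fun_prop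
      refine this.congr ?_
      have := (isOpen_lt (f := fun p : A × I => |2 * (p.2 : ℝ) - 1|) (g := fun _ => 1) (by fun_prop)
        (by fun_prop)).mem_nhds (x := (a, s)) hc
      filter_upwards [this] with p hp
      have hp : |2 * (p.2 : ℝ) - 1| < 1 := hp
      refine (if_neg ?_).symm
      rw [abs_lt] at hp
      rintro (h | h) <;> rw [h] at hp <;> norm_num at hp
  · induction z using Hoc.ind with
    | hX x => exact absurd hz (lt_irrefl (1 : ℝ))
    | hA a s =>
      rw [mid_cyl] at hz
      rw [stretch_cyl]
      change _ = Hoc.cyl f g (if (s : ℝ) = 0 ∨ (s : ℝ) = 1 then (a₀, 0) else _)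
      rw [if_neg]
      · simp
      · rw [abs_lt] at hz
        rintro (h | h) <;> simp only [h] at hz <;> norm_num at hz

end generate

section generate

variable {A X : Type} [TopologicalSpace A] [TopologicalSpace X] {f g : C(A, X)}
  [PathConnectedSpace X] {x₀ : X} {H : Subgroup (Lg (Hoc f g) (Hoc.inX f g x₀))}

/-- The part of a path up to the time `t`. -/
def upto {Z : Type} [TopologicalSpace Z] {z z' : Z} (δ : Path z z') (t : I) : Path z (δ t) :=
  (δ.subpath 0 t).cast δ.source.symm rfl

lemma upto_trans_subpath {Z : Type} [TopologicalSpace Z] {z z' : Z} (δ : Path z z') (t t' : I) :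
    ((upto δ t).trans (δ.subpath t t')).Homotopic (upto δ t') := by
  have aux {a b c : Z} (p : Path a b) (q : Path b c) (s : Path a c) (h : (p.trans q).Homotopic s)
      (e : z = a) : ((p.cast e rfl).trans q).Homotopic (s.cast e rfl) := by
    subst e; exact h
  exact aux _ _ _ ⟨Path.Homotopy.subpathTransSubpath δ 0 t t'⟩ _

lemma exists_mem_nhds_subset {Y : Type} [TopologicalSpace Y] {γ : C(I, Y)} {U : Set Y}
    (hU : IsOpen U) {t : I} (ht : γ t ∈ U) :
    ∃ N ∈ nhds t, ∀ s ∈ N, ∀ s' ∈ N, ∀ v, γ (Set.Icc.convexComb s s' v) ∈ U := by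
  refine ⟨Set.ordConnectedComponent (γ ⁻¹' U) t, Set.ordConnectedComponent_mem_nhds.2
    ((hU.preimage γ.continuous).mem_nhds ht), fun s hs s' hs' v => ?_⟩
  have h1 : Set.Icc.convexComb s s' v ∈ Set.uIcc s s' := by
    rw [← Path.range_subpathAux]; exact ⟨v, rfl⟩
  exact Set.ordConnectedComponent_subset (s := γ ⁻¹' U) (Set.OrdConnected.uIcc_subset inferInstance hs hs' h1)

/-- Short pieces of a stretched path run in `X` or in a cylinder. -/
lemma exists_keeps [Nonempty A]
    (hX : ∀ q : Path x₀ x₀, Lg.mk (q.map (Hoc.continuous_inX f g)) ∈ H)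
    (ht : ∀ {c c' : X ⊕ A × I}, Quot.mk (HocRel f g) c = Quot.mk (HocRel f g) c' →
      HRel H (teth f g x₀ c) (teth f g x₀ c')) (γ : C(I, Hoc f g)) {z z' : Hoc f g} (δ : Path z z')
    (hδ : ∀ t, δ t = stretch f g (γ t) 1) (t : I) :
    ∃ N ∈ nhds t, ∀ s ∈ N, ∀ s' ∈ N, Keeps H (δ.subpath s s') := by
  rcases lt_or_ge (1 / 3) (mid f g (γ t)) with h | h
  · obtain ⟨m, hm, hm'⟩ := exists_near (f := f) (g := g)
    obtain ⟨N, hN, hN'⟩ := exists_mem_nhds_subset (γ := γ)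
      (isOpen_lt continuous_const (mid f g).continuous) h
    refine ⟨N, hN, fun s hs s' hs' => Keeps.of_inX hX ht _
      ⟨fun v => m (γ (Set.Icc.convexComb s s' v)), ?_⟩ fun v => ?_⟩
    · exact hm.comp_continuous (by fun_prop) (hN' s hs s' hs')
    · exact (hδ _).trans (hm' _ (hN' s hs s' hs' v))
  · obtain ⟨m, hm, hm'⟩ := exists_far (f := f) (g := g)
    obtain ⟨N, hN, hN'⟩ := exists_mem_nhds_subset (γ := γ)
      (isOpen_lt (mid f g).continuous continuous_const) (show mid f g (γ t) < 1 by linarith)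
    refine ⟨N, hN, fun s hs s' hs' => Keeps.of_cyl hX ht _
      ⟨fun v => m (γ (Set.Icc.convexComb s s' v)), ?_⟩ fun v => ?_⟩
    · exact hm.comp_continuous (by fun_prop) (hN' s hs s' hs')
    · exact (hδ _).trans (hm' _ (hN' s hs s' hs' v))

/-- The fundamental group of a homotopy coequalizer is generated by that of `X` and the generators
of the cylinders. -/
theorem mem_of_generators [Nonempty A]
    (hX : ∀ q : Path x₀ x₀, Lg.mk (q.map (Hoc.continuous_inX f g)) ∈ H)
    (hv : ∀ a, ∃ (p : Path x₀ (f a)) (q : Path x₀ (g a)),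
      HRel H ((p.map (Hoc.continuous_inX f g)).trans (vpath f g a))
        (q.map (Hoc.continuous_inX f g)))
    (x : Lg (Hoc f g) (Hoc.inX f g x₀)) : x ∈ H := by
  have ht {c c' : X ⊕ A × I} := HRel.of_mk_eq hX hv (c := c) (c' := c')
  induction x using Lg.ind with
  | h γ =>
    let δ : Path (Hoc.inX f g x₀) (Hoc.inX f g x₀) :=
      ⟨⟨fun t => stretch f g (γ t) 1, by fun_prop⟩, by simp [stretch_inX], by simp [stretch_inX]⟩
    have hγδ : γ.Homotopic δ := ⟨{
      toFun := fun x => stretch f g (γ x.2) x.1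
      continuous_toFun := by fun_prop
      map_zero_left := fun t => stretch_zero _
      map_one_left := fun t => rfl
      prop' := fun u t ht => by
        rcases ht with rfl | rfl <;> simp [stretch_inX] }⟩
    have key : ∀ t, ∃ c, HRel H (upto δ t) (teth f g x₀ c) := by
      have step {t t' : I} (hk : Keeps H (δ.subpath t t'))
          (h : ∃ c, HRel H (upto δ t) (teth f g x₀ c)) :
          ∃ c, HRel H (upto δ t') (teth f g x₀ c) := by
        obtain ⟨c, hc⟩ := hk _ h
        exact ⟨c, (HRel.of_homotopic (upto_trans_subpath δ t t')).symm.trans hc⟩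
      have hloc := exists_keeps hX ht (γ : C(I, Hoc f g)) δ fun _ => rfl
      have hclopen : IsClopen {t | ∃ c, HRel H (upto δ t) (teth f g x₀ c)} := by
        constructor
        · refine isClosed_of_closure_subset fun t h => ?_
          obtain ⟨N, hN, hk⟩ := hloc t
          obtain ⟨s, hs, hs'⟩ := mem_closure_iff_nhds.1 h N hN
          exact step (hk s hs t (mem_of_mem_nhds hN)) hs'
        · refine isOpen_iff_mem_nhds.2 fun t h => ?_
          obtain ⟨N, hN, hk⟩ := hloc t
          exact Filter.mem_of_superset hN fun s hs => step (hk t (mem_of_mem_nhds hN) s hs) h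
      have h0 : ∃ c, HRel H (upto δ 0) (teth f g x₀ c) := by
        refine ⟨.inl x₀, HRel.trans (q := Path.refl _) (.of_apply fun t => ?_)
          (HRel.of_inX hX (Path.refl x₀) _)⟩
        simp [upto]
      have := hclopen.eq_univ ⟨0, h0⟩
      exact fun t => Set.eq_univ_iff_forall.1 this t
    obtain ⟨c, hc⟩ := key 1
    have e : Quot.mk (HocRel f g) c = Quot.mk (HocRel f g) (.inl x₀) := hc.1.symm.trans δ.target
    have h2 := (hc.trans (ht e)).trans (HRel.of_inX hX _ (Path.refl x₀))
    have h3 : HRel H δ (upto δ 1) := .of_apply fun t => by simp [upto]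
    have h4 := (HRel.of_homotopic hγδ).trans (h3.trans h2)
    exact h4.mem_of_refl

end generate

/-! ### The fundamental group of the complement -/

instance {A X : Type} [TopologicalSpace A] [TopologicalSpace X] [PathConnectedSpace X]
    {f g : C(A, X)} : PathConnectedSpace (Hoc f g) := by
  obtain ⟨x₀⟩ := (inferInstance : Nonempty X)
  have h (z : Hoc f g) : Joined (Hoc.inX f g x₀) z := by
    induction z using Quot.ind with
    | mk c => exact ⟨teth f g x₀ c⟩
  exact ⟨⟨Hoc.inX f g x₀⟩, fun z z' => (h z).symm.trans (h z')⟩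

instance : PathConnectedSpace Wd :=
  inferInstanceAs (PathConnectedSpace
    (Hoc (ContinuousMap.const (Fin 2) ()) (ContinuousMap.const (Fin 2) ())))

/-- The fundamental group of the wedge of two circles is generated by the two circles. -/
lemma Wd.mem_of_wl {H : Subgroup (Lg Wd (Hoc.inX _ _ ()))} (h : ∀ i, Lg.mk (wl i) ∈ H)
    (x : Lg Wd (Hoc.inX _ _ ())) : x ∈ H := by
  refine mem_of_generators (f := ContinuousMap.const (Fin 2) ())
    (g := ContinuousMap.const (Fin 2) ()) (x₀ := ()) (H := H) (fun q => ?_) (fun i => ?_) x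
  · have : Lg.mk (q.map (Hoc.continuous_inX (ContinuousMap.const (Fin 2) ())
        (ContinuousMap.const (Fin 2) ()))) = 1 := rfl
    exact this ▸ H.one_mem
  · refine ⟨Path.refl (), Path.refl (), HRel.trans (q := wl i) ?_ ⟨rfl, ?_⟩⟩
    · exact HRel.of_homotopic ⟨Path.Homotopy.reflTrans _⟩
    · have : Lg.mk ((wl i).trans (Path.refl _).symm) = Lg.mk (wl i) := by
        rw [Path.refl_symm, Lg.mk_trans, Lg.mk_refl, mul_one]
      exact this ▸ h i

section

variable (r : ℕ)

/-- The tautological homomorphism to the fundamental group of the homotopy coequalizer. -/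
def pi : PresentedGroup (Set.range (cubicRelator r)) →* Lg (Qm r) (ptQ r) :=
  presHom (isCell_Qm r).compat (mk_sqPath r)

lemma pi_injective : Function.Injective (pi r) := presHom_injective (mk_sqPath r) (isCell_Qm r)

lemma mk_gQ_mem (k : Fin r) : Lg.mk (gQ r k) ∈ (pi r).range := by
  refine ⟨PresentedGroup.of (Sum.inl k), (presHom_of _ _ _).trans ?_⟩
  exact congrArg Lg.mk (Path.ext (funext fun t =>
    WedgeGraph.desc_loop (Sum.elim (gQ r) (xQ r)) (Sum.inl k) t))

lemma mk_xQ_mem (i : Fin 2) : Lg.mk (xQ r i) ∈ (pi r).range := by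
  refine ⟨PresentedGroup.of (Sum.inr i), (presHom_of _ _ _).trans ?_⟩
  exact congrArg Lg.mk (Path.ext (funext fun t =>
    WedgeGraph.desc_loop (Sum.elim (gQ r) (xQ r)) (Sum.inr i) t))

variable {r}

lemma pi_surjective (hr : 2 ≤ r) : Function.Surjective (pi r) := by
  have : Nonempty (Fin r × Wd) := ⟨(⟨0, by omega⟩, Hoc.inX _ _ ())⟩
  refine MonoidHom.range_eq_top.1 (eq_top_iff.2 fun x _ => ?_)
  refine mem_of_generators (x₀ := (Hoc.inX _ _ () : Wd)) (H := (pi r).range) (fun q => ?_)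
    (fun a => ?_) x
  · exact Wd.mem_of_wl (H := (pi r).range.comap
      (Lg.map ⟨_, Hoc.continuous_inX (ContinuousMap.snd : C(Fin r × Wd, Wd)) (mono r)⟩ _))
      (fun i => mk_xQ_mem r i) (Lg.mk q)
  · obtain ⟨k, y⟩ := a
    let δ : Path (Hoc.inX _ _ () : Wd) y := PathConnectedSpace.somePath _ _
    let q : Path (Hoc.inX _ _ () : Wd) (mono r (k, y)) :=
      ⟨⟨fun t => mono r (k, δ t), by fun_prop⟩, by simp; rfl, by simp⟩
    let Q := q.map (Hoc.continuous_inX (ContinuousMap.snd : C(Fin r × Wd, Wd)) (mono r))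
    -- The square swept out by moving `δ` along the cylinder.
    have hsq : ((gQ r k).trans Q).Homotopic ((δ.map (Hoc.continuous_inX
        (ContinuousMap.snd : C(Fin r × Wd, Wd)) (mono r))).trans (vpath _ _ (k, y))) :=
      homotopic_of_sq ⟨fun p => Hoc.cyl _ _ ((k, δ p.1), p.2), by fun_prop⟩ _ _ _ _
        (fun t => congrArg (fun z => Hoc.cyl _ _ ((k, z), t)) δ.source.symm)
        (fun t => (Hoc.cyl_one _ _ ((k, δ t) : Fin r × Wd)).symm)
        (fun t => (Hoc.cyl_zero (ContinuousMap.snd : C(Fin r × Wd, Wd)) _ ((k, δ t))).symm)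
        (fun t => congrArg (fun z => Hoc.cyl _ _ ((k, z), t)) δ.target.symm)
    have h1 : HRel (pi r).range (gQ r k) (Path.refl _) := by
      refine ⟨rfl, ?_⟩
      have : Lg.mk ((gQ r k).trans (Path.refl _).symm) = Lg.mk (gQ r k) := by
        rw [Path.refl_symm, Lg.mk_trans, Lg.mk_refl, mul_one]
      exact this ▸ mk_gQ_mem r k
    exact ⟨δ, q, (HRel.of_homotopic hsq.symm).trans ((h1.trans_right Q).trans
      (HRel.of_homotopic ⟨Path.Homotopy.reflTrans _⟩))⟩

open CategoryTheory in
theorem nonempty_mulEquiv (hr : 2 ≤ r) {Y : Type} [TopologicalSpace Y]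
    (e : ContinuousMap.HomotopyEquiv Y (Qm r)) (y : Y) :
    Nonempty (FundamentalGroup Y y ≃* PresentedGroup (Set.range (cubicRelator r))) := by
  let E := FundamentalGroupoidFunctor.equivOfHomotopyEquiv e
  let e1 : FundamentalGroup Y y ≃* FundamentalGroup (Qm r) (E.functor.obj ⟨y⟩).as :=
    E.fullyFaithfulFunctor.mulEquivEnd _
  let e2 := FundamentalGroup.fundamentalGroupMulEquivOfPathConnected (E.functor.obj ⟨y⟩).as (ptQ r)
  let e3 : FundamentalGroup (Qm r) (ptQ r) ≃* Lg (Qm r) (ptQ r) := MulEquiv.inv' _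
  exact ⟨((e1.trans e2).trans e3).trans
    (MulEquiv.ofBijective (pi r) ⟨pi_injective r, pi_surjective hr⟩).symm⟩

end

/-- Let `f : ℂ² → ℂ`, `f(x,y) = x³ + x² − y²`, whose set of atypical
values is `B_f = {4/27, 0}`, and let `B = {λ₁ = 4/27, λ₂ = 0, λ₃, …, λ_r} ⊂ ℂ` be a finite
set containing `B_f` (`r ≥ 2`).  Then `π₁(ℂ² ∖ f⁻¹(B))` admits the presentation
`⟨γ₁,…,γ_r,x₁,x₂ ∣ γ₁⁻¹x₁γ₁ = x₁, γ₁⁻¹x₂γ₁ = x₁x₂, γ₂⁻¹x₁γ₂ = x₂x₁, γ₂⁻¹x₂γ₂ = x₂,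
γ_k⁻¹x_iγ_k = x_i (3 ≤ k ≤ r, i = 1,2)⟩` (the `γ_k` being lifts of meridians around the
`λ_k` and the `x_i` generating the fundamental group of the generic fiber), and
`ℂ² ∖ f⁻¹(B)` is homotopy equivalent to the 2-dimensional CW complex associated to this
presentation. -/
theorem cubicPencil_complement_pi1_and_homotopyType
    (r : ℕ) (hr : 2 ≤ r) (lam : Fin r → ℂ) (hinj : Function.Injective lam)
    (hlam0 : lam ⟨0, by omega⟩ = 4 / 27) (hlam1 : lam ⟨1, by omega⟩ = 0) :
    (∀ v₀ : ↥((fun v : ℂ × ℂ => v.1 ^ 3 + v.1 ^ 2 - v.2 ^ 2) ⁻¹' (Set.range lam))ᶜ,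
      Nonempty (FundamentalGroup
        (↥((fun v : ℂ × ℂ => v.1 ^ 3 + v.1 ^ 2 - v.2 ^ 2) ⁻¹' (Set.range lam))ᶜ) v₀ ≃*
        PresentedGroup (Set.range (cubicRelator r)))) ∧
    Nonempty (ContinuousMap.HomotopyEquiv
      (↥((fun v : ℂ × ℂ => v.1 ^ 3 + v.1 ^ 2 - v.2 ^ 2) ⁻¹' (Set.range lam))ᶜ)
      (PresentationComplex (cubicRelator r))) := by
  obtain ⟨e⟩ := Cp_equiv_Qm hr (by omega) (by omega) lam hinj hlam0 hlam1
  obtain ⟨e'⟩ := Qm_equiv_presentationComplex r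
  exact ⟨nonempty_mulEquiv hr e, ⟨e.trans e'⟩⟩

end
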